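/- arXiv:2208.06467 — 5 statements merged into one kernel-verified Lean document; each statement's English description precedes it below -/
import Mathlib

section
/- Let X_n = (ℂⁿ,‖·‖) be a Banach lattice (i.e. |z_j| ≤ |w_j| for all j implies ‖z‖ ≤ ‖w‖), let m ≥ 1 and J ⊆ Λ(m,n) nonempty. Then χ_mon(𝒫_J(X_n)) ≤ e · 2^m · ‖Q_{Λ(m,n),J}‖ · λ(𝒫_{J♭}(X_n)), where J♭ = {α ∈ Λ(m−1,n) : α + e_k ∈ J for some 1 ≤ k ≤ n} is the reduced index set of J, e_k the k-th unit multi-index, and Q_{Λ(m,n),J} : 𝒫_m(X_n) → 𝒫_J(X_n) the coefficient projection annihilating monomial coefficients with indices outside J. -/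
/-!
Write `d = m - 1`, `P = ∑_{α ∈ J} c_α z^α`, and let `E_w` denote the mean over a fine grid of points
`ζ_w` of the torus whose coordinates are roots of unity. The multiplier `c_α ↦ ε_α c_α` is factored
through `ℓ∞(S)`, where a projection `Q` onto the polynomials supported on `J♭` acts.

* Cauchy's estimate on `t ↦ P(s + t y)` with radius `1/m` and homogeneity bound the polar form
  `∑_k y_k m⁻¹ ∂_k P(s)` by `(1 + 1/m)^m ‖P‖ ≤ e ‖P‖` on the unit ball
  (`IsLatticeNorm.polar_le`). As the norm is a lattice norm, rotating `s` and adapting the phases of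
  `y` gives `∑_k |y_k| E_w |m⁻¹ ∂_k P(ζ_w s)| ≤ e ‖P‖` (`IsLatticeNorm.avg_polar_le`).
* The `L¹`–`L²` Khinchine inequality for `d`-homogeneous polynomials on the torus has constant
  `2^{d/2}`. It tensorizes from the one-variable contraction of dilation by `1/√2`
  (`dilation_contraction`), and the discretization of the torus costs at most another `√2`
  (`khinchine_grid`). Used once directly and once in its Hahn–Banach dual form (`khinchine_dual`), it
  yields functions `h_{s,k}` on the grid whose Fourier coefficients are the signed coefficients
  `ε_{β+e_k}` times those of `m⁻¹ ∂_k P`, with `∑_k |y_k| |h_{s,k}(w)| ≤ 2^m e ‖P‖` for every `w`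
  (`IsLatticeNorm.exists_lift`).
* For each `w` the functions `H_k : s ↦ conj (ζ_w)_k h_{s,k}(w)` lie in `ℓ∞(S)`, and
  `R_w(z) = ∑_k z_k (Q H_k)(z)` is an `m`-homogeneous polynomial of norm at most `‖Q‖ 2^m e ‖P‖`.
  Since `Q` fixes `z^{α-e_k}` for `α ∈ J`, `α_k ≥ 1`, and `∑_k α_k = m`, the mean over `w` of the
  `α`-th coefficient of `R_w` times `ζ_w^α` is `ε_α c_α`. Hence `∑_J ε_α c_α x^α` is a mean of values
  on the unit ball of the projections of the `R_w` onto `𝒫_J` (`IsLatticeNorm.uncond_le`).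

Polynomials form a finite-dimensional, hence complemented, subspace of `ℓ∞(S)`, so the set of norms
defining the projection constant is nonempty and passing to the infimum over `Q` is legitimate.
-/

open scoped ENNReal

/-- The set `Λ(m,n)` of all multi-indices `α ∈ ℕ₀ⁿ` with `|α| = m`. -/
def homIdx (m n : ℕ) : Finset (Fin n → ℕ) :=
  (Fintype.piFinset fun _ : Fin n => Finset.range (m + 1)).filter fun α => ∑ j, α j = m

/-- The norm of the polynomial `z ↦ ∑_{α ∈ I} c_α z^α` on the unit ball of `(ℂⁿ, ν)`. -/
noncomputable def polNorm (n : ℕ) (ν : (Fin n → ℂ) → ℝ) (I : Finset (Fin n → ℕ))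
    (c : (Fin n → ℕ) → ℂ) : ℝ :=
  sSup {t : ℝ | ∃ z : Fin n → ℂ, ν z ≤ 1 ∧ t = ‖∑ α ∈ I, c α * ∏ j, z j ^ α j‖}

/-- The isometric copy, inside `ℓ∞(S)` (`S` the unit sphere of the norm `ν` on `ℂⁿ`),
of the space of polynomials supported on the finite index set `I`. -/
def polyCopy (n : ℕ) (ν : (Fin n → ℂ) → ℝ) (I : Finset (Fin n → ℕ)) :
    Set (lp (fun _ : {z : Fin n → ℂ // ν z = 1} => ℂ) ∞) :=
  {f | ∃ c : (Fin n → ℕ) → ℂ, ∀ s : {z : Fin n → ℂ // ν z = 1},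
      f s = ∑ α ∈ I, c α * ∏ j, (s : Fin n → ℂ) j ^ α j}

/-- The projection constant `λ(𝒫_I(X_n))`. -/
noncomputable def projConst (n : ℕ) (ν : (Fin n → ℂ) → ℝ) (I : Finset (Fin n → ℕ)) : ℝ :=
  sInf {r : ℝ | ∃ Q : lp (fun _ : {z : Fin n → ℂ // ν z = 1} => ℂ) ∞ →L[ℂ]
      lp (fun _ : {z : Fin n → ℂ // ν z = 1} => ℂ) ∞,
    (∀ f, Q f ∈ polyCopy n ν I) ∧ (∀ f ∈ polyCopy n ν I, Q f = f) ∧ ‖Q‖ = r}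

/-- The unconditional basis constant `χ_mon(𝒫_I(X_n))` of the monomial basis:
the least `K ≥ 0` such that `‖∑ ε_α c_α z^α‖ ≤ K ‖∑ c_α z^α‖` for all coefficients `c`
and all unimodular `ε_α`. -/
noncomputable def unconBasisConst (n : ℕ) (ν : (Fin n → ℂ) → ℝ) (I : Finset (Fin n → ℕ)) : ℝ :=
  sInf {K : ℝ | 0 ≤ K ∧ ∀ c ε : (Fin n → ℕ) → ℂ, (∀ α ∈ I, ‖ε α‖ = 1) →
    polNorm n ν I (fun α => ε α * c α) ≤ K * polNorm n ν I c}

/-- The norm `‖Q_{Λ(m,n),J}‖` of the coefficient projection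
`Q_{Λ(m,n),J} : 𝒫_m(X_n) → 𝒫_J(X_n)` annihilating all monomial coefficients `c_α`, `α ∉ J`. -/
noncomputable def coeffProjNorm (n m : ℕ) (ν : (Fin n → ℂ) → ℝ) (J : Finset (Fin n → ℕ)) : ℝ :=
  sSup {t : ℝ | ∃ c : (Fin n → ℕ) → ℂ, polNorm n ν (homIdx m n) c ≤ 1 ∧ t = polNorm n ν J c}

open scoped Classical in
/-- The reduced index set `J♭ = {α ∈ Λ(m−1,n) : α + e_k ∈ J for some k}` of
`J ⊆ Λ(m,n)`. -/
noncomputable def flatIdx (n m : ℕ) (J : Finset (Fin n → ℕ)) : Finset (Fin n → ℕ) :=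
  (homIdx (m - 1) n).filter fun β =>
    ∃ k : Fin n, (β + fun j => if j = k then 1 else 0) ∈ J

/-! ### Roots of unity -/

/-- The `i`-th of the `N`-th roots of unity. -/
noncomputable def rtu (N : ℕ) (i : Fin N) : ℂ := Complex.exp (2 * Real.pi * Complex.I / N) ^ (i : ℕ)

lemma norm_rtu (N : ℕ) (i : Fin N) : ‖rtu N i‖ = 1 := by
  have hN : N ≠ 0 := fun h => by subst h; exact i.elim0
  rw [rtu, norm_pow, (Complex.isPrimitiveRoot_exp N hN).norm'_eq_one hN, one_pow]

lemma rtu_orth (N : ℕ) (a b : ℕ) (ha : a < N) (hb : b < N) :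
    ∑ i : Fin N, rtu N i ^ a * (starRingEnd ℂ (rtu N i)) ^ b = if a = b then (N : ℂ) else 0 := by
  have hN : N ≠ 0 := by omega
  have hprim := Complex.isPrimitiveRoot_exp N hN
  set ζ := Complex.exp (2 * Real.pi * Complex.I / N) with hζ
  have hζ1 : ‖ζ‖ = 1 := hprim.norm'_eq_one hN
  have hζ0 : ζ ≠ 0 := by intro h; simp [h] at hζ1
  have hconj : starRingEnd ℂ ζ = ζ⁻¹ := by
    rw [Complex.inv_def, Complex.normSq_eq_norm_sq, hζ1]; simp
  set x : ℂ := ζ ^ a * (ζ⁻¹) ^ b with hx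
  have hterm : ∀ i : Fin N, rtu N i ^ a * (starRingEnd ℂ (rtu N i)) ^ b = x ^ (i : ℕ) := by
    intro i
    rw [rtu, ← hζ, map_pow, hconj, hx, mul_pow]
    simp only [← pow_mul, mul_comm]
  simp_rw [hterm]
  rw [Fin.sum_univ_eq_sum_range (fun i => x ^ i) N]
  have hxN : x ^ N = 1 := by
    rw [hx, mul_pow, ← pow_mul, ← pow_mul, mul_comm a, mul_comm b, pow_mul, pow_mul, inv_pow,
      hprim.pow_eq_one]
    simp
  split_ifs with hab
  · have : x = 1 := by rw [hx, hab, ← mul_pow, mul_inv_cancel₀ hζ0, one_pow]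
    simp [this]
  · have hx1 : x ≠ 1 := by
      intro h
      apply hab
      apply hprim.pow_inj ha hb
      rw [hx, inv_pow] at h
      field_simp at h
      exact h
    have := mul_geom_sum x N
    rw [hxN, sub_self] at this
    exact (mul_eq_zero.mp this).resolve_left (sub_ne_zero.mpr hx1)

/-- Discrete Parseval identity on a circle of radius `r`. -/
lemma rtu_parseval (N D : ℕ) (hD : D < N) (a : ℕ → ℂ) (r : ℝ) :
    ∑ i : Fin N, ‖∑ k ∈ Finset.range (D + 1), a k * (r * rtu N i) ^ k‖ ^ 2
      = N * ∑ k ∈ Finset.range (D + 1), ‖a k‖ ^ 2 * (r ^ 2) ^ k := by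
  have key : ∀ z : ℂ, ((‖z‖ ^ 2 : ℝ) : ℂ) = z * starRingEnd ℂ z := by
    intro z; rw [Complex.mul_conj, Complex.normSq_eq_norm_sq]
  apply Complex.ofReal_injective
  rw [Complex.ofReal_sum]
  simp_rw [key, map_sum, Finset.sum_mul_sum]
  rw [Finset.sum_comm]
  have h1 : ∀ k ∈ Finset.range (D + 1), ∑ i : Fin N, ∑ l ∈ Finset.range (D + 1),
      a k * (r * rtu N i) ^ k * starRingEnd ℂ (a l * (r * rtu N i) ^ l)
      = N * (a k * starRingEnd ℂ (a k) * (r ^ 2) ^ k) := by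
    intro k hk
    rw [Finset.sum_comm]
    have h2 : ∀ l ∈ Finset.range (D + 1), ∑ i : Fin N,
      a k * (r * rtu N i) ^ k * starRingEnd ℂ (a l * (r * rtu N i) ^ l)
      = a k * starRingEnd ℂ (a l) * r ^ k * r ^ l * (if k = l then (N : ℂ) else 0) := by
      intro l hl
      rw [Finset.mem_range] at hk hl
      rw [← rtu_orth N k l (by omega) (by omega), Finset.mul_sum]
      refine Finset.sum_congr rfl fun i _ => ?_
      simp only [map_mul, map_pow, Complex.conj_ofReal, mul_pow]
      ring
    rw [Finset.sum_congr rfl h2]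
    simp only [mul_ite, mul_zero, Finset.sum_ite_eq, hk, if_true]
    rw [← pow_mul, two_mul, pow_add]; ring
  rw [Finset.sum_congr rfl h1]
  push_cast
  rw [Finset.mul_sum]
  refine Finset.sum_congr rfl fun k _ => ?_
  have := key (a k)
  push_cast at this
  rw [this]

/-- A discrete mean over the `N`-th roots of unity dominates the coefficients. -/
lemma rtu_coeff_le (N D : ℕ) (hD : D < N) (a : ℕ → ℂ) (k : ℕ) (hk : k ≤ D) :
    N * ‖a k‖ ≤ ∑ i : Fin N, ‖∑ l ∈ Finset.range (D + 1), a l * rtu N i ^ l‖ := by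
  have h : (N : ℂ) * a k = ∑ i : Fin N, (∑ l ∈ Finset.range (D + 1), a l * rtu N i ^ l) *
      (starRingEnd ℂ (rtu N i)) ^ k := by
    simp_rw [Finset.sum_mul]
    rw [Finset.sum_comm]
    have h2 : ∀ l ∈ Finset.range (D + 1), ∑ i : Fin N, a l * rtu N i ^ l *
      (starRingEnd ℂ (rtu N i)) ^ k = a l * if l = k then (N : ℂ) else 0 := by
      intro l hl
      rw [Finset.mem_range] at hl
      rw [← rtu_orth N l k (by omega) (by omega), Finset.mul_sum]
      exact Finset.sum_congr rfl fun i _ => by ring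
    rw [Finset.sum_congr rfl h2]
    have hk' : k < D + 1 := by omega
    simp [hk', mul_comm]
  calc N * ‖a k‖ = ‖(N : ℂ) * a k‖ := by simp
    _ ≤ _ := by
      rw [h]
      refine (norm_sum_le _ _).trans (Finset.sum_le_sum fun i _ => ?_)
      simp [norm_rtu]

/-! ### The dilation contraction in one variable -/

/-- `OuterRep p q` : `q` has a holomorphic square root on the unit disc, dominates `p` there and has
the same modulus as `p` on the unit circle. -/
def OuterRep (p q : Polynomial ℂ) : Prop :=
  (∃ g : ℂ → ℂ, DifferentiableOn ℂ g (Metric.ball 0 1) ∧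
    ∀ z ∈ Metric.ball (0 : ℂ) 1, g z ^ 2 = q.eval z) ∧
  (∀ z : ℂ, ‖z‖ < 1 → ‖p.eval z‖ ≤ ‖q.eval z‖) ∧
  (∀ z : ℂ, ‖z‖ = 1 → ‖q.eval z‖ = ‖p.eval z‖)

lemma OuterRep.mul {p₁ q₁ p₂ q₂ : Polynomial ℂ} (h₁ : OuterRep p₁ q₁) (h₂ : OuterRep p₂ q₂) :
    OuterRep (p₁ * p₂) (q₁ * q₂) := by
  obtain ⟨⟨g₁, hg₁, hs₁⟩, hb₁, he₁⟩ := h₁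
  obtain ⟨⟨g₂, hg₂, hs₂⟩, hb₂, he₂⟩ := h₂
  refine ⟨⟨fun z => g₁ z * g₂ z, hg₁.mul hg₂, fun z hz => ?_⟩, fun z hz => ?_, fun z hz => ?_⟩
  · rw [mul_pow, hs₁ z hz, hs₂ z hz, Polynomial.eval_mul]
  · simp only [Polynomial.eval_mul, norm_mul]
    exact mul_le_mul (hb₁ z hz) (hb₂ z hz) (norm_nonneg _) (norm_nonneg _)
  · simp only [Polynomial.eval_mul, norm_mul, he₁ z hz, he₂ z hz]

lemma sq_cpow_half (x : ℂ) : (x ^ ((2 : ℕ) : ℂ)⁻¹) ^ 2 = x :=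
  Complex.cpow_nat_inv_pow x two_ne_zero

lemma outerRep_C (c : ℂ) : OuterRep (Polynomial.C c) (Polynomial.C c) := by
  refine ⟨⟨fun _ => c ^ ((2 : ℕ) : ℂ)⁻¹, differentiableOn_const _, fun z _ => ?_⟩,
    fun _ _ => le_rfl, fun _ _ => rfl⟩
  simp only [Polynomial.eval_C, sq_cpow_half]

lemma differentiableOn_sqrt_one_sub (u : ℂ) (hu : ‖u‖ ≤ 1) :
    DifferentiableOn ℂ (fun z : ℂ => (1 - u * z) ^ ((2 : ℕ) : ℂ)⁻¹) (Metric.ball 0 1) := by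
  intro z hz
  apply DifferentiableAt.differentiableWithinAt
  refine DifferentiableAt.cpow (by fun_prop) (by fun_prop) ?_
  left
  rw [mem_ball_zero_iff] at hz
  have h1 : ‖u * z‖ < 1 := by
    rw [norm_mul]
    nlinarith [norm_nonneg u, norm_nonneg z]
  have h2 := (Complex.abs_re_le_norm (u * z))
  rw [abs_le] at h2
  simp only [Complex.sub_re, Complex.one_re]
  linarith [h2.2]

lemma normSq_reflect (a z : ℂ) :
    ‖1 - starRingEnd ℂ a * z‖ ^ 2 - ‖z - a‖ ^ 2 = (1 - ‖a‖ ^ 2) * (1 - ‖z‖ ^ 2) := by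
  simp only [← Complex.normSq_eq_norm_sq, Complex.normSq_apply]
  simp
  ring

/-- A linear factor with root `a` inside the disc is reflected to `1 - ā z`; other linear factors are
already zero-free in the disc. -/
lemma outerRep_linear (a : ℂ) : ∃ q, OuterRep (Polynomial.X - Polynomial.C a) q := by
  rcases lt_or_ge ‖a‖ 1 with ha | ha
  · refine ⟨1 - Polynomial.C (starRingEnd ℂ a) * Polynomial.X,
      ⟨_, differentiableOn_sqrt_one_sub (starRingEnd ℂ a) (by simpa using ha.le), fun z _ => ?_⟩,
      fun z hz => ?_, fun z hz => ?_⟩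
    · simp only [sq_cpow_half]; simp
    · simp only [Polynomial.eval_sub, Polynomial.eval_X, Polynomial.eval_C, Polynomial.eval_mul,
        Polynomial.eval_one]
      have h := normSq_reflect a z
      have : 0 ≤ (1 - ‖a‖ ^ 2) * (1 - ‖z‖ ^ 2) := by
        apply mul_nonneg <;> nlinarith [norm_nonneg a, norm_nonneg z]
      exact le_of_sq_le_sq (by linarith) (norm_nonneg _)
    · simp only [Polynomial.eval_sub, Polynomial.eval_X, Polynomial.eval_C, Polynomial.eval_mul,
        Polynomial.eval_one]
      have h := normSq_reflect a z
      rw [hz] at h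
      have : ‖1 - starRingEnd ℂ a * z‖ ^ 2 = ‖z - a‖ ^ 2 := by linarith
      exact (sq_eq_sq₀ (norm_nonneg _) (norm_nonneg _)).mp this
  · have ha0 : a ≠ 0 := by intro h; simp [h] at ha; linarith
    refine ⟨Polynomial.X - Polynomial.C a,
      ⟨fun z => (-a) ^ ((2 : ℕ) : ℂ)⁻¹ * (1 - a⁻¹ * z) ^ ((2 : ℕ) : ℂ)⁻¹,
        (differentiableOn_const _).mul (differentiableOn_sqrt_one_sub a⁻¹ ?_), fun z _ => ?_⟩,
      fun _ _ => le_rfl, fun _ _ => rfl⟩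
    · rw [norm_inv]; exact inv_le_one_of_one_le₀ ha
    · rw [mul_pow, sq_cpow_half, sq_cpow_half]
      simp only [Polynomial.eval_sub, Polynomial.eval_X, Polynomial.eval_C]
      field_simp
      ring

/-- Every polynomial has an outer representative, obtained by treating its linear factors one by one. -/
lemma exists_outerRep (p : Polynomial ℂ) : ∃ q, OuterRep p q := by
  have hprod : ∀ s : Multiset ℂ,
      ∃ q, OuterRep (s.map fun a => Polynomial.X - Polynomial.C a).prod q := by
    intro s
    induction s using Multiset.induction_on with
    | empty => exact ⟨_, by simpa using outerRep_C 1⟩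
    | cons a s ih =>
      obtain ⟨q, hq⟩ := ih
      obtain ⟨q', hq'⟩ := outerRep_linear a
      exact ⟨q' * q, by simpa using hq'.mul hq⟩
  obtain ⟨q, hq⟩ := hprod p.roots
  refine ⟨Polynomial.C p.leadingCoeff * q, ?_⟩
  have := (outerRep_C p.leadingCoeff).mul hq
  rwa [← (IsAlgClosed.splits p).eq_prod_roots] at this

/-- Bessel's inequality for the Taylor coefficients of a function holomorphic in the unit disc,
on the circle of radius `t < 1`. -/
lemma bessel_circle {g : ℂ → ℂ} (hg : DifferentiableOn ℂ g (Metric.ball 0 1)) {t : ℝ} (ht0 : 0 < t)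
    (ht1 : t < 1) (D : ℕ) :
    ∑ j ∈ Finset.range (D + 1), (‖iteratedDeriv j g 0 / (j.factorial : ℂ)‖ * t ^ j) ^ 2 ≤
      (2 * Real.pi)⁻¹ * ∫ θ in (0 : ℝ)..2 * Real.pi, ‖g (circleMap 0 t θ)‖ ^ 2 := by
  have hpi : (0 : ℝ) < 2 * Real.pi := by positivity
  have hsub : Metric.closedBall (0 : ℂ) t ⊆ Metric.ball 0 1 := Metric.closedBall_subset_ball ht1
  have hcont : Continuous fun θ : ℝ => g (circleMap 0 t θ) := by
    refine hg.continuousOn.comp_continuous (continuous_circleMap 0 t) fun θ => hsub ?_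
    exact circleMap_mem_closedBall 0 ht0.le θ
  have hmem : MeasureTheory.MemLp (fun θ : ℝ => g (circleMap 0 t θ)) 2
      (MeasureTheory.volume.restrict (Set.Ioc 0 (2 * Real.pi))) := by
    obtain ⟨C, hC⟩ := (isCompact_Icc (a := (0 : ℝ)) (b := 2 * Real.pi)).exists_bound_of_continuousOn
      hcont.continuousOn
    refine MeasureTheory.MemLp.of_bound hcont.aestronglyMeasurable C ?_
    refine (MeasureTheory.ae_restrict_iff' measurableSet_Ioc).mpr (Filter.Eventually.of_forall ?_)
    exact fun θ hθ => hC θ (Set.Ioc_subset_Icc_self hθ)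
  have hs := hasSum_sq_fourierCoeffOn hpi hmem
  have hco : ∀ j : ℕ, ‖fourierCoeffOn hpi (fun θ : ℝ => g (circleMap 0 t θ)) (j : ℤ)‖ =
      ‖iteratedDeriv j g 0 / (j.factorial : ℂ)‖ * t ^ j := by
    intro j
    have hc := DifferentiableOn.circleIntegral_one_div_sub_center_pow_smul ht0 j (hg.mono hsub)
    rw [fourierCoeffOn_eq_integral]
    rw [circleIntegral] at hc
    have htc : (t : ℂ) ≠ 0 := by exact_mod_cast ht0.ne'
    have hpt : ∀ θ : ℝ, deriv (circleMap 0 t) θ • (1 / (circleMap 0 t θ - 0) ^ (j + 1)) •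
        g (circleMap 0 t θ) = (Complex.I * ((t : ℂ) ^ j)⁻¹) *
          (fourier (-(j : ℤ)) (θ : AddCircle (2 * Real.pi - 0)) • g (circleMap 0 t θ)) := by
      intro θ
      have hz : circleMap 0 t θ = t * Complex.exp (θ * Complex.I) := by simp [circleMap]
      have he : Complex.exp (θ * Complex.I) ≠ 0 := Complex.exp_ne_zero _
      have hf : fourier (-(j : ℤ)) (θ : AddCircle (2 * Real.pi - 0)) =
          (Complex.exp (θ * Complex.I) ^ j)⁻¹ := by
        rw [fourier_coe_apply, ← Complex.exp_nat_mul, ← Complex.exp_neg]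
        congr 1
        push_cast
        have : (Real.pi : ℂ) ≠ 0 := by exact_mod_cast Real.pi_ne_zero
        field_simp
        ring
      rw [hf, deriv_circleMap, sub_zero, hz]
      simp only [smul_eq_mul]
      field_simp
      ring
    simp_rw [hpt] at hc
    rw [intervalIntegral.integral_const_mul] at hc
    have hc' := congrArg norm hc
    simp only [norm_mul, norm_inv, norm_pow, Complex.norm_I, one_mul, Complex.norm_real,
      Real.norm_eq_abs, abs_of_pos ht0, smul_eq_mul, norm_div, RCLike.norm_ofNat,
      Complex.norm_natCast, abs_of_pos Real.pi_pos, mul_one] at hc'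
    have hn : ‖(1 : ℝ) / (2 * Real.pi - 0)‖ = 1 / (2 * Real.pi) := by
      rw [sub_zero, Real.norm_of_nonneg (by positivity)]
    rw [norm_smul, hn, norm_div, Complex.norm_natCast]
    have htj : (0 : ℝ) < t ^ j := by positivity
    rw [inv_mul_eq_iff_eq_mul₀ htj.ne'] at hc'
    simp only [smul_eq_mul]
    rw [hc']
    field_simp
  have h1 := sum_le_hasSum ((Finset.range (D + 1)).map ⟨fun j : ℕ => (j : ℤ), Nat.cast_injective⟩)
    (fun i _ => by positivity) hs
  simp only [Finset.sum_map, Function.Embedding.coeFn_mk, hco, sub_zero, smul_eq_mul] at h1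
  exact h1

lemma iteratedDeriv_polynomial (q : Polynomial ℂ) (k : ℕ) :
    iteratedDeriv k (fun z => q.eval z) = fun z => (Polynomial.derivative^[k] q).eval z := by
  induction k with
  | zero => simp
  | succ k ih =>
    rw [iteratedDeriv_succ, ih, Function.iterate_succ_apply']
    funext z
    exact Polynomial.deriv _

/-- Taylor coefficients of a polynomial which is a square of a holomorphic function. -/
lemma coeff_sq_root {g : ℂ → ℂ} (hg : DifferentiableOn ℂ g (Metric.ball 0 1)) (q : Polynomial ℂ)
    (hs : ∀ z ∈ Metric.ball (0 : ℂ) 1, g z ^ 2 = q.eval z) (k : ℕ) :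
    q.coeff k = ∑ i ∈ Finset.range (k + 1), (iteratedDeriv i g 0 / (i.factorial : ℂ)) *
      (iteratedDeriv (k - i) g 0 / ((k - i).factorial : ℂ)) := by
  have han : ContDiffAt ℂ k g 0 :=
    (hg.analyticAt (Metric.ball_mem_nhds 0 one_pos)).contDiffAt
  have h1 : iteratedDeriv k (fun z => q.eval z) 0 = iteratedDeriv k (g * g) 0 := by
    apply Filter.EventuallyEq.iteratedDeriv_eq
    filter_upwards [Metric.ball_mem_nhds (0 : ℂ) one_pos] with z hz
    rw [← hs z hz, Pi.mul_apply, sq]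
  have h2 : iteratedDeriv k (fun z => q.eval z) 0 = (k.factorial : ℂ) * q.coeff k := by
    rw [iteratedDeriv_polynomial]
    simp only
    rw [← Polynomial.coeff_zero_eq_eval_zero,
      Polynomial.coeff_iterate_derivative, zero_add, Nat.descFactorial_self, nsmul_eq_mul]
  rw [iteratedDeriv_mul han han, h2] at h1
  have hk : (k.factorial : ℂ) ≠ 0 := by exact_mod_cast k.factorial_ne_zero
  rw [← mul_right_inj' hk, h1, Finset.mul_sum]
  refine Finset.sum_congr rfl fun i hi => ?_
  have hik : i ≤ k := by rw [Finset.mem_range] at hi; omega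
  rw [Nat.cast_choose ℂ hik]
  have : (i.factorial : ℂ) ≠ 0 := by exact_mod_cast i.factorial_ne_zero
  have : ((k - i).factorial : ℂ) ≠ 0 := by exact_mod_cast (k - i).factorial_ne_zero
  field_simp

lemma sum_conv_le (M : ℕ) (x : ℕ → ℝ) (hx : ∀ j, 0 ≤ x j) :
    ∑ k ∈ Finset.range (M + 1), ∑ i ∈ Finset.range (k + 1), x i * x (k - i) ≤
      (∑ j ∈ Finset.range (M + 1), x j) ^ 2 := by
  rw [Finset.sum_comm' (t' := Finset.range (M + 1)) (s' := fun i => Finset.Ico i (M + 1))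
    (by intro k i; simp only [Finset.mem_range, Finset.mem_Ico]; omega), sq, Finset.sum_mul]
  refine Finset.sum_le_sum fun i _ => ?_
  rw [← Finset.mul_sum, Finset.sum_Ico_eq_sum_range]
  refine mul_le_mul_of_nonneg_left ?_ (hx i)
  simp only [Nat.add_sub_cancel_left]
  refine Finset.sum_le_sum_of_subset_of_nonneg ?_ fun j _ _ => hx j
  intro j; simp only [Finset.mem_range]; omega

/-- The `L¹`–`L²` contraction of dilation by `1/√2` for polynomials of one variable. With the square
root `g = ∑ b_j z^j` of the outer representative one has `a_k = ∑ b_i b_{k-i}`, so the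
Cauchy–Schwarz inequality and `k + 1 ≤ 2 ^ k` bound the left side by `(∑ |b_j|²)²`. -/
lemma dilation_contraction (D : ℕ) (a : ℕ → ℂ) :
    ∑ k ∈ Finset.range (D + 1), ‖a k‖ ^ 2 * (1 / 2 : ℝ) ^ k ≤
      ((2 * Real.pi)⁻¹ * ∫ θ in (0 : ℝ)..2 * Real.pi,
        ‖∑ k ∈ Finset.range (D + 1), a k * circleMap 0 1 θ ^ k‖) ^ 2 := by
  set p : Polynomial ℂ := ∑ k ∈ Finset.range (D + 1), Polynomial.C (a k) * Polynomial.X ^ k with hp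
  have hpe : ∀ z, p.eval z = ∑ k ∈ Finset.range (D + 1), a k * z ^ k := by
    intro z; simp [hp, Polynomial.eval_finsetSum]
  obtain ⟨q, ⟨g, hg, hs⟩, hle, heq⟩ := exists_outerRep p
  set M := max D q.natDegree with hM
  have hqe : ∀ z, q.eval z = ∑ k ∈ Finset.range (M + 1), q.coeff k * z ^ k := fun z =>
    Polynomial.eval_eq_sum_range' (by omega) z
  set r : ℝ := √(1 / 2) with hr
  have hr2 : r ^ 2 = 1 / 2 := Real.sq_sqrt (by norm_num)
  have hr1 : r < 1 := by
    rw [hr, Real.sqrt_lt' one_pos]; norm_num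
  have hr0 : 0 ≤ r := Real.sqrt_nonneg _
  set b : ℕ → ℂ := fun j => iteratedDeriv j g 0 / (j.factorial : ℂ) with hb
  -- comparison of the weighted square sums of `p` and `q`
  have h1 : ∑ k ∈ Finset.range (D + 1), ‖a k‖ ^ 2 * (1 / 2 : ℝ) ^ k ≤
      ∑ k ∈ Finset.range (M + 1), ‖q.coeff k‖ ^ 2 * (1 / 2 : ℝ) ^ k := by
    have e1 := rtu_parseval (M + 1) D (by omega) a r
    have e2 := rtu_parseval (M + 1) M (by omega) q.coeff r
    simp_rw [← hpe, hr2] at e1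
    simp_rw [← hqe, hr2] at e2
    have hN : (0 : ℝ) < ((M + 1 : ℕ) : ℝ) := by positivity
    refine le_of_mul_le_mul_left ?_ hN
    rw [← e1, ← e2]
    refine Finset.sum_le_sum fun i _ => ?_
    refine pow_le_pow_left₀ (norm_nonneg _) (hle _ ?_) 2
    rw [norm_mul, norm_rtu, Complex.norm_real, Real.norm_of_nonneg hr0, mul_one]
    exact hr1
  have h2 : ∀ k ∈ Finset.range (M + 1), ‖q.coeff k‖ ^ 2 * (1 / 2 : ℝ) ^ k ≤
      ∑ i ∈ Finset.range (k + 1), ‖b i‖ ^ 2 * ‖b (k - i)‖ ^ 2 := by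
    intro k _
    have hcs : ‖q.coeff k‖ ^ 2 ≤
        (k + 1) * ∑ i ∈ Finset.range (k + 1), ‖b i‖ ^ 2 * ‖b (k - i)‖ ^ 2 := by
      rw [coeff_sq_root hg q hs k]
      calc _ ≤ (∑ i ∈ Finset.range (k + 1), ‖b i‖ * ‖b (k - i)‖) ^ 2 := by
            refine pow_le_pow_left₀ (norm_nonneg _) ((norm_sum_le _ _).trans ?_) 2
            exact Finset.sum_le_sum fun i _ => (norm_mul _ _).le
        _ ≤ _ := by
            have := sq_sum_le_card_mul_sum_sq (s := Finset.range (k + 1))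
              (f := fun i => ‖b i‖ * ‖b (k - i)‖)
            simpa [mul_pow] using this
    have hk2 : ((k : ℝ) + 1) ≤ 2 ^ k := by exact_mod_cast Nat.lt_two_pow_self
    have hS : 0 ≤ ∑ i ∈ Finset.range (k + 1), ‖b i‖ ^ 2 * ‖b (k - i)‖ ^ 2 := by positivity
    rw [one_div, inv_pow, ← div_eq_mul_inv, div_le_iff₀ (by positivity)]
    nlinarith
  have h3 : ∑ j ∈ Finset.range (M + 1), ‖b j‖ ^ 2 ≤ (2 * Real.pi)⁻¹ *
      ∫ θ in (0 : ℝ)..2 * Real.pi, ‖∑ k ∈ Finset.range (D + 1), a k * circleMap 0 1 θ ^ k‖ := by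
    have hrhs : ∫ θ in (0 : ℝ)..2 * Real.pi,
        ‖∑ k ∈ Finset.range (D + 1), a k * circleMap 0 1 θ ^ k‖ =
        ∫ θ in (0 : ℝ)..2 * Real.pi, ‖q.eval (circleMap 0 1 θ)‖ := by
      congr 1; funext θ
      rw [heq _ (by simp), hpe]
    rw [hrhs]
    have hcm : Continuous fun x : ℝ × ℝ => circleMap 0 x.1 x.2 := by
      unfold circleMap; fun_prop
    have c1 : Continuous fun t : ℝ => (2 * Real.pi)⁻¹ *
        ∫ θ in (0 : ℝ)..2 * Real.pi, ‖q.eval (circleMap 0 t θ)‖ := by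
      refine continuous_const.mul ?_
      apply intervalIntegral.continuous_parametric_intervalIntegral_of_continuous'
      exact (q.continuous.comp hcm).norm
    have c2 : Continuous fun t : ℝ => ∑ j ∈ Finset.range (M + 1), (‖b j‖ * t ^ j) ^ 2 := by fun_prop
    have t1 := (c1.tendsto 1).mono_left (nhdsWithin_le_nhds (s := Set.Iio 1))
    have t2 := (c2.tendsto 1).mono_left (nhdsWithin_le_nhds (s := Set.Iio 1))
    simp only [one_pow, mul_one] at t2
    refine le_of_tendsto_of_tendsto t2 t1 ?_
    filter_upwards [self_mem_nhdsWithin, nhdsWithin_le_nhds (lt_mem_nhds zero_lt_one)] with t ht1 ht0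
    have hB := bessel_circle hg ht0 ht1 M
    refine hB.trans (le_of_eq ?_)
    congr 2; funext θ
    rw [← norm_pow, hs]
    rw [mem_ball_zero_iff, norm_circleMap_zero, abs_of_pos ht0]
    exact ht1
  refine h1.trans ((Finset.sum_le_sum h2).trans ((sum_conv_le M _ fun j => by positivity).trans ?_))
  exact pow_le_pow_left₀ (by positivity) h3 2

/-! ### The Khinchine inequality on a grid of the torus -/

lemma rtu_eq_circleMap (N : ℕ) (i : Fin N) :
    rtu N i = circleMap 0 1 (2 * Real.pi * (i : ℕ) / N) := by
  rw [rtu, ← Complex.exp_nat_mul, circleMap]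
  simp only [Complex.ofReal_one, one_mul, zero_add]
  congr 1; push_cast; ring

/-- Comparison of the `L¹` mean on the circle with the mean over the `N`-th roots of unity. The
Lipschitz constant of `|p|` is at most `∑ k |a_k|`, which the discrete mean itself controls. -/
lemma riemann_compare (D N : ℕ) (hD : D < N) (a : ℕ → ℂ) :
    (2 * Real.pi)⁻¹ * ∫ θ in (0 : ℝ)..2 * Real.pi,
        ‖∑ k ∈ Finset.range (D + 1), a k * circleMap 0 1 θ ^ k‖ ≤
      (1 + 2 * Real.pi * D * (D + 1) / N) *
        ((N : ℝ)⁻¹ * ∑ i : Fin N, ‖∑ k ∈ Finset.range (D + 1), a k * rtu N i ^ k‖) := by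
  have hN : (0 : ℝ) < N := by exact_mod_cast (by omega : 0 < N)
  have hpi := Real.pi_pos
  set F : ℝ → ℝ := fun θ => ‖∑ k ∈ Finset.range (D + 1), a k * circleMap 0 1 θ ^ k‖ with hF
  set A : ℝ := (N : ℝ)⁻¹ * ∑ i : Fin N, ‖∑ k ∈ Finset.range (D + 1), a k * rtu N i ^ k‖ with hA
  have hcoef : ∀ k ∈ Finset.range (D + 1), ‖a k‖ ≤ A := by
    intro k hk
    rw [Finset.mem_range] at hk
    rw [hA, le_inv_mul_iff₀ hN]
    exact rtu_coeff_le N D hD a k (by omega)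
  have hA0 : 0 ≤ A := by positivity
  have hcont : Continuous F := by
    have := continuous_circleMap 0 1
    fun_prop
  have hLip : ∀ θ θ' : ℝ, θ' ≤ θ → F θ ≤ F θ' + (D * (D + 1) * A) * (θ - θ') := by
    intro θ θ' hθ
    have h1 : F θ - F θ' ≤ ∑ k ∈ Finset.range (D + 1), A * (D * (θ - θ')) := by
      refine (norm_sub_norm_le _ _).trans ?_
      rw [← Finset.sum_sub_distrib]
      refine (norm_sum_le _ _).trans (Finset.sum_le_sum fun k hk => ?_)
      rw [← mul_sub, norm_mul]
      refine mul_le_mul (hcoef k hk) ?_ (norm_nonneg _) hA0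
      have e : circleMap 0 1 θ ^ k - circleMap 0 1 θ' ^ k =
          circleMap 0 1 θ' ^ k * (Complex.exp (Complex.I * ((k * (θ - θ') : ℝ) : ℂ)) - 1) := by
        simp only [circleMap, Complex.ofReal_one, one_mul, zero_add, ← Complex.exp_nat_mul]
        rw [mul_sub, ← Complex.exp_add, mul_one]
        congr 2; push_cast; ring
      rw [e, norm_mul, norm_pow, norm_circleMap_zero, abs_one, one_pow, one_mul]
      refine Real.norm_exp_I_mul_ofReal_sub_one_le.trans ?_
      rw [Real.norm_of_nonneg (mul_nonneg (Nat.cast_nonneg _) (sub_nonneg.mpr hθ))]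
      refine mul_le_mul_of_nonneg_right ?_ (sub_nonneg.mpr hθ)
      rw [Finset.mem_range] at hk
      exact_mod_cast (by omega : k ≤ D)
    rw [Finset.sum_const, Finset.card_range, nsmul_eq_mul] at h1
    push_cast at h1
    linarith
  set x : ℕ → ℝ := fun i => 2 * Real.pi * i / N with hx
  have hstep : ∀ i, x (i + 1) - x i = 2 * Real.pi / N := by
    intro i; simp only [hx]; push_cast; field_simp; ring
  have hmono : ∀ i, x i ≤ x (i + 1) := fun i => by
    have := hstep i
    have : 0 ≤ 2 * Real.pi / N := by positivity
    linarith
  have hsum := intervalIntegral.sum_integral_adjacent_intervals (f := F)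
    (μ := MeasureTheory.volume) (a := x) (n := N) fun k _ => hcont.intervalIntegrable _ _
  have hx0 : x 0 = 0 := by simp [hx]
  have hxN : x N = 2 * Real.pi := by simp only [hx]; field_simp
  rw [hx0, hxN] at hsum
  have hpiece : ∀ i ∈ Finset.range N, ∫ θ in x i..x (i + 1), F θ ≤
      (F (x i) + D * (D + 1) * A * (2 * Real.pi / N)) * (2 * Real.pi / N) := by
    intro i _
    have hle : ∫ θ in x i..x (i + 1), F θ ≤
        ∫ _ in x i..x (i + 1), (F (x i) + D * (D + 1) * A * (2 * Real.pi / N)) := by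
      refine intervalIntegral.integral_mono_on (hmono i) (hcont.intervalIntegrable _ _)
        (by simp) fun θ hθ => ?_
      refine (hLip θ (x i) hθ.1).trans ?_
      have : θ - x i ≤ 2 * Real.pi / N := by rw [← hstep i]; linarith [hθ.2]
      have : (D * (D + 1) * A) * (θ - x i) ≤ (D * (D + 1) * A) * (2 * Real.pi / N) :=
        mul_le_mul_of_nonneg_left this (by positivity)
      linarith
    refine hle.trans (le_of_eq ?_)
    rw [intervalIntegral.integral_const, hstep, smul_eq_mul, mul_comm]
  have htot := Finset.sum_le_sum hpiece
  rw [hsum, ← Finset.sum_mul, Finset.sum_add_distrib, Finset.sum_const, Finset.card_range,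
    nsmul_eq_mul] at htot
  have hAsum : ∑ i ∈ Finset.range N, F (x i) = N * A := by
    rw [hA, mul_inv_cancel_left₀ hN.ne', ← Fin.sum_univ_eq_sum_range (fun i => F (x i)) N]
    refine Finset.sum_congr rfl fun i _ => ?_
    rw [rtu_eq_circleMap]
  rw [hAsum] at htot
  calc (2 * Real.pi)⁻¹ * ∫ θ in (0 : ℝ)..2 * Real.pi, F θ
      ≤ (2 * Real.pi)⁻¹ *
        ((N * A + N * (D * (D + 1) * A * (2 * Real.pi / N))) * (2 * Real.pi / N)) :=
        mul_le_mul_of_nonneg_left htot (by positivity)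
    _ = _ := by field_simp

lemma minkowski_sqrt {X ι : Type*} [Fintype X] [Fintype ι] (v : ι → X → ℝ) :
    √(∑ x, (∑ i, v i x) ^ 2) ≤ ∑ i, √(∑ x, v i x ^ 2) := by
  have h := norm_sum_le (Finset.univ : Finset ι)
    (fun i => (WithLp.toLp 2 (v i) : EuclideanSpace ℝ X))
  simpa [EuclideanSpace.norm_eq] using h

/-- Tensorization of an inequality between a weighted `ℓ²` norm of coefficients and an `L¹` norm. -/
lemma tensor_ineq {A ι : Type*} [Fintype A] [Fintype ι] (φ : A → ι → ℂ) (ρ : A → ℝ)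
    (hρ : ∀ k, 0 ≤ ρ k) (κ : ℝ) (hκ : 0 ≤ κ)
    (h : ∀ a : A → ℂ, √(∑ k, ρ k * ‖a k‖ ^ 2) ≤ κ * ∑ i, ‖∑ k, a k * φ k i‖) (n : ℕ) :
    ∀ c : (Fin n → A) → ℂ, √(∑ α, (∏ j, ρ (α j)) * ‖c α‖ ^ 2) ≤
      κ ^ n * ∑ w : Fin n → ι, ‖∑ α, c α * ∏ j, φ (α j) (w j)‖ := by
  induction n with
  | zero => intro c; simp [Real.sqrt_sq]
  | succ n ih =>
    intro c
    set E : ι → (Fin n → A) → ℂ := fun i α' => ∑ k, c (Fin.cons k α') * φ k i with hE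
    have hce : ∀ (k : A) (α' : Fin n → A), (Fin.consEquiv fun _ : Fin (n + 1) => A) (k, α') =
        (Fin.cons k α' : Fin (n + 1) → A) := fun _ _ => rfl
    have hR : ∀ α' : Fin n → A, 0 ≤ ∏ j, ρ (α' j) := fun α' =>
      Finset.prod_nonneg fun j _ => hρ _
    have h1 : ∑ α : Fin (n + 1) → A, (∏ j, ρ (α j)) * ‖c α‖ ^ 2 ≤
        ∑ α' : Fin n → A, (∑ i, κ * (√(∏ j, ρ (α' j)) * ‖E i α'‖)) ^ 2 := by
      rw [← (Fin.consEquiv fun _ : Fin (n + 1) => A).sum_comp, Fintype.sum_prod_type_right]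
      refine Finset.sum_le_sum fun α' _ => ?_
      simp only [hce, Fin.prod_univ_succ, Fin.cons_zero, Fin.cons_succ]
      have h2 := h fun k => c (Fin.cons k α')
      have h3 : ∑ k, ρ k * ‖c (Fin.cons k α')‖ ^ 2 ≤ (κ * ∑ i, ‖E i α'‖) ^ 2 :=
        (Real.sqrt_le_left (by positivity)).mp h2
      calc _ = (∏ j, ρ (α' j)) * ∑ k, ρ k * ‖c (Fin.cons k α')‖ ^ 2 := by
            rw [Finset.mul_sum]; exact Finset.sum_congr rfl fun k _ => by ring
        _ ≤ (∏ j, ρ (α' j)) * (κ * ∑ i, ‖E i α'‖) ^ 2 := mul_le_mul_of_nonneg_left h3 (hR α')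
        _ = _ := by
            rw [← Finset.mul_sum, ← Finset.mul_sum, mul_pow, mul_pow, mul_pow, Real.sq_sqrt (hR α')]
            ring
    have h4 : ∀ i, √(∑ α' : Fin n → A, (κ * (√(∏ j, ρ (α' j)) * ‖E i α'‖)) ^ 2) ≤
        κ * (κ ^ n * ∑ w : Fin n → ι, ‖∑ α', E i α' * ∏ j, φ (α' j) (w j)‖) := by
      intro i
      refine le_trans (le_of_eq ?_) (mul_le_mul_of_nonneg_left (ih (E i)) hκ)
      have : ∑ α' : Fin n → A, (κ * (√(∏ j, ρ (α' j)) * ‖E i α'‖)) ^ 2 =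
          κ ^ 2 * ∑ α' : Fin n → A, (∏ j, ρ (α' j)) * ‖E i α'‖ ^ 2 := by
        rw [Finset.mul_sum]
        exact Finset.sum_congr rfl fun α' _ => by rw [mul_pow, mul_pow, Real.sq_sqrt (hR α')]
      rw [this, Real.sqrt_mul (sq_nonneg κ), Real.sqrt_sq hκ]
    refine (Real.sqrt_le_sqrt h1).trans ((minkowski_sqrt _).trans
      ((Finset.sum_le_sum fun i _ => h4 i).trans (le_of_eq ?_)))
    rw [← Finset.mul_sum, ← Finset.mul_sum, ← mul_assoc, pow_succ']
    congr 1
    rw [← (Fin.consEquiv fun _ : Fin (n + 1) => ι).sum_comp, Fintype.sum_prod_type]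
    refine Finset.sum_congr rfl fun i _ => Finset.sum_congr rfl fun w _ => ?_
    congr 1
    rw [← (Fin.consEquiv fun _ : Fin (n + 1) => A).sum_comp, Fintype.sum_prod_type_right]
    refine Finset.sum_congr rfl fun α' _ => ?_
    simp only [hce, Fin.consEquiv_apply, Fin.prod_univ_succ, Fin.cons_zero, Fin.cons_succ, hE,
      Finset.sum_mul]
    exact Finset.sum_congr rfl fun k _ => by ring

/-- The grid of points of the torus with coordinates `N`-th roots of unity. -/
noncomputable def gridPt (n N : ℕ) (w : Fin n → Fin N) : Fin n → ℂ := fun j => rtu N (w j)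

lemma mem_homIdx {m n : ℕ} {α : Fin n → ℕ} : α ∈ homIdx m n ↔ ∑ j, α j = m := by
  simp only [homIdx, Finset.mem_filter, Fintype.mem_piFinset, Finset.mem_range]
  refine ⟨fun h => h.2, fun h => ⟨fun j => ?_, h⟩⟩
  have := Finset.single_le_sum (f := α) (fun _ _ => Nat.zero_le _) (Finset.mem_univ j)
  omega

lemma le_of_mem_homIdx {m n : ℕ} {α : Fin n → ℕ} (h : α ∈ homIdx m n) (j : Fin n) : α j ≤ m := by
  rw [mem_homIdx] at h
  have := Finset.single_le_sum (f := α) (fun _ _ => Nat.zero_le _) (Finset.mem_univ j)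
  omega

lemma sum_homIdx_eq {M : Type*} [AddCommMonoid M] (d n : ℕ) (G : (Fin n → ℕ) → M) :
    ∑ β ∈ homIdx d n, G β =
      ∑ α : Fin n → Fin (d + 1), if ∑ j, (α j : ℕ) = d then G (fun j => α j) else 0 := by
  rw [← Finset.sum_filter]
  symm
  refine Finset.sum_bij (fun α _ => fun j => (α j : ℕ)) ?_ ?_ ?_ ?_
  · intro α hα
    rw [mem_homIdx]; simpa using hα
  · intro α _ α' _ h
    funext j
    exact Fin.ext (congrFun h j)
  · intro β hβ
    refine ⟨fun j => ⟨β j, Nat.lt_succ_of_le (le_of_mem_homIdx hβ j)⟩, ?_, rfl⟩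
    rw [mem_homIdx] at hβ
    simpa using hβ
  · intro α _; rfl

/-- Discrete `L¹`–`L²` Khinchine inequality for `d`-homogeneous polynomials on a sufficiently fine
grid of the torus. The sharp asymptotic constant is `2 ^ (d / 2)`; the factor `√2` that is given away
absorbs the discretization error. -/
lemma khinchine_grid (n d N₀ : ℕ) : ∃ N, N₀ < N ∧ ∀ c : (Fin n → ℕ) → ℂ,
    √(∑ β ∈ homIdx d n, ‖c β‖ ^ 2) ≤ √(2 ^ (d + 1)) *
      (((N : ℝ) ^ n)⁻¹ * ∑ w : Fin n → Fin N, ‖∑ β ∈ homIdx d n, c β * ∏ j, gridPt n N w j ^ β j‖) := by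
  have hlim : Filter.Tendsto (fun N : ℕ => (1 + 2 * Real.pi * d * (d + 1) / (N : ℝ)) ^ n)
      Filter.atTop (nhds 1) := by
    have h := ((tendsto_const_div_atTop_nhds_zero_nat (2 * Real.pi * d * (d + 1))).const_add 1).pow n
    simpa using h
  have h2 : (1 : ℝ) < √2 := by
    rw [Real.lt_sqrt zero_le_one]; norm_num
  obtain ⟨N, hNκ, hN0, hNd⟩ := ((hlim.eventually_lt_const h2).and
    ((Filter.eventually_gt_atTop N₀).and (Filter.eventually_gt_atTop d))).exists
  refine ⟨N, hN0, fun c => ?_⟩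
  set κ₀ : ℝ := 1 + 2 * Real.pi * d * (d + 1) / (N : ℝ) with hκ₀
  have hκ₀0 : 0 ≤ κ₀ := by have := Real.pi_pos; positivity
  have hone : ∀ a : Fin (d + 1) → ℂ, √(∑ k : Fin (d + 1), (1 / 2 : ℝ) ^ (k : ℕ) * ‖a k‖ ^ 2) ≤
      (κ₀ * (N : ℝ)⁻¹) * ∑ i : Fin N, ‖∑ k : Fin (d + 1), a k * rtu N i ^ (k : ℕ)‖ := by
    intro a
    set a' : ℕ → ℂ := fun k => if h : k < d + 1 then a ⟨k, h⟩ else 0 with ha'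
    have haa : ∀ k : Fin (d + 1), a k = a' k := fun k => by
      simp only [ha', k.isLt, dite_true]
    have e1 := (dilation_contraction d a').trans (pow_le_pow_left₀
      (mul_nonneg (by have := Real.pi_pos; positivity)
        (intervalIntegral.integral_nonneg (by have := Real.pi_pos; positivity)
          fun _ _ => norm_nonneg _))
      (riemann_compare d N hNd a') 2)
    rw [Real.sqrt_le_left (by positivity)]
    simp_rw [haa]
    rw [Fin.sum_univ_eq_sum_range (fun k => (1 / 2 : ℝ) ^ k * ‖a' k‖ ^ 2)]
    have e2 : ∀ i : Fin N, ∑ k : Fin (d + 1), a' k * rtu N i ^ (k : ℕ) =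
        ∑ k ∈ Finset.range (d + 1), a' k * rtu N i ^ k := fun i =>
      Fin.sum_univ_eq_sum_range (fun k => a' k * rtu N i ^ k) (d + 1)
    simp_rw [e2]
    rw [mul_assoc]
    rw [← hκ₀] at e1
    refine le_trans (le_of_eq (Finset.sum_congr rfl fun k _ => mul_comm _ _)) e1
  have hten := tensor_ineq (A := Fin (d + 1)) (ι := Fin N) (fun k i => rtu N i ^ (k : ℕ))
    (fun k => (1 / 2 : ℝ) ^ (k : ℕ)) (fun k => by positivity) (κ₀ * (N : ℝ)⁻¹) (by positivity)
    hone n (fun α => if ∑ j, (α j : ℕ) = d then c (fun j => α j) else 0)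
  have hL : ∑ α : Fin n → Fin (d + 1), (∏ j, (1 / 2 : ℝ) ^ (α j : ℕ)) *
      ‖if ∑ j, (α j : ℕ) = d then c (fun j => α j) else 0‖ ^ 2 =
      (1 / 2) ^ d * ∑ β ∈ homIdx d n, ‖c β‖ ^ 2 := by
    rw [sum_homIdx_eq, Finset.mul_sum]
    refine Finset.sum_congr rfl fun α _ => ?_
    split_ifs with h
    · rw [Finset.prod_pow_eq_pow_sum, h]
    · simp
  have hRw : ∀ w : Fin n → Fin N, ∑ α : Fin n → Fin (d + 1),
      (if ∑ j, (α j : ℕ) = d then c (fun j => α j) else 0) * ∏ j, rtu N (w j) ^ (α j : ℕ) =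
      ∑ β ∈ homIdx d n, c β * ∏ j, gridPt n N w j ^ β j := by
    intro w
    rw [sum_homIdx_eq]
    refine Finset.sum_congr rfl fun α _ => ?_
    split_ifs with h
    · rfl
    · simp
  rw [hL] at hten
  simp_rw [hRw] at hten
  set T := ∑ w : Fin n → Fin N, ‖∑ β ∈ homIdx d n, c β * ∏ j, gridPt n N w j ^ β j‖ with hT
  have hT0 : 0 ≤ T := by positivity
  rw [Real.sqrt_mul (by positivity), mul_pow, inv_pow] at hten
  have hs : √((2 : ℝ) ^ d) * √((1 / 2) ^ d) = 1 := by
    rw [← Real.sqrt_mul (by positivity), ← mul_pow]; norm_num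
  calc √(∑ β ∈ homIdx d n, ‖c β‖ ^ 2)
      = √((2 : ℝ) ^ d) * (√((1 / 2) ^ d) * √(∑ β ∈ homIdx d n, ‖c β‖ ^ 2)) := by
        rw [← mul_assoc, hs, one_mul]
    _ ≤ √((2 : ℝ) ^ d) * (κ₀ ^ n * ((N : ℝ) ^ n)⁻¹ * T) :=
        mul_le_mul_of_nonneg_left hten (Real.sqrt_nonneg _)
    _ ≤ √((2 : ℝ) ^ d) * (√2 * ((N : ℝ) ^ n)⁻¹ * T) := by gcongr
    _ = _ := by rw [pow_succ, Real.sqrt_mul (by positivity)]; ring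

/-! ### Fourier coefficients on the grid and the dual Khinchine inequality -/

lemma norm_gridPt (n N : ℕ) (w : Fin n → Fin N) (j : Fin n) : ‖gridPt n N w j‖ = 1 := norm_rtu N _

lemma norm_grid_monomial (n N : ℕ) (w : Fin n → Fin N) (α : Fin n → ℕ) :
    ‖∏ j, gridPt n N w j ^ α j‖ = 1 := by
  simp [norm_prod, norm_gridPt]

lemma grid_orth (n N : ℕ) (α β : Fin n → ℕ) (hα : ∀ j, α j < N) (hβ : ∀ j, β j < N) :
    ∑ w : Fin n → Fin N, (∏ j, gridPt n N w j ^ α j) *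
      (starRingEnd ℂ) (∏ j, gridPt n N w j ^ β j) = if α = β then (N : ℂ) ^ n else 0 := by
  have h := Finset.prod_univ_sum (fun _ : Fin n => (Finset.univ : Finset (Fin N)))
    (fun j i => rtu N i ^ α j * (starRingEnd ℂ (rtu N i)) ^ β j)
  rw [Fintype.piFinset_univ] at h
  have e : ∀ w : Fin n → Fin N, (∏ j, gridPt n N w j ^ α j) *
      (starRingEnd ℂ) (∏ j, gridPt n N w j ^ β j) =
      ∏ j, (rtu N (w j) ^ α j * (starRingEnd ℂ (rtu N (w j))) ^ β j) := by
    intro w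
    rw [map_prod, ← Finset.prod_mul_distrib]
    simp [gridPt]
  simp_rw [e, ← h, fun j => rtu_orth N (α j) (β j) (hα j) (hβ j)]
  split_ifs with hab
  · simp [hab]
  · obtain ⟨j, hj⟩ := Function.ne_iff.mp hab
    exact Finset.prod_eq_zero (Finset.mem_univ j) (if_neg hj)

/-- Recovery of the coefficients of a polynomial from its values on the grid `ζ_w x`. -/
lemma grid_coeff (n N : ℕ) (hN : 0 < N) (I : Finset (Fin n → ℕ)) (hI : ∀ α ∈ I, ∀ j, α j < N)
    (c : (Fin n → ℕ) → ℂ) (x : Fin n → ℂ) (β : Fin n → ℕ) (hβ : β ∈ I) :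
    ((N : ℂ) ^ n)⁻¹ * ∑ w : Fin n → Fin N,
      (∑ α ∈ I, c α * ∏ j, (gridPt n N w j * x j) ^ α j) *
        (starRingEnd ℂ) (∏ j, gridPt n N w j ^ β j) = c β * ∏ j, x j ^ β j := by
  have hN' : (N : ℂ) ^ n ≠ 0 := pow_ne_zero _ (Nat.cast_ne_zero.mpr hN.ne')
  rw [inv_mul_eq_iff_eq_mul₀ hN']
  simp_rw [Finset.sum_mul]
  rw [Finset.sum_comm]
  have : ∀ α ∈ I, ∑ w : Fin n → Fin N, c α * (∏ j, (gridPt n N w j * x j) ^ α j) *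
        (starRingEnd ℂ) (∏ j, gridPt n N w j ^ β j) =
      if α = β then (N : ℂ) ^ n * (c α * ∏ j, x j ^ α j) else 0 := by
    intro α hα
    have h := grid_orth n N α β (hI α hα) (hI β hβ)
    calc _ = (c α * ∏ j, x j ^ α j) * ∑ w : Fin n → Fin N, (∏ j, gridPt n N w j ^ α j) *
      (starRingEnd ℂ) (∏ j, gridPt n N w j ^ β j) := by
          rw [Finset.mul_sum]
          refine Finset.sum_congr rfl fun w _ => ?_
          simp_rw [mul_pow, Finset.prod_mul_distrib]
          ring
      _ = _ := by rw [h]; split_ifs <;> ring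
  rw [Finset.sum_congr rfl this, Finset.sum_ite_eq' I β, if_pos hβ]

/-- The Hahn–Banach dual of the Khinchine inequality: every family of coefficients of degree `d`
is the Fourier data of a bounded function on the grid. -/
lemma khinchine_dual (n d N : ℕ) (hN : d < N) (M : ℝ) (hM : 0 ≤ M)
    (hK : ∀ c : (Fin n → ℕ) → ℂ, √(∑ β ∈ homIdx d n, ‖c β‖ ^ 2) ≤ M *
      (((N : ℝ) ^ n)⁻¹ * ∑ w : Fin n → Fin N,
        ‖∑ β ∈ homIdx d n, c β * ∏ j, gridPt n N w j ^ β j‖))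
    (b : (Fin n → ℕ) → ℂ) :
    ∃ h : (Fin n → Fin N) → ℂ,
      (∀ β ∈ homIdx d n, ((N : ℂ) ^ n)⁻¹ * ∑ w, h w * ∏ j, gridPt n N w j ^ β j = b β) ∧
      ∀ w, ‖h w‖ ≤ M * √(∑ β ∈ homIdx d n, ‖b β‖ ^ 2) := by
  have hN0 : 0 < N := by omega
  have hNR : (0 : ℝ) < (N : ℝ) ^ n := by positivity
  have hNC : (N : ℂ) ^ n ≠ 0 := pow_ne_zero _ (Nat.cast_ne_zero.mpr hN0.ne')
  set B : ℝ := √(∑ β ∈ homIdx d n, ‖b β‖ ^ 2) with hB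
  let L : ((Fin n → ℕ) → ℂ) →ₗ[ℂ] PiLp 1 (fun _ : Fin n → Fin N => ℂ) :=
    { toFun := fun c => WithLp.toLp 1 fun w => ∑ β ∈ homIdx d n, c β * ∏ j, gridPt n N w j ^ β j
      map_add' := fun c c' => by
        ext w; simp [add_mul, Finset.sum_add_distrib]
      map_smul' := fun a c => by
        ext w; simp [mul_assoc, Finset.mul_sum] }
  let Φ : PiLp 1 (fun _ : Fin n → Fin N => ℂ) →ₗ[ℂ] ℂ :=
    { toFun := fun f => ∑ β ∈ homIdx d n, b β * (((N : ℂ) ^ n)⁻¹ * ∑ w, f w *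
        (starRingEnd ℂ) (∏ j, gridPt n N w j ^ β j))
      map_add' := fun f g => by
        simp [add_mul, mul_add, Finset.sum_add_distrib]
      map_smul' := fun a f => by
        simp only [PiLp.smul_apply, smul_eq_mul, RingHom.id_apply, mul_assoc]
        simp_rw [← Finset.mul_sum]
        rw [Finset.mul_sum]
        exact Finset.sum_congr rfl fun β _ => by ring }
  have hΦL : ∀ c, Φ (L c) = ∑ β ∈ homIdx d n, b β * c β := by
    intro c
    refine Finset.sum_congr rfl fun β hβ => ?_
    congr 1
    have := grid_coeff n N hN0 (homIdx d n)
      (fun α hα j => (le_of_mem_homIdx hα j).trans_lt hN) c (fun _ => 1) β hβ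
    simpa [L] using this
  have hbound : ∀ f ∈ LinearMap.range L, ‖Φ f‖ ≤ (M * B * ((N : ℝ) ^ n)⁻¹) * ‖f‖ := by
    rintro _ ⟨c, rfl⟩
    rw [hΦL]
    have h1 : ‖∑ β ∈ homIdx d n, b β * c β‖ ≤ B * √(∑ β ∈ homIdx d n, ‖c β‖ ^ 2) := by
      refine (norm_sum_le _ _).trans ?_
      simp_rw [norm_mul]
      exact Real.sum_mul_le_sqrt_mul_sqrt _ _ _
    refine h1.trans ((mul_le_mul_of_nonneg_left (hK c) (Real.sqrt_nonneg _)).trans (le_of_eq ?_))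
    have : ‖L c‖ = ∑ w : Fin n → Fin N, ‖∑ β ∈ homIdx d n, c β * ∏ j, gridPt n N w j ^ β j‖ := by
      rw [PiLp.norm_eq_of_L1]; rfl
    rw [this]; ring
  let φ : StrongDual ℂ (LinearMap.range L) :=
    (Φ.comp (LinearMap.range L).subtype).mkContinuous (M * B * ((N : ℝ) ^ n)⁻¹)
      (fun f => hbound f f.2)
  have hφ : ‖φ‖ ≤ M * B * ((N : ℝ) ^ n)⁻¹ :=
    LinearMap.mkContinuous_norm_le _ (by positivity) _
  obtain ⟨g, hg, hgn⟩ := exists_extension_norm_eq (LinearMap.range L) φ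
  have hsum : ∀ f : PiLp 1 (fun _ : Fin n → Fin N => ℂ), g f = ∑ w, f w * g (PiLp.single 1 w 1) := by
    intro f
    have : f = ∑ w, f w • (PiLp.single 1 w (1 : ℂ) : PiLp 1 (fun _ : Fin n → Fin N => ℂ)) := by
      ext v; simp [Finset.sum_apply, Pi.single_apply]
    conv_lhs => rw [this]
    simp
  refine ⟨fun w => (N : ℂ) ^ n * g (PiLp.single 1 w 1), fun β hβ => ?_, fun w => ?_⟩
  · have h1 := hsum (L (Pi.single β 1))
    have h2 : g (L (Pi.single β 1)) = b β := by
      have := hg ⟨L (Pi.single β 1), _, rfl⟩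
      rw [this]
      change Φ (L (Pi.single β 1)) = _
      rw [hΦL, Finset.sum_eq_single β]
      · simp
      · intro γ _ hγ; simp [hγ]
      · exact fun h => absurd hβ h
    have h3 : ∀ w, (L (Pi.single β 1)) w = ∏ j, gridPt n N w j ^ β j := by
      intro w
      change ∑ γ ∈ homIdx d n, (Pi.single β 1 : (Fin n → ℕ) → ℂ) γ * ∏ j, gridPt n N w j ^ γ j = _
      rw [Finset.sum_eq_single β]
      · simp
      · intro γ _ hγ; simp [hγ]
      · exact fun h => absurd hβ h
    rw [← h2, h1, inv_mul_eq_iff_eq_mul₀ hNC, Finset.mul_sum]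
    exact Finset.sum_congr rfl fun w _ => by rw [h3]; ring
  · have h1 : ‖g (PiLp.single 1 w 1)‖ ≤ M * B * ((N : ℝ) ^ n)⁻¹ := by
      refine (g.le_opNorm _).trans ?_
      rw [hgn, PiLp.norm_single, norm_one, mul_one]
      exact hφ
    rw [norm_mul, norm_pow, Complex.norm_natCast]
    calc _ ≤ (N : ℝ) ^ n * (M * B * ((N : ℝ) ^ n)⁻¹) := by gcongr
      _ = _ := by field_simp

/-! ### Lattice norms and norms of polynomials -/

/-- A lattice norm on `ℂⁿ`: a norm that is monotone in the moduli of the coordinates. -/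
structure IsLatticeNorm {n : ℕ} (ν : (Fin n → ℂ) → ℝ) : Prop where
  eq_zero : ∀ z, ν z = 0 → z = 0
  smul : ∀ (a : ℂ) (z : Fin n → ℂ), ν (a • z) = ‖a‖ * ν z
  add_le : ∀ z w : Fin n → ℂ, ν (z + w) ≤ ν z + ν w
  mono : ∀ z w : Fin n → ℂ, (∀ j, ‖z j‖ ≤ ‖w j‖) → ν z ≤ ν w

namespace IsLatticeNorm

variable {n : ℕ} {ν : (Fin n → ℂ) → ℝ}

lemma zero (h : IsLatticeNorm ν) : ν 0 = 0 := by simpa using h.smul 0 0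

lemma nonneg (h : IsLatticeNorm ν) (z : Fin n → ℂ) : 0 ≤ ν z := by
  rw [← h.zero]; exact h.mono _ _ fun j => by simp

lemma congr (h : IsLatticeNorm ν) {z w : Fin n → ℂ} (hzw : ∀ j, ‖z j‖ = ‖w j‖) : ν z = ν w :=
  le_antisymm (h.mono _ _ fun j => (hzw j).le) (h.mono _ _ fun j => (hzw j).ge)

lemma pos (h : IsLatticeNorm ν) {z : Fin n → ℂ} (hz : z ≠ 0) : 0 < ν z :=
  lt_of_le_of_ne (h.nonneg z) fun h0 => hz (h.eq_zero z h0.symm)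

lemma single_pos (h : IsLatticeNorm ν) (k : Fin n) : 0 < ν (Pi.single k 1) :=
  h.pos (by simp)

lemma coord_le (h : IsLatticeNorm ν) (z : Fin n → ℂ) (k : Fin n) :
    ‖z k‖ ≤ ν z / ν (Pi.single k 1) := by
  rw [le_div_iff₀ (h.single_pos k), ← h.smul]
  refine h.mono _ _ fun j => ?_
  by_cases hj : j = k
  · subst hj; simp
  · simp [hj]

lemma exists_bound (h : IsLatticeNorm ν) (I : Finset (Fin n → ℕ)) (c : (Fin n → ℕ) → ℂ) :
    ∃ C, ∀ z, ν z ≤ 1 → ‖∑ α ∈ I, c α * ∏ j, z j ^ α j‖ ≤ C := by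
  refine ⟨∑ α ∈ I, ‖c α‖ * ∏ j, (1 / ν (Pi.single j 1)) ^ α j, fun z hz => ?_⟩
  refine (norm_sum_le _ _).trans (Finset.sum_le_sum fun α _ => ?_)
  rw [norm_mul, norm_prod]
  refine mul_le_mul_of_nonneg_left (Finset.prod_le_prod (fun _ _ => norm_nonneg _)
    fun j _ => ?_) (norm_nonneg _)
  rw [norm_pow]
  refine pow_le_pow_left₀ (norm_nonneg _) ((h.coord_le z j).trans ?_) _
  have := h.single_pos j
  gcongr

lemma le_polNorm (h : IsLatticeNorm ν) (I : Finset (Fin n → ℕ)) (c : (Fin n → ℕ) → ℂ)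
    {z : Fin n → ℂ} (hz : ν z ≤ 1) : ‖∑ α ∈ I, c α * ∏ j, z j ^ α j‖ ≤ polNorm n ν I c := by
  obtain ⟨C, hC⟩ := h.exists_bound I c
  refine le_csSup ⟨C, ?_⟩ ⟨z, hz, rfl⟩
  rintro t ⟨y, hy, rfl⟩
  exact hC y hy

lemma polNorm_le (h : IsLatticeNorm ν) (I : Finset (Fin n → ℕ)) (c : (Fin n → ℕ) → ℂ) {C : ℝ}
    (hC : ∀ z, ν z ≤ 1 → ‖∑ α ∈ I, c α * ∏ j, z j ^ α j‖ ≤ C) : polNorm n ν I c ≤ C := by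
  refine csSup_le ⟨_, 0, by rw [h.zero]; exact zero_le_one, rfl⟩ ?_
  rintro t ⟨y, hy, rfl⟩
  exact hC y hy

lemma polNorm_nonneg (h : IsLatticeNorm ν) (I : Finset (Fin n → ℕ)) (c : (Fin n → ℕ) → ℂ) :
    0 ≤ polNorm n ν I c :=
  (norm_nonneg _).trans (h.le_polNorm I c (z := 0) (by rw [h.zero]; exact zero_le_one))

lemma exists_unit (h : IsLatticeNorm ν) (hn : 0 < n) :
    ∃ x : Fin n → ℂ, ν x = 1 ∧ ∀ j, x j ≠ 0 := by
  have hne : (fun _ : Fin n => (1 : ℂ)) ≠ 0 := fun h0 => by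
    have := congrFun h0 ⟨0, hn⟩; simp at this
  have hp := h.pos hne
  refine ⟨((ν fun _ => 1)⁻¹ : ℂ) • fun _ => (1 : ℂ), ?_, fun j => ?_⟩
  · rw [h.smul, norm_inv, Complex.norm_real, Real.norm_of_nonneg hp.le, inv_mul_cancel₀ hp.ne']
  · simp [hp.ne']

end IsLatticeNorm

lemma monomial_smul {n m : ℕ} {α : Fin n → ℕ} (hα : α ∈ homIdx m n) (t : ℂ) (z : Fin n → ℂ) :
    ∏ j, (t • z) j ^ α j = t ^ m * ∏ j, z j ^ α j := by
  simp only [Pi.smul_apply, smul_eq_mul, mul_pow, Finset.prod_mul_distrib]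
  rw [Finset.prod_pow_eq_pow_sum, mem_homIdx.mp hα]

lemma hom_smul {n m : ℕ} {I : Finset (Fin n → ℕ)} (hI : I ⊆ homIdx m n) (c : (Fin n → ℕ) → ℂ)
    (t : ℂ) (z : Fin n → ℂ) : ∑ α ∈ I, c α * ∏ j, (t • z) j ^ α j =
      t ^ m * ∑ α ∈ I, c α * ∏ j, z j ^ α j := by
  rw [Finset.mul_sum]
  refine Finset.sum_congr rfl fun α hα => ?_
  rw [monomial_smul (hI hα)]; ring

namespace IsLatticeNorm

variable {n m : ℕ} {ν : (Fin n → ℂ) → ℝ} {I : Finset (Fin n → ℕ)}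

lemma exists_normalize (h : IsLatticeNorm ν) {z : Fin n → ℂ} (hz : z ≠ 0) :
    ∃ s : Fin n → ℂ, ν s = 1 ∧ z = (ν z : ℂ) • s := by
  have hp := h.pos hz
  refine ⟨((ν z : ℂ)⁻¹) • z, ?_, ?_⟩
  · rw [h.smul, norm_inv, Complex.norm_real, Real.norm_of_nonneg hp.le, inv_mul_cancel₀ hp.ne']
  · rw [smul_smul, mul_inv_cancel₀ (by exact_mod_cast hp.ne'), one_smul]

/-- Homogeneity extends a bound on the unit sphere to all of `ℂⁿ`. -/
lemma norm_hom_le (h : IsLatticeNorm ν) (hI : I ⊆ homIdx m n) (hm : m ≠ 0)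
    (c : (Fin n → ℕ) → ℂ) {C : ℝ}
    (hC : ∀ s, ν s = 1 → ‖∑ α ∈ I, c α * ∏ j, s j ^ α j‖ ≤ C) (z : Fin n → ℂ) :
    ‖∑ α ∈ I, c α * ∏ j, z j ^ α j‖ ≤ ν z ^ m * C := by
  by_cases hz : z = 0
  · have := hom_smul hI c 0 z
    rw [zero_smul, zero_pow hm, zero_mul] at this
    subst hz
    rw [this, h.zero, zero_pow hm]; simp
  · obtain ⟨s, hs, hzs⟩ := h.exists_normalize hz
    have e : ‖∑ α ∈ I, c α * ∏ j, z j ^ α j‖ = ν z ^ m * ‖∑ α ∈ I, c α * ∏ j, s j ^ α j‖ := by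
      conv_lhs => rw [hzs]
      rw [hom_smul hI, norm_mul, norm_pow, Complex.norm_real, Real.norm_of_nonneg (h.nonneg z)]
    rw [e]
    exact mul_le_mul_of_nonneg_left (hC s hs) (pow_nonneg (h.nonneg z) _)

lemma polNorm_le_of_sphere (h : IsLatticeNorm ν) (hI : I ⊆ homIdx m n) (hm : m ≠ 0)
    (c : (Fin n → ℕ) → ℂ) {C : ℝ} (hC0 : 0 ≤ C)
    (hC : ∀ s, ν s = 1 → ‖∑ α ∈ I, c α * ∏ j, s j ^ α j‖ ≤ C) : polNorm n ν I c ≤ C := by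
  refine h.polNorm_le I c fun z hz => (h.norm_hom_le hI hm c hC z).trans ?_
  exact mul_le_of_le_one_left hC0 (pow_le_one₀ (h.nonneg z) hz)

/-- The Cauchy estimate for the coefficients, by averaging over the torus orbit of `x`. -/
lemma coeff_le (h : IsLatticeNorm ν) (I : Finset (Fin n → ℕ)) (c : (Fin n → ℕ) → ℂ)
    {x : Fin n → ℂ} (hx : ν x ≤ 1) {β : Fin n → ℕ} (hβ : β ∈ I) :
    ‖c β‖ * ∏ j, ‖x j‖ ^ β j ≤ polNorm n ν I c := by
  set N := (∑ α ∈ I, ∑ j, α j) + 1 with hN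
  have hlt : ∀ α ∈ I, ∀ j, α j < N := fun α hα j => by
    have h1 := Finset.single_le_sum (f := α) (fun _ _ => Nat.zero_le _) (Finset.mem_univ j)
    have h2 := Finset.single_le_sum (f := fun α : Fin n → ℕ => ∑ j, α j)
      (fun _ _ => Nat.zero_le _) hα
    omega
  have hN0 : 0 < N := by omega
  have hNR : (0 : ℝ) < (N : ℝ) ^ n := by positivity
  have key := grid_coeff n N hN0 I hlt c x β hβ
  have e : ‖c β‖ * ∏ j, ‖x j‖ ^ β j = ‖c β * ∏ j, x j ^ β j‖ := by
    simp [norm_prod]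
  rw [e, ← key, norm_mul, norm_inv, norm_pow, Complex.norm_natCast, inv_mul_le_iff₀ hNR]
  refine (norm_sum_le _ _).trans ((Finset.sum_le_card_nsmul _ _ (polNorm n ν I c) ?_).trans ?_)
  · intro w _
    rw [norm_mul, RCLike.norm_conj, norm_grid_monomial, mul_one]
    refine h.le_polNorm I c ?_
    rw [h.congr (w := x)]
    · exact hx
    · intro j; rw [norm_mul, norm_gridPt, one_mul]
  · simp

lemma polNorm_smul (h : IsLatticeNorm ν) (I : Finset (Fin n → ℕ)) (c : (Fin n → ℕ) → ℂ) (t : ℂ) :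
    polNorm n ν I (fun α => t * c α) ≤ ‖t‖ * polNorm n ν I c := by
  refine h.polNorm_le _ _ fun z hz => ?_
  have : ∑ α ∈ I, t * c α * ∏ j, z j ^ α j = t * ∑ α ∈ I, c α * ∏ j, z j ^ α j := by
    rw [Finset.mul_sum]; exact Finset.sum_congr rfl fun _ _ => mul_assoc _ _ _
  rw [this, norm_mul]
  exact mul_le_mul_of_nonneg_left (h.le_polNorm _ _ hz) (norm_nonneg _)

/-- On a finite index set the coefficients, and hence every subpolynomial, are controlled by the
norm of the polynomial. -/
lemma bddAbove_coeffProj (h : IsLatticeNorm ν) (hn : 0 < n) {J : Finset (Fin n → ℕ)}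
    (hJ : J ⊆ homIdx m n) : BddAbove {t : ℝ | ∃ c : (Fin n → ℕ) → ℂ,
      polNorm n ν (homIdx m n) c ≤ 1 ∧ t = polNorm n ν J c} := by
  obtain ⟨x, hx, hx0⟩ := h.exists_unit hn
  refine ⟨∑ α ∈ J, (∏ j, ‖x j‖ ^ α j)⁻¹ * ∏ j, (1 / ν (Pi.single j 1)) ^ α j, ?_⟩
  rintro t ⟨c, hc, rfl⟩
  refine h.polNorm_le _ _ fun z hz => ?_
  refine (norm_sum_le _ _).trans (Finset.sum_le_sum fun α hα => ?_)
  rw [norm_mul, norm_prod]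
  have hpos : 0 < ∏ j, ‖x j‖ ^ α j :=
    Finset.prod_pos fun j _ => pow_pos (norm_pos_iff.mpr (hx0 j)) _
  refine mul_le_mul ?_ (Finset.prod_le_prod (fun _ _ => norm_nonneg _) fun j _ => ?_)
    (Finset.prod_nonneg fun _ _ => norm_nonneg _) (inv_nonneg.mpr hpos.le)
  · rw [← one_div, le_div_iff₀ hpos]
    exact (h.coeff_le _ c hx.le (hJ hα)).trans hc
  · rw [norm_pow]
    refine pow_le_pow_left₀ (norm_nonneg _) ((h.coord_le z j).trans ?_) _
    have := h.single_pos j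
    gcongr

lemma coeffProjNorm_nonneg (h : IsLatticeNorm ν) (J : Finset (Fin n → ℕ)) :
    0 ≤ coeffProjNorm n m ν J := by
  refine Real.sSup_nonneg ?_
  rintro t ⟨c, _, rfl⟩
  exact h.polNorm_nonneg J c

lemma polNorm_le_coeffProj (h : IsLatticeNorm ν) (hn : 0 < n) {J : Finset (Fin n → ℕ)}
    (hJ : J ⊆ homIdx m n) (c : (Fin n → ℕ) → ℂ) :
    polNorm n ν J c ≤ coeffProjNorm n m ν J * polNorm n ν (homIdx m n) c := by
  rcases (h.polNorm_nonneg (homIdx m n) c).eq_or_lt with h0 | hp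
  · obtain ⟨x, hx, hx0⟩ := h.exists_unit hn
    rw [← h0, mul_zero]
    refine h.polNorm_le _ _ fun z _ => le_of_eq ?_
    rw [norm_eq_zero]
    refine Finset.sum_eq_zero fun α hα => ?_
    have hc := h.coeff_le (homIdx m n) c hx.le (hJ hα)
    have hpos : 0 < ∏ j, ‖x j‖ ^ α j :=
      Finset.prod_pos fun j _ => pow_pos (norm_pos_iff.mpr (hx0 j)) _
    rw [← h0] at hc
    have : ‖c α‖ ≤ 0 := by
      by_contra hcon
      push Not at hcon
      exact absurd hc (not_le.mpr (mul_pos hcon hpos))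
    rw [norm_le_zero_iff.mp this, zero_mul]
  · set p := polNorm n ν (homIdx m n) c with hpdef
    have h1 : polNorm n ν J (fun α => (p : ℂ)⁻¹ * c α) ≤ coeffProjNorm n m ν J := by
      refine le_csSup (h.bddAbove_coeffProj hn hJ) ⟨_, ?_, rfl⟩
      refine (h.polNorm_smul _ c _).trans ?_
      rw [norm_inv, Complex.norm_real, Real.norm_of_nonneg hp.le, inv_mul_cancel₀ hp.ne']
    have h2 := h.polNorm_smul J (fun α => (p : ℂ)⁻¹ * c α) (p : ℂ)
    rw [Complex.norm_real, Real.norm_of_nonneg hp.le] at h2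
    have e : (fun α => (p : ℂ) * ((p : ℂ)⁻¹ * c α)) = c := by
      funext α; rw [mul_inv_cancel_left₀ (by exact_mod_cast hp.ne')]
    rw [e] at h2
    calc _ ≤ p * polNorm n ν J (fun α => (p : ℂ)⁻¹ * c α) := h2
      _ ≤ p * coeffProjNorm n m ν J := by gcongr
      _ = _ := mul_comm _ _

end IsLatticeNorm

/-! ### The Cauchy estimate for the polar form -/

/-- The `k`-th unit multi-index. -/
def eIdx {n : ℕ} (k : Fin n) : Fin n → ℕ := fun j => if j = k then 1 else 0

lemma monomial_add_eIdx {n : ℕ} (z : Fin n → ℂ) (β : Fin n → ℕ) (k : Fin n) :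
    ∏ j, z j ^ (β + eIdx k) j = z k * ∏ j, z j ^ β j := by
  simp only [Pi.add_apply, pow_add, Finset.prod_mul_distrib, eIdx]
  rw [mul_comm]
  congr 1
  rw [Finset.prod_eq_single k] <;> simp +contextual

lemma sub_add_eIdx {n : ℕ} {α : Fin n → ℕ} {k : Fin n} (h : α k ≠ 0) : α - eIdx k + eIdx k = α := by
  funext j
  simp only [Pi.add_apply, Pi.sub_apply, eIdx]
  split_ifs with hj
  · subst hj; omega
  · omega

lemma add_sub_eIdx {n : ℕ} (β : Fin n → ℕ) (k : Fin n) : β + eIdx k - eIdx k = β := by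
  funext j; simp

lemma add_eIdx_mem {n d : ℕ} {β : Fin n → ℕ} (k : Fin n) :
    β + eIdx k ∈ homIdx (d + 1) n ↔ β ∈ homIdx d n := by
  rw [mem_homIdx, mem_homIdx]
  simp [Finset.sum_add_distrib, eIdx]

lemma sub_eIdx_mem {n d : ℕ} {α : Fin n → ℕ} (hα : α ∈ homIdx (d + 1) n) {k : Fin n}
    (h : α k ≠ 0) : α - eIdx k ∈ homIdx d n := by
  rwa [← add_eIdx_mem k, sub_add_eIdx h]

/-- Reindexing along `β ↦ β + e_k`. -/
lemma sum_shift {n d : ℕ} {M : Type*} [AddCommMonoid M] {J : Finset (Fin n → ℕ)}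
    (hJ : J ⊆ homIdx (d + 1) n) (k : Fin n) (G : (Fin n → ℕ) → M) :
    ∑ α ∈ J, (if α k ≠ 0 then G (α - eIdx k) else 0) =
      ∑ β ∈ homIdx d n, if β + eIdx k ∈ J then G β else 0 := by
  rw [← Finset.sum_filter, ← Finset.sum_filter]
  refine Finset.sum_bij' (fun α _ => α - eIdx k) (fun β _ => β + eIdx k) ?_ ?_ ?_ ?_ ?_
  · intro α hα
    rw [Finset.mem_filter] at hα ⊢
    exact ⟨sub_eIdx_mem (hJ hα.1) hα.2, by rw [sub_add_eIdx hα.2]; exact hα.1⟩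
  · intro β hβ
    rw [Finset.mem_filter] at hβ ⊢
    exact ⟨hβ.2, by simp [eIdx]⟩
  · intro α hα
    rw [Finset.mem_filter] at hα
    exact sub_add_eIdx hα.2
  · intro β _; exact add_sub_eIdx β k
  · intro α _; rfl

lemma hasDerivAt_monomial {n : ℕ} (s y : Fin n → ℂ) (α : Fin n → ℕ) :
    HasDerivAt (fun t : ℂ => ∏ j, (s + t • y) j ^ α j)
      (∑ k, y k * (if α k ≠ 0 then (α k : ℂ) * ∏ j, s j ^ (α - eIdx k) j else 0)) 0 := by
  have h := HasDerivAt.fun_finsetProd (u := (Finset.univ : Finset (Fin n)))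
    (f := fun j (t : ℂ) => (s j + t * y j) ^ α j)
    (f' := fun j => (α j : ℂ) * (s j + 0 * y j) ^ (α j - 1) * (1 * y j)) (x := 0)
    (fun j _ => (((hasDerivAt_id (0 : ℂ)).mul_const (y j)).const_add (s j)).fun_pow (α j))
  refine h.congr_deriv (Finset.sum_congr rfl fun k _ => Eq.symm ?_)
  simp only [zero_mul, add_zero, one_mul, smul_eq_mul]
  split_ifs with hk
  · rw [← Finset.mul_prod_erase Finset.univ _ (Finset.mem_univ k)]
    have : ∏ j ∈ Finset.univ.erase k, s j ^ (α - eIdx k) j =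
        ∏ j ∈ Finset.univ.erase k, s j ^ α j := by
      refine Finset.prod_congr rfl fun j hj => ?_
      simp [eIdx, (Finset.mem_erase.mp hj).1]
    rw [this]
    simp only [Pi.sub_apply, eIdx, if_true]
    ring
  · push Not at hk
    simp [hk]

/-- The coefficients of the partial derivative `m⁻¹ ∂_k P`, where `P` has degree `m = d + 1`. -/
noncomputable def dCoeff {n : ℕ} (d : ℕ) (J : Finset (Fin n → ℕ)) (c : (Fin n → ℕ) → ℂ)
    (k : Fin n) (β : Fin n → ℕ) : ℂ :=
  if β + eIdx k ∈ J then ((β k : ℂ) + 1) / ((d : ℂ) + 1) * c (β + eIdx k) else 0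

/-- The Cauchy estimate for the polar form `P̌(s,…,s,y) = m⁻¹ ∑ y_k ∂_k P(s)`, with the radius
`1/m`: the constant is `(1 + 1/m)^m ≤ e`. -/
lemma IsLatticeNorm.polar_le {n d : ℕ} {ν : (Fin n → ℂ) → ℝ} (h : IsLatticeNorm ν)
    {J : Finset (Fin n → ℕ)} (hJ : J ⊆ homIdx (d + 1) n) (c : (Fin n → ℕ) → ℂ)
    {s y : Fin n → ℂ} (hs : ν s ≤ 1) (hy : ν y ≤ 1) :
    ‖∑ k, y k * ∑ β ∈ homIdx d n, dCoeff d J c k β * ∏ j, s j ^ β j‖ ≤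
      Real.exp 1 * polNorm n ν J c := by
  set C := polNorm n ν J c with hC
  have hC0 : 0 ≤ C := h.polNorm_nonneg J c
  have hm : (0 : ℝ) < (d : ℝ) + 1 := by positivity
  have hder : HasDerivAt (fun t : ℂ => ∑ α ∈ J, c α * ∏ j, (s + t • y) j ^ α j)
      (∑ α ∈ J, c α * ∑ k, y k * (if α k ≠ 0 then (α k : ℂ) * ∏ j, s j ^ (α - eIdx k) j else 0))
      0 :=
    HasDerivAt.fun_sum fun α _ => (hasDerivAt_monomial s y α).const_mul (c α)
  have heq : ((d : ℂ) + 1) * ∑ k, y k * ∑ β ∈ homIdx d n, dCoeff d J c k β * ∏ j, s j ^ β j =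
      ∑ α ∈ J, c α * ∑ k, y k *
        (if α k ≠ 0 then (α k : ℂ) * ∏ j, s j ^ (α - eIdx k) j else 0) := by
    have hd : (d : ℂ) + 1 ≠ 0 := by exact_mod_cast hm.ne'
    simp_rw [Finset.mul_sum (s := Finset.univ)]
    rw [Finset.sum_comm]
    refine Finset.sum_congr rfl fun k _ => ?_
    have e1 : ∀ α ∈ J, c α * (y k * (if α k ≠ 0 then (α k : ℂ) * ∏ j, s j ^ (α - eIdx k) j else 0))
        = if α k ≠ 0 then (fun β : Fin n → ℕ => y k * (((β k : ℂ) + 1) * c (β + eIdx k) *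
          ∏ j, s j ^ β j)) (α - eIdx k) else 0 := by
      intro α _
      split_ifs with hk
      · simp only [sub_add_eIdx hk]
        have : (((α - eIdx k) k : ℕ) : ℂ) + 1 = α k := by
          have : (α - eIdx k) k + 1 = α k := by simp [eIdx]; omega
          exact_mod_cast this
        rw [this]; ring
      · simp
    rw [Finset.sum_congr rfl e1, sum_shift hJ k (fun β : Fin n → ℕ => y k * (((β k : ℂ) + 1) *
      c (β + eIdx k) * ∏ j, s j ^ β j)), Finset.mul_sum, Finset.mul_sum]
    refine Finset.sum_congr rfl fun β _ => ?_
    rw [dCoeff]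
    split_ifs
    · field_simp
    · simp
  have hbd : ∀ t ∈ Metric.sphere (0 : ℂ) (1 / ((d : ℝ) + 1)),
      ‖∑ α ∈ J, c α * ∏ j, (s + t • y) j ^ α j‖ ≤ (1 + 1 / ((d : ℝ) + 1)) ^ (d + 1) * C := by
    intro t ht
    rw [mem_sphere_zero_iff_norm] at ht
    refine (h.norm_hom_le hJ (Nat.succ_ne_zero d) c (fun s hs => h.le_polNorm J c hs.le) _).trans ?_
    refine mul_le_mul_of_nonneg_right (pow_le_pow_left₀ (h.nonneg _) ?_ _) hC0
    refine (h.add_le _ _).trans (add_le_add hs ?_)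
    rw [h.smul, ht]
    exact mul_le_of_le_one_right (by positivity) hy
  have hdiff : Differentiable ℂ (fun t : ℂ => ∑ α ∈ J, c α * ∏ j, (s + t • y) j ^ α j) := by
    simp only [Pi.add_apply, Pi.smul_apply, smul_eq_mul]
    fun_prop
  have hcau := Complex.norm_deriv_le_of_forall_mem_sphere_norm_le (by positivity)
    hdiff.diffContOnCl hbd
  rw [hder.deriv, ← heq, norm_mul] at hcau
  have hnd : ‖(d : ℂ) + 1‖ = (d : ℝ) + 1 := by
    rw [← Nat.cast_succ, Complex.norm_natCast]; push_cast; rfl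
  rw [hnd, div_div_eq_mul_div, div_one, mul_comm, mul_le_mul_iff_left₀ hm] at hcau
  refine hcau.trans (mul_le_mul_of_nonneg_right ?_ hC0)
  have h1 : 1 + 1 / ((d : ℝ) + 1) ≤ Real.exp (1 / ((d : ℝ) + 1)) := by
    rw [add_comm]; exact Real.add_one_le_exp _
  refine (pow_le_pow_left₀ (by positivity) h1 _).trans (le_of_eq ?_)
  rw [← Real.exp_nat_mul]
  congr 1
  push_cast
  field_simp

/-- Averaging the Cauchy estimate over torus rotations, with the phases of `y` adapted. -/
lemma IsLatticeNorm.avg_polar_le {n d : ℕ} {ν : (Fin n → ℂ) → ℝ} (h : IsLatticeNorm ν)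
    {J : Finset (Fin n → ℕ)} (hJ : J ⊆ homIdx (d + 1) n) (c : (Fin n → ℕ) → ℂ)
    {s y : Fin n → ℂ} (hs : ν s ≤ 1) (hy : ν y ≤ 1) (N : ℕ) (hN : 0 < N) :
    ∑ k, ‖y k‖ * (((N : ℝ) ^ n)⁻¹ * ∑ w : Fin n → Fin N,
      ‖∑ β ∈ homIdx d n, dCoeff d J c k β * (∏ j, s j ^ β j) * ∏ j, gridPt n N w j ^ β j‖) ≤
      Real.exp 1 * polNorm n ν J c := by
  have hNR : (0 : ℝ) < (N : ℝ) ^ n := by positivity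
  have e : ∑ k, ‖y k‖ * (((N : ℝ) ^ n)⁻¹ * ∑ w : Fin n → Fin N,
      ‖∑ β ∈ homIdx d n, dCoeff d J c k β * (∏ j, s j ^ β j) * ∏ j, gridPt n N w j ^ β j‖) =
      ((N : ℝ) ^ n)⁻¹ * ∑ w : Fin n → Fin N, ∑ k, ‖y k‖ *
      ‖∑ β ∈ homIdx d n, dCoeff d J c k β * (∏ j, s j ^ β j) * ∏ j, gridPt n N w j ^ β j‖ := by
    rw [Finset.sum_comm, Finset.mul_sum]
    refine Finset.sum_congr rfl fun k _ => ?_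
    rw [← Finset.mul_sum]; ring
  rw [e, inv_mul_le_iff₀ hNR]
  refine (Finset.sum_le_card_nsmul _ _ (Real.exp 1 * polNorm n ν J c) fun w _ => ?_).trans
    (by simp)
  set f : Fin n → ℂ := fun k => ∑ β ∈ homIdx d n, dCoeff d J c k β *
    (∏ j, s j ^ β j) * ∏ j, gridPt n N w j ^ β j with hf
  -- the unimodular phases make every summand nonnegative
  have hph : ∀ a : ℂ, ∃ u : ℂ, ‖u‖ ≤ 1 ∧ u * a = (‖a‖ : ℂ) := by
    intro a
    by_cases ha : a = 0
    · exact ⟨0, by simp, by simp [ha]⟩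
    · refine ⟨(‖a‖ : ℂ) / a, by simp [ha], div_mul_cancel₀ _ ha⟩
  choose u hu1 hu2 using hph
  have hy' : ν (fun k => (‖y k‖ : ℂ) * u (f k)) ≤ 1 := by
    refine (h.mono _ y fun j => ?_).trans hy
    rw [norm_mul, Complex.norm_real, norm_norm]
    exact mul_le_of_le_one_right (norm_nonneg _) (hu1 _)
  have hs' : ν (fun j => s j * gridPt n N w j) ≤ 1 := by
    rw [h.congr (w := s)]
    · exact hs
    · intro j; rw [norm_mul, norm_gridPt, mul_one]
  have hp := h.polar_le hJ c hs' hy'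
  have e2 : ∀ k, ∑ β ∈ homIdx d n, dCoeff d J c k β * ∏ j, (s j * gridPt n N w j) ^ β j = f k := by
    intro k
    refine Finset.sum_congr rfl fun β _ => ?_
    simp_rw [mul_pow, Finset.prod_mul_distrib]; ring
  simp_rw [e2, mul_assoc, hu2] at hp
  refine le_trans (le_of_eq ?_) hp
  have : ∑ k, (‖y k‖ : ℂ) * (‖f k‖ : ℂ) = ((∑ k, ‖y k‖ * ‖f k‖ : ℝ) : ℂ) := by push_cast; rfl
  rw [this, Complex.norm_real, Real.norm_of_nonneg (by positivity)]

/-! ### Factorization through a projection -/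

lemma flatIdx_subset {n d : ℕ} (J : Finset (Fin n → ℕ)) : flatIdx n (d + 1) J ⊆ homIdx d n :=
  Finset.filter_subset _ _

lemma sub_eIdx_mem_flatIdx {n d : ℕ} {J : Finset (Fin n → ℕ)} (hJ : J ⊆ homIdx (d + 1) n)
    {α : Fin n → ℕ} (hα : α ∈ J) {k : Fin n} (hk : α k ≠ 0) :
    α - eIdx k ∈ flatIdx n (d + 1) J := by
  classical
  rw [flatIdx, Finset.mem_filter]
  refine ⟨sub_eIdx_mem (hJ hα) hk, k, ?_⟩
  have := sub_add_eIdx hk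
  unfold eIdx at this ⊢
  rw [this]; exact hα

/-- For a fixed `P` and signs `ε`, the two Khinchine steps produce functions `h_{s,k}` on the grid
whose Fourier data are the signed coefficients of `m⁻¹ ∂_k P` and which stay bounded by
`e 2^m ‖P‖` in the dual lattice norm, uniformly on the ball. -/
lemma IsLatticeNorm.exists_lift {n d N : ℕ} {ν : (Fin n → ℂ) → ℝ} (h : IsLatticeNorm ν)
    {J : Finset (Fin n → ℕ)} (hJ : J ⊆ homIdx (d + 1) n) (hN : d < N)
    (hK : ∀ c : (Fin n → ℕ) → ℂ, √(∑ β ∈ homIdx d n, ‖c β‖ ^ 2) ≤ √(2 ^ (d + 1)) *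
      (((N : ℝ) ^ n)⁻¹ * ∑ w : Fin n → Fin N,
        ‖∑ β ∈ homIdx d n, c β * ∏ j, gridPt n N w j ^ β j‖))
    (c ε : (Fin n → ℕ) → ℂ) (hε : ∀ α ∈ J, ‖ε α‖ = 1) :
    ∃ H : (Fin n → ℂ) → Fin n → (Fin n → Fin N) → ℂ,
      (∀ s k, ∀ β ∈ homIdx d n, ((N : ℂ) ^ n)⁻¹ * ∑ w, H s k w * ∏ j, gridPt n N w j ^ β j =
        ε (β + eIdx k) * (dCoeff d J c k β * ∏ j, s j ^ β j)) ∧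
      ∀ s y w, ν s ≤ 1 → ν y ≤ 1 → ∑ k, ‖y k‖ * ‖H s k w‖ ≤
        2 ^ (d + 1) * (Real.exp 1 * polNorm n ν J c) := by
  have hdual := fun (s : Fin n → ℂ) (k : Fin n) => khinchine_dual n d N hN _ (Real.sqrt_nonneg _) hK
    (fun β => ε (β + eIdx k) * (dCoeff d J c k β * ∏ j, s j ^ β j))
  choose H hH1 hH2 using hdual
  refine ⟨H, hH1, fun s y w hs hy => ?_⟩
  have hb : ∀ k, ‖H s k w‖ ≤ 2 ^ (d + 1) * (((N : ℝ) ^ n)⁻¹ * ∑ w : Fin n → Fin N,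
      ‖∑ β ∈ homIdx d n, dCoeff d J c k β * (∏ j, s j ^ β j) * ∏ j, gridPt n N w j ^ β j‖) := by
    intro k
    have h1 : √(∑ β ∈ homIdx d n, ‖ε (β + eIdx k) * (dCoeff d J c k β * ∏ j, s j ^ β j)‖ ^ 2) ≤
        √(∑ β ∈ homIdx d n, ‖dCoeff d J c k β * ∏ j, s j ^ β j‖ ^ 2) := by
      refine Real.sqrt_le_sqrt (Finset.sum_le_sum fun β _ => pow_le_pow_left₀ (norm_nonneg _) ?_ 2)
      by_cases hβ : β + eIdx k ∈ J
      · rw [norm_mul, hε _ hβ, one_mul]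
      · simp [dCoeff, hβ]
    have h2 := hK fun β => dCoeff d J c k β * ∏ j, s j ^ β j
    refine (hH2 s k w).trans ((mul_le_mul_of_nonneg_left (h1.trans h2) (Real.sqrt_nonneg _)).trans
      (le_of_eq ?_))
    rw [← mul_assoc, Real.mul_self_sqrt (by positivity)]
  calc ∑ k, ‖y k‖ * ‖H s k w‖ ≤ ∑ k, ‖y k‖ * (2 ^ (d + 1) * (((N : ℝ) ^ n)⁻¹ *
        ∑ w : Fin n → Fin N, ‖∑ β ∈ homIdx d n, dCoeff d J c k β * (∏ j, s j ^ β j) *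
          ∏ j, gridPt n N w j ^ β j‖)) :=
        Finset.sum_le_sum fun k _ => mul_le_mul_of_nonneg_left (hb k) (norm_nonneg _)
    _ = 2 ^ (d + 1) * ∑ k, ‖y k‖ * (((N : ℝ) ^ n)⁻¹ *
        ∑ w : Fin n → Fin N, ‖∑ β ∈ homIdx d n, dCoeff d J c k β * (∏ j, s j ^ β j) *
          ∏ j, gridPt n N w j ^ β j‖) := by
        rw [Finset.mul_sum]; exact Finset.sum_congr rfl fun k _ => by ring
    _ ≤ _ := mul_le_mul_of_nonneg_left (h.avg_polar_le hJ c hs hy N (by omega)) (by positivity)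

/-- A bounded operator onto a space of polynomials reads off coefficients linearly. -/
lemma IsLatticeNorm.exists_coeffFunctional {n d : ℕ} {ν : (Fin n → ℂ) → ℝ} (h : IsLatticeNorm ν)
    (hn : 0 < n) {I : Finset (Fin n → ℕ)} (hI : I ⊆ homIdx d n)
    (Q : lp (fun _ : {z : Fin n → ℂ // ν z = 1} => ℂ) ∞ →L[ℂ]
      lp (fun _ : {z : Fin n → ℂ // ν z = 1} => ℂ) ∞)
    (hQ1 : ∀ f, Q f ∈ polyCopy n ν I) (hQ2 : ∀ f ∈ polyCopy n ν I, Q f = f) :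
    ∃ q : (Fin n → ℕ) → lp (fun _ : {z : Fin n → ℂ // ν z = 1} => ℂ) ∞ →ₗ[ℂ] ℂ,
      (∀ f s, (Q f) s = ∑ β ∈ I, q β f * ∏ j, (s : Fin n → ℂ) j ^ β j) ∧
      ∀ β ∈ I, ∀ f t, (∀ s : {z : Fin n → ℂ // ν z = 1}, f s = t * ∏ j, (s : Fin n → ℂ) j ^ β j) → q β f = t := by
  obtain ⟨x, hx, hx0⟩ := h.exists_unit hn
  set N := d + 1 with hN
  let σ : (Fin n → Fin N) → {z : Fin n → ℂ // ν z = 1} := fun v =>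
    ⟨fun j => gridPt n N v j * x j, by
      rw [h.congr (w := x)]
      · exact hx
      · intro j; rw [norm_mul, norm_gridPt, one_mul]⟩
  let q : (Fin n → ℕ) → lp (fun _ : {z : Fin n → ℂ // ν z = 1} => ℂ) ∞ →ₗ[ℂ] ℂ := fun β =>
    { toFun := fun f => (((N : ℂ) ^ n)⁻¹ * ∑ v, (Q f) (σ v) *
        (starRingEnd ℂ) (∏ j, gridPt n N v j ^ β j)) * (∏ j, x j ^ β j)⁻¹
      map_add' := fun f g => by
        simp only [map_add, lp.coeFn_add, Pi.add_apply, add_mul, Finset.sum_add_distrib, mul_add]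
      map_smul' := fun a f => by
        simp only [map_smul, lp.coeFn_smul, Pi.smul_apply, smul_eq_mul, RingHom.id_apply,
          mul_assoc a, ← Finset.mul_sum]
        ring }
  have hqc : ∀ f (c : (Fin n → ℕ) → ℂ),
      (∀ s, (Q f) s = ∑ β ∈ I, c β * ∏ j, (s : Fin n → ℂ) j ^ β j) → ∀ β ∈ I, q β f = c β := by
    intro f c hc β hβ
    have hg := grid_coeff n N (by omega) I
      (fun α hα j => Nat.lt_succ_of_le (le_of_mem_homIdx (hI hα) j)) c x β hβ
    have hp : ∏ j, x j ^ β j ≠ 0 := Finset.prod_ne_zero_iff.mpr fun j _ => pow_ne_zero _ (hx0 j)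
    change (((N : ℂ) ^ n)⁻¹ * ∑ v, (Q f) (σ v) *
        (starRingEnd ℂ) (∏ j, gridPt n N v j ^ β j)) * (∏ j, x j ^ β j)⁻¹ = c β
    simp_rw [hc]
    rw [hg, mul_inv_cancel_right₀ hp]
  refine ⟨q, fun f s => ?_, fun β hβ f t hf => ?_⟩
  · obtain ⟨c, hc⟩ := hQ1 f
    rw [hc s]
    exact Finset.sum_congr rfl fun β hβ => by rw [hqc f c hc β hβ]
  · have hfs : ∀ s, f s = ∑ γ ∈ I, (Pi.single β t : (Fin n → ℕ) → ℂ) γ *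
        ∏ j, (s : Fin n → ℂ) j ^ γ j := by
      intro s
      rw [hf s, Finset.sum_eq_single β]
      · simp
      · intro γ _ hγ; simp [hγ]
      · exact fun hc => absurd hβ hc
    have := hqc f (Pi.single β t) (by rw [hQ2 f ⟨_, hfs⟩]; exact hfs) β hβ
    simpa using this

/-- The unconditionality estimate for one projection `Q` onto the polynomials supported on `J♭`. -/
lemma IsLatticeNorm.uncond_le {n d : ℕ} {ν : (Fin n → ℂ) → ℝ} (h : IsLatticeNorm ν)
    (hn : 0 < n) {J : Finset (Fin n → ℕ)} (hJ : J ⊆ homIdx (d + 1) n)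
    (Q : lp (fun _ : {z : Fin n → ℂ // ν z = 1} => ℂ) ∞ →L[ℂ]
      lp (fun _ : {z : Fin n → ℂ // ν z = 1} => ℂ) ∞)
    (hQ1 : ∀ f, Q f ∈ polyCopy n ν (flatIdx n (d + 1) J))
    (hQ2 : ∀ f ∈ polyCopy n ν (flatIdx n (d + 1) J), Q f = f)
    (c ε : (Fin n → ℕ) → ℂ) (hε : ∀ α ∈ J, ‖ε α‖ = 1) :
    polNorm n ν J (fun α => ε α * c α) ≤
      coeffProjNorm n (d + 1) ν J * (‖Q‖ * (2 ^ (d + 1) * (Real.exp 1 * polNorm n ν J c))) := by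
  classical
  obtain ⟨N, hN, hK⟩ := khinchine_grid n d (d + 1)
  obtain ⟨F, hF1, hF2⟩ := h.exists_lift hJ (by omega) hK c ε hε
  obtain ⟨q, hq1, hq2⟩ := h.exists_coeffFunctional hn (flatIdx_subset J) Q hQ1 hQ2
  set I := flatIdx n (d + 1) J with hI
  set K : ℝ := 2 ^ (d + 1) * (Real.exp 1 * polNorm n ν J c) with hKdef
  have hK0 : 0 ≤ K := by have := h.polNorm_nonneg J c; positivity
  have hN0 : 0 < N := by omega
  have hNR : (0 : ℝ) < (N : ℝ) ^ n := by positivity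
  have hNC : (N : ℂ) ^ n ≠ 0 := pow_ne_zero _ (Nat.cast_ne_zero.mpr hN0.ne')
  -- the functions `s ↦ conj (ζ_w)_k h_{s,k}(w)` as elements of `ℓ∞(S)`
  have hmem : ∀ k w, Memℓp (fun s : {z : Fin n → ℂ // ν z = 1} =>
      (starRingEnd ℂ) (gridPt n N w k) * F s k w) ∞ := by
    intro k w
    refine memℓp_infty ⟨K * ν (Pi.single k 1), ?_⟩
    rintro _ ⟨s, rfl⟩
    have hp := h.single_pos k
    have hy : ν (((ν (Pi.single k 1) : ℂ)⁻¹) • (Pi.single k 1 : Fin n → ℂ)) ≤ 1 := by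
      rw [h.smul, norm_inv, Complex.norm_real, Real.norm_of_nonneg hp.le, inv_mul_cancel₀ hp.ne']
    have h1 := hF2 s _ w s.2.le hy
    have h2 := (Finset.single_le_sum (f := fun k' =>
      ‖(((ν (Pi.single k 1) : ℂ)⁻¹) • (Pi.single k 1 : Fin n → ℂ)) k'‖ * ‖F s k' w‖)
      (fun _ _ => by positivity) (Finset.mem_univ k)).trans h1
    simp only [Pi.smul_apply, Pi.single_eq_same, smul_eq_mul, mul_one, norm_inv, Complex.norm_real,
      Real.norm_of_nonneg hp.le] at h2
    rw [inv_mul_le_iff₀ hp] at h2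
    beta_reduce
    rw [norm_mul, RCLike.norm_conj, norm_gridPt, one_mul, mul_comm K]
    exact h2
  let H : Fin n → (Fin n → Fin N) → lp (fun _ : {z : Fin n → ℂ // ν z = 1} => ℂ) ∞ :=
    fun k w => ⟨_, hmem k w⟩
  have hH : ∀ k w s, (H k w) s = (starRingEnd ℂ) (gridPt n N w k) * F s k w := fun _ _ _ => rfl
  let r : (Fin n → Fin N) → (Fin n → ℕ) → ℂ := fun w α =>
    ∑ k, if α k ≠ 0 then (if α - eIdx k ∈ I then q (α - eIdx k) (H k w) else 0) else 0
  have hR : ∀ (w : Fin n → Fin N) (z : Fin n → ℂ), ∑ α ∈ homIdx (d + 1) n, r w α * ∏ j, z j ^ α j =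
      ∑ k, z k * ∑ β ∈ I, q β (H k w) * ∏ j, z j ^ β j := by
    intro w z
    simp only [r, Finset.sum_mul]
    rw [Finset.sum_comm]
    refine Finset.sum_congr rfl fun k _ => ?_
    have e1 : ∀ α ∈ homIdx (d + 1) n,
        (if α k ≠ 0 then (if α - eIdx k ∈ I then q (α - eIdx k) (H k w) else 0) else 0) *
          ∏ j, z j ^ α j = if α k ≠ 0 then (fun β : Fin n → ℕ =>
            (if β ∈ I then q β (H k w) else 0) * (z k * ∏ j, z j ^ β j)) (α - eIdx k) else 0 := by
      intro α _
      split_ifs with hk hmem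
      · simp only [hmem, if_true]
        rw [← monomial_add_eIdx, sub_add_eIdx hk]
      · simp [hmem]
      · simp
    rw [Finset.sum_congr rfl e1, sum_shift subset_rfl k (fun β : Fin n → ℕ =>
            (if β ∈ I then q β (H k w) else 0) * (z k * ∏ j, z j ^ β j)), Finset.mul_sum]
    symm
    refine Finset.sum_subset_zero_on_sdiff (flatIdx_subset J) ?_ ?_
    · intro β hβ
      rw [if_neg (Finset.mem_sdiff.mp hβ).2]; simp
    · intro β hβ
      rw [if_pos ((add_eIdx_mem k).mpr (flatIdx_subset J hβ)), if_pos hβ]; ring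
  have hRn : ∀ w, polNorm n ν J (r w) ≤ coeffProjNorm n (d + 1) ν J * (‖Q‖ * K) := by
    intro w
    refine (h.polNorm_le_coeffProj hn hJ (r w)).trans
      (mul_le_mul_of_nonneg_left ?_ (h.coeffProjNorm_nonneg J))
    refine h.polNorm_le_of_sphere subset_rfl (Nat.succ_ne_zero d) _ (by positivity) fun s hs => ?_
    have e : ∑ k, s k * ∑ β ∈ I, q β (H k w) * ∏ j, s j ^ β j =
        (Q (∑ k, s k • H k w)) ⟨s, hs⟩ := by
      simp_rw [← hq1 (H _ w) ⟨s, hs⟩]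
      rw [map_sum, lp.coeFn_sum, Finset.sum_apply]
      exact Finset.sum_congr rfl fun k _ => by
        rw [map_smul, lp.coeFn_smul, Pi.smul_apply, smul_eq_mul]
    rw [hR, e]
    refine (lp.norm_apply_le_norm ENNReal.top_ne_zero _ _).trans ((Q.le_opNorm _).trans
      (mul_le_mul_of_nonneg_left (lp.norm_le_of_forall_le hK0 fun t => ?_) (norm_nonneg _)))
    rw [lp.coeFn_sum, Finset.sum_apply]
    refine (norm_sum_le _ _).trans (le_trans (le_of_eq (Finset.sum_congr rfl fun k _ => ?_))
      (hF2 t s w t.2.le hs.le))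
    rw [lp.coeFn_smul, Pi.smul_apply, hH, norm_smul, norm_mul, RCLike.norm_conj, norm_gridPt,
      one_mul]
  have havg : ∀ α ∈ J, ((N : ℂ) ^ n)⁻¹ * ∑ w, r w α * ∏ j, gridPt n N w j ^ α j = ε α * c α := by
    intro α hα
    have e0 : ((N : ℂ) ^ n)⁻¹ * ∑ w, r w α * ∏ j, gridPt n N w j ^ α j =
        ∑ k, if α k ≠ 0 then q (α - eIdx k)
          (((N : ℂ) ^ n)⁻¹ • ∑ w, (∏ j, gridPt n N w j ^ α j) • H k w) else 0 := by
      simp only [r, Finset.sum_mul, Finset.mul_sum]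
      rw [Finset.sum_comm]
      refine Finset.sum_congr rfl fun k _ => ?_
      split_ifs with hk hmem
      · simp only [map_smul, map_sum, smul_eq_mul, Finset.mul_sum]
        exact Finset.sum_congr rfl fun w _ => by ring
      · exact absurd (sub_eIdx_mem_flatIdx hJ hα hk) hmem
      · simp
    rw [e0]
    have e1 : ∀ k, (if α k ≠ 0 then q (α - eIdx k)
          (((N : ℂ) ^ n)⁻¹ • ∑ w, (∏ j, gridPt n N w j ^ α j) • H k w) else 0) =
        ε α * c α / ((d : ℂ) + 1) * α k := by
      intro k
      split_ifs with hk
      · refine hq2 _ (sub_eIdx_mem_flatIdx hJ hα hk) _ _ fun s => ?_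
        have hb := hF1 s k (α - eIdx k) (sub_eIdx_mem (hJ hα) hk)
        rw [dCoeff, sub_add_eIdx hk, if_pos hα] at hb
        have hcast : (((α - eIdx k) k : ℕ) : ℂ) + 1 = α k := by
          have : (α - eIdx k) k + 1 = α k := by simp [eIdx]; omega
          exact_mod_cast this
        rw [hcast] at hb
        have hmon : ∀ w, (∏ j, gridPt n N w j ^ α j) * (starRingEnd ℂ) (gridPt n N w k) =
            ∏ j, gridPt n N w j ^ (α - eIdx k) j := by
          intro w
          conv_lhs => rw [← sub_add_eIdx hk, monomial_add_eIdx]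
          have : gridPt n N w k * (starRingEnd ℂ) (gridPt n N w k) = 1 := by
            rw [Complex.mul_conj, Complex.normSq_eq_norm_sq, norm_gridPt]; simp
          rw [mul_right_comm, this, one_mul]
        calc _ = ((N : ℂ) ^ n)⁻¹ * ∑ w, F s k w * ∏ j, gridPt n N w j ^ (α - eIdx k) j := by
              rw [lp.coeFn_smul, Pi.smul_apply, lp.coeFn_sum, Finset.sum_apply, smul_eq_mul]
              congr 1
              refine Finset.sum_congr rfl fun w _ => ?_
              rw [lp.coeFn_smul, Pi.smul_apply, hH, smul_eq_mul, ← hmon]; ring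
          _ = _ := by rw [hb]; ring
      · push Not at hk; simp [hk]
    simp_rw [e1]
    rw [← Finset.mul_sum, ← Nat.cast_sum, mem_homIdx.mp (hJ hα)]
    have hd : (d : ℂ) + 1 ≠ 0 := by exact_mod_cast Nat.succ_ne_zero d
    push_cast
    field_simp
  refine h.polNorm_le _ _ fun x hx => ?_
  have hfin : ∑ α ∈ J, ε α * c α * ∏ j, x j ^ α j =
      ((N : ℂ) ^ n)⁻¹ * ∑ w, ∑ α ∈ J, r w α * ∏ j, (gridPt n N w j * x j) ^ α j := by
    rw [Finset.sum_comm, Finset.mul_sum]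
    refine Finset.sum_congr rfl fun α hα => ?_
    rw [← havg α hα, mul_assoc, Finset.sum_mul]
    congr 1
    refine Finset.sum_congr rfl fun w _ => ?_
    simp_rw [mul_pow, Finset.prod_mul_distrib]; ring
  rw [hfin, norm_mul, norm_inv, norm_pow, Complex.norm_natCast, inv_mul_le_iff₀ hNR]
  refine (norm_sum_le _ _).trans ((Finset.sum_le_card_nsmul _ _ _ fun w _ =>
    (h.le_polNorm J (r w) ?_).trans (hRn w)).trans (by simp))
  rw [h.congr (w := x)]
  · exact hx
  · intro j; rw [norm_mul, norm_gridPt, one_mul]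

/-! ### Existence of projections and the conclusion -/

/-- The polynomials form a finite-dimensional subspace of `ℓ∞(S)`, hence a complemented one. -/
lemma IsLatticeNorm.exists_projection {n : ℕ} {ν : (Fin n → ℂ) → ℝ} (h : IsLatticeNorm ν)
    (I : Finset (Fin n → ℕ)) :
    ∃ Q : lp (fun _ : {z : Fin n → ℂ // ν z = 1} => ℂ) ∞ →L[ℂ]
      lp (fun _ : {z : Fin n → ℂ // ν z = 1} => ℂ) ∞,
      (∀ f, Q f ∈ polyCopy n ν I) ∧ ∀ f ∈ polyCopy n ν I, Q f = f := by
  have hmem : ∀ c : (Fin n → ℕ) → ℂ, Memℓp (fun s : {z : Fin n → ℂ // ν z = 1} =>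
      ∑ α ∈ I, c α * ∏ j, (s : Fin n → ℂ) j ^ α j) ∞ := by
    intro c
    refine memℓp_infty ⟨polNorm n ν I c, ?_⟩
    rintro _ ⟨s, rfl⟩
    exact h.le_polNorm I c s.2.le
  let mono : (Fin n → ℕ) → lp (fun _ : {z : Fin n → ℂ // ν z = 1} => ℂ) ∞ := fun α =>
    if hα : α ∈ I then ⟨_, hmem (Pi.single α 1)⟩ else 0
  have hmono : ∀ α ∈ I, ∀ s, mono α s = ∏ j, (s : Fin n → ℂ) j ^ α j := by
    intro α hα s
    simp only [mono, hα, dif_pos]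
    rw [Finset.sum_eq_single α]
    · simp
    · intro γ _ hγ; simp [hγ]
    · exact fun hc => absurd hα hc
  let L : ((Fin n → ℕ) → ℂ) → lp (fun _ : {z : Fin n → ℂ // ν z = 1} => ℂ) ∞ :=
    fun c => ∑ α ∈ I, c α • mono α
  have hL : ∀ c s, L c s = ∑ α ∈ I, c α * ∏ j, (s : Fin n → ℂ) j ^ α j := by
    intro c s
    simp only [L]
    rw [lp.coeFn_sum, Finset.sum_apply]
    refine Finset.sum_congr rfl fun α hα => ?_
    rw [lp.coeFn_smul, Pi.smul_apply, hmono α hα, smul_eq_mul]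
  classical
  let V := Submodule.span ℂ ((I.image mono : Finset _) : Set
    (lp (fun _ : {z : Fin n → ℂ // ν z = 1} => ℂ) ∞))
  have hV : ∀ f, f ∈ V ↔ f ∈ polyCopy n ν I := by
    intro f
    constructor
    · intro hf
      refine Submodule.span_induction (p := fun f _ => f ∈ polyCopy n ν I) ?_ ?_ ?_ ?_ hf
      · intro g hg
        obtain ⟨α, hα, rfl⟩ := Finset.mem_image.mp hg
        refine ⟨Pi.single α 1, fun s => ?_⟩
        rw [hmono α hα, Finset.sum_eq_single α]
        · simp
        · intro γ _ hγ; simp [hγ]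
        · exact fun hc => absurd hα hc
      · exact ⟨0, fun s => by simp⟩
      · rintro f g _ _ ⟨a, ha⟩ ⟨b, hb⟩
        refine ⟨a + b, fun s => ?_⟩
        rw [lp.coeFn_add, Pi.add_apply, ha, hb, ← Finset.sum_add_distrib]
        exact Finset.sum_congr rfl fun _ _ => by rw [Pi.add_apply]; ring
      · rintro t f _ ⟨a, ha⟩
        refine ⟨t • a, fun s => ?_⟩
        rw [lp.coeFn_smul, Pi.smul_apply, ha, smul_eq_mul, Finset.mul_sum]
        exact Finset.sum_congr rfl fun _ _ => by rw [Pi.smul_apply, smul_eq_mul]; ring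
    · rintro ⟨c, hc⟩
      have : f = L c := by
        ext s; rw [hc, hL]
      rw [this]
      exact Submodule.sum_mem _ fun α hα => Submodule.smul_mem _ _
        (Submodule.subset_span (Finset.mem_coe.mpr (Finset.mem_image_of_mem _ hα)))
  have : FiniteDimensional ℂ V := FiniteDimensional.span_finset ℂ _
  obtain ⟨P, hP⟩ := Submodule.ClosedComplemented.of_finiteDimensional V
  refine ⟨V.subtypeL.comp P, fun f => (hV _).mp (P f).2, fun f hf => ?_⟩
  have := hP ⟨f, (hV f).mpr hf⟩
  simp [this]

/-- **`χ_mon(𝒫_J(X_n)) ≤ e · 2^m · ‖Q_{Λ(m,n),J}‖ · λ(𝒫_{J♭}(X_n))`.** -/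
theorem stmt_12 (n m : ℕ) (hm : 1 ≤ m) (ν : (Fin n → ℂ) → ℝ)
    (hdef : ∀ z, ν z = 0 → z = 0)
    (hsmul : ∀ (a : ℂ) (z : Fin n → ℂ), ν (a • z) = ‖a‖ * ν z)
    (htri : ∀ z w : Fin n → ℂ, ν (z + w) ≤ ν z + ν w)
    (hmono : ∀ z w : Fin n → ℂ, (∀ j, ‖z j‖ ≤ ‖w j‖) → ν z ≤ ν w)
    (J : Finset (Fin n → ℕ)) (hJne : J.Nonempty) (hJhom : J ⊆ homIdx m n) :
    unconBasisConst n ν J ≤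
      Real.exp 1 * 2 ^ m * coeffProjNorm n m ν J * projConst n ν (flatIdx n m J) := by
  obtain ⟨d, rfl⟩ : ∃ d, m = d + 1 := ⟨m - 1, by omega⟩
  have h : IsLatticeNorm ν := ⟨hdef, hsmul, htri, hmono⟩
  have hn : 0 < n := by
    obtain ⟨α, hα⟩ := hJne
    have h1 := mem_homIdx.mp (hJhom hα)
    rcases Nat.eq_zero_or_pos n with h0 | hp
    · subst h0; simp at h1
    · exact hp
  set A := Real.exp 1 * 2 ^ (d + 1) * coeffProjNorm n (d + 1) ν J with hA
  have hA0 : 0 ≤ A := by have := h.coeffProjNorm_nonneg (m := d + 1) J; positivity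
  obtain ⟨Q₀, hQ₀⟩ := h.exists_projection (flatIdx n (d + 1) J)
  have hle : ∀ Q : lp (fun _ : {z : Fin n → ℂ // ν z = 1} => ℂ) ∞ →L[ℂ]
      lp (fun _ : {z : Fin n → ℂ // ν z = 1} => ℂ) ∞,
      (∀ f, Q f ∈ polyCopy n ν (flatIdx n (d + 1) J)) →
      (∀ f ∈ polyCopy n ν (flatIdx n (d + 1) J), Q f = f) → unconBasisConst n ν J ≤ A * ‖Q‖ := by
    intro Q hQ1 hQ2
    refine csInf_le ⟨0, fun K hK => hK.1⟩ ⟨by positivity, fun c ε hε => ?_⟩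
    refine (h.uncond_le hn hJhom Q hQ1 hQ2 c ε hε).trans (le_of_eq ?_)
    rw [hA]; ring
  rw [projConst]
  rcases hA0.eq_or_lt with h0 | hp
  · have := hle Q₀ hQ₀.1 hQ₀.2
    rw [← h0, zero_mul] at this ⊢
    exact this
  · rw [← div_le_iff₀' hp]
    refine le_csInf ⟨_, Q₀, hQ₀.1, hQ₀.2, rfl⟩ ?_
    rintro _ ⟨Q, hQ1, hQ2, rfl⟩
    rw [div_le_iff₀' hp]
    exact hle Q hQ1 hQ2
end

section
/- Let X_n = (ℂⁿ,‖·‖) be a Banach lattice (i.e. |z_j| ≤ |w_j| for all j implies ‖z‖ ≤ ‖w‖) and let J ⊆ ℕ₀ⁿ be a finite nonempty index set. For α ∈ J set c_{X_n}(α) = (sup_{‖z‖≤1} |z^α|)^{-1}. Then λ(𝒫_J(X_n)) ≤ sup_{‖z‖≤1} Σ_{α∈J} c_{X_n}(α) |z^α|, i.e., the projection constant of 𝒫_J(X_n) is bounded by its polynomial projection constant λ̂(𝒫_J(X_n)) := sup_{‖z‖≤1} Σ_{α∈J} c_{X_n}(α) |z^α|. -/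
/-!
The projection is built from approximately norming points for the monomials. For `K > 1` and each
`α ∈ J` choose a point `p α` of the unit sphere with `sup |z^α| ≤ K |p(α)^α|`. By the lattice
property the whole torus orbit of `p α` lies on the sphere, so the `α`-th coefficient of a
polynomial supported on `J` can be read off, up to the factor `p(α)^α`, as a Fourier coefficient
along this orbit. Arbitrary elements of `ℓ∞(S)` need not be measurable, so the integral over the
torus is replaced by the average over `N`-th roots of unity, where `N` exceeds all exponents
occurring in `J`; this is exact on the polynomials concerned (`sum_torus`). The resulting
coefficient functionals have norm at most `1 / |p(α)^α| ≤ K / sup |z^α|`, so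
`f ↦ ∑ α ∈ J, (coefficient functional α f) z^α` is a projection of norm at most `K · λ̂`
(`exists_projection`). Letting `K → 1` gives the claim.
-/

open scoped ENNReal

/-- The supremum `sup_{‖z‖ ≤ 1} |z^α|` of the modulus of the monomial `z^α` on the unit
ball of `(ℂⁿ, ν)`; its reciprocal is the characteristic `c_{X_n}(α)`. -/
noncomputable def monoSup (n : ℕ) (ν : (Fin n → ℂ) → ℝ) (α : Fin n → ℕ) : ℝ :=
  sSup {t : ℝ | ∃ z : Fin n → ℂ, ν z ≤ 1 ∧ t = ‖∏ j, z j ^ α j‖}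

/-! ### Orthogonality on the discrete torus -/

/-- Orthogonality of characters of `ℤ/N`, for exponents below `N`. -/
lemma sum_root_pow {N : ℕ} {ζ : ℂ} (hζ : IsPrimitiveRoot ζ N) {a b : ℕ} (ha : a < N)
    (hb : b < N) :
    ∑ k : Fin N, (ζ ^ (k : ℕ)) ^ a * ((ζ ^ (k : ℕ)) ^ b)⁻¹ = if a = b then (N : ℂ) else 0 := by
  have hN : N ≠ 0 := by omega
  have hζ0 : ζ ≠ 0 := hζ.ne_zero hN
  have h1 : ∀ k : Fin N, (ζ ^ (k : ℕ)) ^ a * ((ζ ^ (k : ℕ)) ^ b)⁻¹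
      = (ζ ^ a * (ζ ^ b)⁻¹) ^ (k : ℕ) := by
    intro k
    rw [mul_pow, inv_pow, ← pow_mul, ← pow_mul, ← pow_mul, ← pow_mul, mul_comm a, mul_comm b]
  simp only [h1]
  rw [Fin.sum_univ_eq_sum_range (fun k => (ζ ^ a * (ζ ^ b)⁻¹) ^ k)]
  split_ifs with hab
  · subst hab
    simp [hζ0]
  · have hne : ζ ^ a * (ζ ^ b)⁻¹ ≠ 1 := by
      intro h
      exact hab (hζ.pow_inj ha hb (by
        field_simp at h
        exact h))
    have hone : (ζ ^ a * (ζ ^ b)⁻¹) ^ N = 1 := by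
      rw [mul_pow, inv_pow, ← pow_mul, ← pow_mul, mul_comm a, mul_comm b, pow_mul, pow_mul,
        hζ.pow_eq_one]
      simp
    rw [geom_sum_eq hne, hone]
    simp

/-- Orthogonality of monomials on the discrete torus of `N`-th roots of unity, along the orbit of
a point `p`. -/
lemma sum_torus {n N : ℕ} {ζ : ℂ} (hζ : IsPrimitiveRoot ζ N) (α β : Fin n → ℕ)
    (hα : ∀ j, α j < N) (hβ : ∀ j, β j < N) (p : Fin n → ℂ) :
    ∑ k : Fin n → Fin N, (∏ j, ((ζ ^ (k j : ℕ)) ^ α j)⁻¹) * ∏ j, (ζ ^ (k j : ℕ) * p j) ^ β j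
      = if β = α then (N : ℂ) ^ n * ∏ j, p j ^ α j else 0 := by
  have h1 : ∀ k : Fin n → Fin N,
      (∏ j, ((ζ ^ (k j : ℕ)) ^ α j)⁻¹) * ∏ j, (ζ ^ (k j : ℕ) * p j) ^ β j
      = (∏ j, (ζ ^ (k j : ℕ)) ^ β j * ((ζ ^ (k j : ℕ)) ^ α j)⁻¹) * ∏ j, p j ^ β j := by
    intro k
    simp only [← Finset.prod_mul_distrib]
    exact Finset.prod_congr rfl fun j _ => by rw [mul_pow]; ring
  simp only [h1, ← Finset.sum_mul]
  rw [← Fintype.prod_sum (fun j (k : Fin N) => (ζ ^ (k : ℕ)) ^ β j * ((ζ ^ (k : ℕ)) ^ α j)⁻¹)]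
  simp only [sum_root_pow hζ (hβ _) (hα _)]
  split_ifs with h
  · subst h
    simp
  · obtain ⟨j, hj⟩ := Function.ne_iff.mp h
    rw [Finset.prod_eq_zero (Finset.mem_univ j) (if_neg hj), zero_mul]

/-! ### Monomials on the unit ball -/

/-- Coordinates are bounded on the unit ball, hence so is every monomial. -/
lemma bddAbove_mono {n : ℕ} {ν : (Fin n → ℂ) → ℝ}
    (hdef : ∀ z, ν z = 0 → z = 0)
    (hsmul : ∀ (a : ℂ) (z : Fin n → ℂ), ν (a • z) = ‖a‖ * ν z)
    (hmono : ∀ z w : Fin n → ℂ, (∀ j, ‖z j‖ ≤ ‖w j‖) → ν z ≤ ν w) (α : Fin n → ℕ) :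
    BddAbove {t : ℝ | ∃ z : Fin n → ℂ, ν z ≤ 1 ∧ t = ‖∏ j, z j ^ α j‖} := by
  have h0 : ν 0 = 0 := by simpa using hsmul 0 0
  have hpos : ∀ j, 0 < ν (Pi.single j 1) := fun j =>
    lt_of_le_of_ne (h0 ▸ hmono 0 _ (by simp)) fun h => by
      have := congrFun (hdef _ h.symm) j
      simp at this
  refine ⟨∏ j, (ν (Pi.single j 1))⁻¹ ^ α j, ?_⟩
  rintro t ⟨z, hz, rfl⟩
  rw [norm_prod]
  refine Finset.prod_le_prod (fun _ _ => norm_nonneg _) fun j _ => ?_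
  rw [norm_pow]
  refine pow_le_pow_left₀ (norm_nonneg _) ?_ _
  have h1 : ν (z j • Pi.single j 1) ≤ ν z := by
    refine hmono _ _ fun i => ?_
    by_cases h : i = j
    · subst h
      simp
    · simp [h]
  rw [hsmul] at h1
  rw [← one_div, le_div_iff₀ (hpos j)]
  exact h1.trans hz

lemma monoSup_pos {n : ℕ} {ν : (Fin n → ℂ) → ℝ}
    (hdef : ∀ z, ν z = 0 → z = 0)
    (hsmul : ∀ (a : ℂ) (z : Fin n → ℂ), ν (a • z) = ‖a‖ * ν z)
    (hmono : ∀ z w : Fin n → ℂ, (∀ j, ‖z j‖ ≤ ‖w j‖) → ν z ≤ ν w) (α : Fin n → ℕ) :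
    0 < monoSup n ν α := by
  have h0 : ν 0 = 0 := by simpa using hsmul 0 0
  have hnn : 0 ≤ ν 1 := h0 ▸ hmono 0 _ (by simp)
  -- a multiple of the all-ones vector lying in the ball
  have hz : ν (((ν 1 + 1 : ℝ) : ℂ)⁻¹ • (1 : Fin n → ℂ)) ≤ 1 := by
    rw [hsmul, norm_inv, Complex.norm_real, Real.norm_of_nonneg (by linarith), inv_mul_eq_div,
      div_le_one (by linarith)]
    linarith
  have hc : ((ν 1 + 1 : ℝ) : ℂ) ≠ 0 := by
    rw [Ne, Complex.ofReal_eq_zero]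
    linarith
  refine lt_of_lt_of_le ?_ (le_csSup (bddAbove_mono hdef hsmul hmono α) ⟨_, hz, rfl⟩)
  rw [norm_pos_iff, Finset.prod_ne_zero_iff]
  intro j _
  refine pow_ne_zero _ ?_
  simpa using hc

/-- If the sphere is nonempty, every point of the ball is dominated coordinatewise by a point of
the sphere. -/
lemma exists_sphere_ge {n : ℕ} {ν : (Fin n → ℂ) → ℝ}
    (hdef : ∀ z, ν z = 0 → z = 0)
    (hsmul : ∀ (a : ℂ) (z : Fin n → ℂ), ν (a • z) = ‖a‖ * ν z)
    (hmono : ∀ z w : Fin n → ℂ, (∀ j, ‖z j‖ ≤ ‖w j‖) → ν z ≤ ν w)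
    (hS : ∃ s, ν s = 1) (z : Fin n → ℂ) (hz : ν z ≤ 1) :
    ∃ s, ν s = 1 ∧ ∀ j, ‖z j‖ ≤ ‖s j‖ := by
  have h0 : ν 0 = 0 := by simpa using hsmul 0 0
  have hnn : 0 ≤ ν z := h0 ▸ hmono 0 _ (by simp)
  rcases hnn.eq_or_lt with h | h
  · obtain ⟨s, hs⟩ := hS
    refine ⟨s, hs, fun j => ?_⟩
    rw [hdef z h.symm]
    simp
  · refine ⟨((ν z : ℝ) : ℂ)⁻¹ • z, ?_, fun j => ?_⟩
    · rw [hsmul, norm_inv, Complex.norm_real, Real.norm_of_nonneg hnn, inv_mul_cancel₀ h.ne']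
    · rw [Pi.smul_apply, norm_smul, norm_inv, Complex.norm_real, Real.norm_of_nonneg hnn]
      exact le_mul_of_one_le_left (norm_nonneg _) ((one_le_inv₀ h).mpr hz)

/-- Approximately norming points of a monomial can be taken on the sphere. -/
lemma exists_norming {n : ℕ} {ν : (Fin n → ℂ) → ℝ}
    (hdef : ∀ z, ν z = 0 → z = 0)
    (hsmul : ∀ (a : ℂ) (z : Fin n → ℂ), ν (a • z) = ‖a‖ * ν z)
    (hmono : ∀ z w : Fin n → ℂ, (∀ j, ‖z j‖ ≤ ‖w j‖) → ν z ≤ ν w)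
    (hS : ∃ s, ν s = 1) {K : ℝ} (hK : 1 < K) (α : Fin n → ℕ) :
    ∃ s, ν s = 1 ∧ monoSup n ν α ≤ K * ‖∏ j, s j ^ α j‖ := by
  have hM := monoSup_pos hdef hsmul hmono α
  have h0 : ν 0 = 0 := by simpa using hsmul 0 0
  obtain ⟨t, ⟨z, hz, rfl⟩, ht⟩ := exists_lt_of_lt_csSup
    (s := {t : ℝ | ∃ z : Fin n → ℂ, ν z ≤ 1 ∧ t = ‖∏ j, z j ^ α j‖})
    ⟨_, 0, by simp [h0], rfl⟩ (div_lt_self hM hK)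
  obtain ⟨s, hs, hzs⟩ := exists_sphere_ge hdef hsmul hmono hS z hz
  refine ⟨s, hs, ?_⟩
  rw [div_lt_iff₀' (by linarith)] at ht
  refine ht.le.trans (mul_le_mul_of_nonneg_left ?_ (by linarith))
  rw [norm_prod, norm_prod]
  refine Finset.prod_le_prod (fun _ _ => norm_nonneg _) fun j _ => ?_
  rw [norm_pow, norm_pow]
  exact pow_le_pow_left₀ (norm_nonneg _) (hzs j) _

/-- The set defining the polynomial projection constant `λ̂` is bounded: each summand is at
most `1`. -/
lemma bddAbove_sum {n : ℕ} {ν : (Fin n → ℂ) → ℝ}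
    (hdef : ∀ z, ν z = 0 → z = 0)
    (hsmul : ∀ (a : ℂ) (z : Fin n → ℂ), ν (a • z) = ‖a‖ * ν z)
    (hmono : ∀ z w : Fin n → ℂ, (∀ j, ‖z j‖ ≤ ‖w j‖) → ν z ≤ ν w)
    (J : Finset (Fin n → ℕ)) :
    BddAbove {t : ℝ | ∃ z : Fin n → ℂ, ν z ≤ 1 ∧
        t = ∑ α ∈ J, (monoSup n ν α)⁻¹ * ‖∏ j, z j ^ α j‖} := by
  refine ⟨∑ α ∈ J, 1, ?_⟩
  rintro t ⟨z, hz, rfl⟩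
  refine Finset.sum_le_sum fun α _ => ?_
  have hM := monoSup_pos hdef hsmul hmono α
  rw [inv_mul_eq_div, div_le_one hM]
  exact le_csSup (bddAbove_mono hdef hsmul hmono α) ⟨z, hz, rfl⟩

/-! ### The projection -/

/-- Existence, for each `K > 1`, of a projection of norm at most `K · λ̂`. -/
lemma exists_projection {n : ℕ} {ν : (Fin n → ℂ) → ℝ}
    (hdef : ∀ z, ν z = 0 → z = 0)
    (hsmul : ∀ (a : ℂ) (z : Fin n → ℂ), ν (a • z) = ‖a‖ * ν z)
    (hmono : ∀ z w : Fin n → ℂ, (∀ j, ‖z j‖ ≤ ‖w j‖) → ν z ≤ ν w)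
    (J : Finset (Fin n → ℕ)) (hS : ∃ s, ν s = 1) {K L : ℝ} (hK : 1 < K) (hL0 : 0 ≤ L)
    (hL : ∀ z, ν z ≤ 1 → ∑ α ∈ J, (monoSup n ν α)⁻¹ * ‖∏ j, z j ^ α j‖ ≤ L) :
    ∃ Q : lp (fun _ : {z : Fin n → ℂ // ν z = 1} => ℂ) ∞ →L[ℂ]
      lp (fun _ : {z : Fin n → ℂ // ν z = 1} => ℂ) ∞,
    (∀ f, Q f ∈ polyCopy n ν J) ∧ (∀ f ∈ polyCopy n ν J, Q f = f) ∧ ‖Q‖ ≤ K * L := by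
  choose p hp hpM using exists_norming hdef hsmul hmono hS hK
  have hM := monoSup_pos hdef hsmul hmono
  have hpos : ∀ α, 0 < ‖∏ j, p α j ^ α j‖ := fun α =>
    pos_of_mul_pos_right ((hM α).trans_le (hpM α)) (by linarith)
  -- the order of the roots of unity exceeds every exponent occurring in `J`
  obtain ⟨N, hN0, hN⟩ : ∃ N : ℕ, N ≠ 0 ∧ ∀ α ∈ J, ∀ j, α j < N := by
    refine ⟨(∑ α ∈ J, ∑ j, α j) + 1, by omega, fun α hα j => Nat.lt_succ_of_le ?_⟩
    exact (Finset.single_le_sum (f := α) (fun _ _ => Nat.zero_le _) (Finset.mem_univ j)).trans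
      (Finset.single_le_sum (f := fun α : Fin n → ℕ => ∑ j, α j)
        (fun _ _ => Nat.zero_le _) hα)
  obtain ⟨ζ, hζ⟩ : ∃ ζ : ℂ, IsPrimitiveRoot ζ N := ⟨_, Complex.isPrimitiveRoot_exp N hN0⟩
  have hζ1 : ‖ζ‖ = 1 := hζ.norm'_eq_one hN0
  have horb : ∀ α (k : Fin n → Fin N), ν (fun j => ζ ^ (k j : ℕ) * p α j) = 1 := fun α k =>
    (le_antisymm (hmono _ _ fun j => by simp [hζ1]) (hmono _ _ fun j => by simp [hζ1])).trans
      (hp α)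
  -- discrete Fourier coefficient along the orbit of `p α`, normalized by `p(α)^α`
  let φ : (Fin n → ℕ) → lp (fun _ : {z : Fin n → ℂ // ν z = 1} => ℂ) ∞ → ℂ := fun α f =>
    ((N : ℂ) ^ n * ∏ j, p α j ^ α j)⁻¹ *
      ∑ k : Fin n → Fin N, (∏ j, ((ζ ^ (k j : ℕ)) ^ α j)⁻¹) * f ⟨_, horb α k⟩
  have hφadd : ∀ α f g, φ α (f + g) = φ α f + φ α g := by
    intro α f g
    simp only [φ, lp.coeFn_add, Pi.add_apply, mul_add, Finset.sum_add_distrib]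
  have hφsmul : ∀ α (c : ℂ) f, φ α (c • f) = c * φ α f := by
    intro α c f
    simp only [φ, lp.coeFn_smul, Pi.smul_apply, smul_eq_mul, Finset.mul_sum]
    exact Finset.sum_congr rfl fun k _ => by ring
  have hφnorm : ∀ α f, ‖φ α f‖ ≤ K * (monoSup n ν α)⁻¹ * ‖f‖ := by
    intro α f
    have hNn : (0 : ℝ) < (N : ℝ) ^ n := by positivity
    have h1 : ‖∑ k : Fin n → Fin N, (∏ j, ((ζ ^ (k j : ℕ)) ^ α j)⁻¹) * f ⟨_, horb α k⟩‖
        ≤ (N : ℝ) ^ n * ‖f‖ := by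
      refine (norm_sum_le_of_le (f := fun k : Fin n → Fin N =>
        (∏ j, ((ζ ^ (k j : ℕ)) ^ α j)⁻¹) * f ⟨_, horb α k⟩) _ (n := fun _ => ‖f‖) ?_).trans ?_
      · intro k _
        rw [norm_mul, norm_prod]
        simpa [hζ1] using lp.norm_apply_le_norm ENNReal.top_ne_zero f ⟨_, horb α k⟩
      · simp
    have h2 : (‖∏ j, p α j ^ α j‖)⁻¹ ≤ K * (monoSup n ν α)⁻¹ := by
      rw [← div_eq_mul_inv, le_div_iff₀ (hM α), inv_mul_le_iff₀ (hpos α), mul_comm]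
      exact hpM α
    calc ‖φ α f‖ = ((N : ℝ) ^ n)⁻¹ * (‖∏ j, p α j ^ α j‖)⁻¹ *
          ‖∑ k : Fin n → Fin N, (∏ j, ((ζ ^ (k j : ℕ)) ^ α j)⁻¹) * f ⟨_, horb α k⟩‖ := by
            simp only [φ]
            rw [norm_mul, norm_inv, norm_mul, norm_pow, Complex.norm_natCast, mul_inv]
      _ ≤ ((N : ℝ) ^ n)⁻¹ * (‖∏ j, p α j ^ α j‖)⁻¹ * ((N : ℝ) ^ n * ‖f‖) :=
            mul_le_mul_of_nonneg_left h1 (by positivity)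
      _ = (‖∏ j, p α j ^ α j‖)⁻¹ * ‖f‖ := by field_simp
      _ ≤ _ := mul_le_mul_of_nonneg_right h2 (norm_nonneg _)
  have hφpoly : ∀ α ∈ J, ∀ (c : (Fin n → ℕ) → ℂ)
      (f : lp (fun _ : {z : Fin n → ℂ // ν z = 1} => ℂ) ∞),
      (∀ s : {z : Fin n → ℂ // ν z = 1}, f s = ∑ β ∈ J, c β * ∏ j, (s : Fin n → ℂ) j ^ β j) →
      φ α f = c α := by
    intro α hα c f hf
    have hne : (N : ℂ) ^ n * ∏ j, p α j ^ α j ≠ 0 :=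
      mul_ne_zero (pow_ne_zero _ (Nat.cast_ne_zero.mpr hN0)) (norm_pos_iff.mp (hpos α))
    simp only [φ, hf, Finset.mul_sum (s := J)]
    rw [Finset.sum_comm]
    have h1 : ∀ β ∈ J, ∑ k : Fin n → Fin N, (∏ j, ((ζ ^ (k j : ℕ)) ^ α j)⁻¹) *
        (c β * ∏ j, (ζ ^ (k j : ℕ) * p α j) ^ β j)
        = if β = α then c β * ((N : ℂ) ^ n * ∏ j, p α j ^ α j) else 0 := by
      intro β hβ
      simp only [mul_left_comm _ (c β), ← Finset.mul_sum]
      rw [sum_torus hζ α β (hN α hα) (hN β hβ)]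
      split_ifs <;> simp
    rw [Finset.sum_congr rfl h1, Finset.sum_ite_eq' J α, if_pos hα, mul_comm (c α),
      inv_mul_cancel_left₀ hne]
  have hmem : ∀ α : Fin n → ℕ, Memℓp (E := fun _ : {z : Fin n → ℂ // ν z = 1} => ℂ)
      (fun s => ∏ j, (s : Fin n → ℂ) j ^ α j) ∞ := by
    intro α
    refine memℓp_infty ((bddAbove_mono hdef hsmul hmono α).mono ?_)
    rintro _ ⟨s, rfl⟩
    exact ⟨s, s.2.le, rfl⟩
  let e : (Fin n → ℕ) → lp (fun _ : {z : Fin n → ℂ // ν z = 1} => ℂ) ∞ := fun α => ⟨_, hmem α⟩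
  let Q₀ : lp (fun _ : {z : Fin n → ℂ // ν z = 1} => ℂ) ∞ →ₗ[ℂ]
      lp (fun _ : {z : Fin n → ℂ // ν z = 1} => ℂ) ∞ :=
    { toFun := fun f => ∑ α ∈ J, φ α f • e α
      map_add' := fun f g => by simp only [hφadd, add_smul, Finset.sum_add_distrib]
      map_smul' := fun c f => by
        simp only [hφsmul, mul_smul, Finset.smul_sum, RingHom.id_apply] }
  have hQ₀ : ∀ f s, Q₀ f s = ∑ α ∈ J, φ α f * ∏ j, (s : Fin n → ℂ) j ^ α j := by
    intro f s
    simp only [Q₀, LinearMap.coe_mk, AddHom.coe_mk, lp.coeFn_sum, Finset.sum_apply,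
      lp.coeFn_smul, Pi.smul_apply, smul_eq_mul, e]
  have hbound : ∀ f, ‖Q₀ f‖ ≤ K * L * ‖f‖ := by
    intro f
    refine lp.norm_le_of_forall_le (by positivity) fun s => ?_
    rw [hQ₀]
    calc ‖∑ α ∈ J, φ α f * ∏ j, (s : Fin n → ℂ) j ^ α j‖
        ≤ ∑ α ∈ J, K * (monoSup n ν α)⁻¹ * ‖f‖ * ‖∏ j, (s : Fin n → ℂ) j ^ α j‖ := by
          refine norm_sum_le_of_le _ fun α _ => ?_
          rw [norm_mul]
          exact mul_le_mul_of_nonneg_right (hφnorm α f) (norm_nonneg _)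
      _ = K * (∑ α ∈ J, (monoSup n ν α)⁻¹ * ‖∏ j, (s : Fin n → ℂ) j ^ α j‖) * ‖f‖ := by
          rw [Finset.mul_sum, Finset.sum_mul]
          exact Finset.sum_congr rfl fun _ _ => by ring
      _ ≤ K * L * ‖f‖ := by
          have := hL s s.2.le
          gcongr
  refine ⟨Q₀.mkContinuous _ hbound, fun f => ⟨fun α => φ α f, hQ₀ f⟩, ?_,
    LinearMap.mkContinuous_norm_le _ (by positivity) _⟩
  rintro f ⟨c, hc⟩
  ext s
  rw [LinearMap.mkContinuous_apply, hQ₀, hc]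
  exact Finset.sum_congr rfl fun α hα => by rw [hφpoly α hα c f hc]

/-- **The projection constant of `𝒫_J(X_n)` is bounded by the polynomial projection
constant `λ̂(𝒫_J(X_n)) = sup_{‖z‖≤1} ∑_{α ∈ J} c_{X_n}(α) |z^α|`.** -/
theorem stmt_13 (n : ℕ) (ν : (Fin n → ℂ) → ℝ)
    (hdef : ∀ z, ν z = 0 → z = 0)
    (hsmul : ∀ (a : ℂ) (z : Fin n → ℂ), ν (a • z) = ‖a‖ * ν z)
    (htri : ∀ z w : Fin n → ℂ, ν (z + w) ≤ ν z + ν w)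
    (hmono : ∀ z w : Fin n → ℂ, (∀ j, ‖z j‖ ≤ ‖w j‖) → ν z ≤ ν w)
    (J : Finset (Fin n → ℕ)) (hJne : J.Nonempty) :
    projConst n ν J ≤
      sSup {t : ℝ | ∃ z : Fin n → ℂ, ν z ≤ 1 ∧
        t = ∑ α ∈ J, (monoSup n ν α)⁻¹ * ‖∏ j, z j ^ α j‖} := by
  have hL0 : 0 ≤ sSup {t : ℝ | ∃ z : Fin n → ℂ, ν z ≤ 1 ∧
      t = ∑ α ∈ J, (monoSup n ν α)⁻¹ * ‖∏ j, z j ^ α j‖} := by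
    refine Real.sSup_nonneg ?_
    rintro t ⟨z, -, rfl⟩
    exact Finset.sum_nonneg fun α _ =>
      mul_nonneg (inv_nonneg.mpr (monoSup_pos hdef hsmul hmono α).le) (norm_nonneg _)
  have hbdd : BddBelow {r : ℝ | ∃ Q : lp (fun _ : {z : Fin n → ℂ // ν z = 1} => ℂ) ∞ →L[ℂ]
      lp (fun _ : {z : Fin n → ℂ // ν z = 1} => ℂ) ∞,
      (∀ f, Q f ∈ polyCopy n ν J) ∧ (∀ f ∈ polyCopy n ν J, Q f = f) ∧ ‖Q‖ = r} := by
    refine ⟨0, ?_⟩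
    rintro r ⟨Q, -, -, rfl⟩
    exact norm_nonneg Q
  by_cases hS : ∃ s, ν s = 1
  · refine le_of_forall_gt_imp_ge_of_dense fun r hr => ?_
    -- a factor `K > 1` with `K * L ≤ r`, where `L` is the right-hand supremum
    obtain ⟨K, hK, hKr⟩ : ∃ K : ℝ, 1 < K ∧ K * sSup {t : ℝ | ∃ z : Fin n → ℂ, ν z ≤ 1 ∧
        t = ∑ α ∈ J, (monoSup n ν α)⁻¹ * ‖∏ j, z j ^ α j‖} ≤ r := by
      rcases hL0.eq_or_lt with h | h
      · exact ⟨2, one_lt_two, by rw [← h] at hr ⊢; linarith⟩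
      · exact ⟨r / _, (one_lt_div h).mpr hr, (div_mul_cancel₀ r h.ne').le⟩
    obtain ⟨Q, h1, h2, h3⟩ := exists_projection hdef hsmul hmono J hS hK hL0
      fun z hz => le_csSup (bddAbove_sum hdef hsmul hmono J) ⟨z, hz, rfl⟩
    exact (csInf_le hbdd ⟨Q, h1, h2, rfl⟩).trans (h3.trans hKr)
  · -- the sphere is empty (only for `n = 0`), so `ℓ∞(S)` is trivial
    have hE : ∀ s : {z : Fin n → ℂ // ν z = 1}, False := fun s => hS ⟨s, s.2⟩
    refine (csInf_le hbdd ⟨0, fun f => ⟨0, fun s => (hE s).elim⟩, fun f _ => ?_, norm_zero⟩).trans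
      hL0
    ext s
    exact (hE s).elim
end

section
/- Let X_n = (ℂⁿ,‖·‖) be a Banach lattice (i.e. |z_j| ≤ |w_j| for all j implies ‖z‖ ≤ ‖w‖), let ‖y‖' = sup{Σ_{j=1}^n |y_j x_j| : ‖x‖ ≤ 1} be the Köthe dual norm on ℂⁿ, and let α ∈ ℕ₀ⁿ with |α| = m ≥ 1. Write c_{X_n}(α) = (sup_{‖z‖≤1}|z^α|)^{-1} and c_{X_n'}(α) = (sup_{‖z‖'≤1}|z^α|)^{-1}. Then: (i) c_{X_n}(α) · c_{X_n'}(α) = m^m / α^α, where α^α = ∏_{j=1}^n α_j^{α_j} with the convention 0⁰ = 1; (ii) there exist vectors u, v ∈ ℂⁿ with nonnegative real coordinates such that ‖u‖ = 1, ‖v‖' = 1, u_j v_j = α_j/m for every j, and c_{X_n}(α) = 1/u^α, c_{X_n'}(α) = 1/v^α. -/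
/-- The Köthe dual norm of the Banach lattice norm `ν` on `ℂⁿ`. -/
noncomputable def kotheDual (n : ℕ) (ν : (Fin n → ℂ) → ℝ) : (Fin n → ℂ) → ℝ :=
  fun y => sSup {t : ℝ | ∃ x : Fin n → ℂ, ν x ≤ 1 ∧ t = ∑ j, ‖y j * x j‖}

open Filter Topology

/-- First-order optimality: if `u` maximizes `x^α` along the segment from `u` to `x`, then the
derivative of `∑ α_j log` in the direction `x - u` is nonpositive. -/
lemma sum_div_le_of_isMax {n : ℕ} (α : Fin n → ℕ) (u x : Fin n → ℝ)
    (hu : ∀ j, α j ≠ 0 → 0 < u j) (hu0 : ∀ j, 0 ≤ u j) (hx : ∀ j, 0 ≤ x j)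
    (hmax : ∀ t : ℝ, 0 < t → t < 1 →
      ∏ j, ((1 - t) * u j + t * x j) ^ α j ≤ ∏ j, u j ^ α j) :
    ∑ j, (α j : ℝ) * (x j / u j) ≤ ∑ j, (α j : ℝ) := by
  have hd : ∀ j, -1 ≤ x j / u j - 1 := fun j => by
    have := div_nonneg (hx j) (hu0 j)
    linarith
  set d : Fin n → ℝ := fun j => x j / u j - 1 with hd'
  have hpos : ∀ t : ℝ, 0 < t → t < 1 → ∀ j, 0 < 1 + t * d j := fun t h0 h1 j => by
    have := hd j
    change -1 ≤ d j at this
    nlinarith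
  -- The inequality `log y ≥ 1 - 1/y` replaces differentiation.
  have key : ∀ t : ℝ, 0 < t → t < 1 → ∑ j, (α j : ℝ) * (d j / (1 + t * d j)) ≤ 0 := by
    intro t h0 h1
    have hp := hpos t h0 h1
    have hU : 0 < ∏ j, u j ^ α j := Finset.prod_pos fun j _ => by
      by_cases h : α j = 0
      · simp [h]
      · exact pow_pos (hu j h) _
    have e : ∏ j, ((1 - t) * u j + t * x j) ^ α j
        = (∏ j, u j ^ α j) * ∏ j, (1 + t * d j) ^ α j := by
      rw [← Finset.prod_mul_distrib]
      refine Finset.prod_congr rfl fun j _ => ?_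
      by_cases h : α j = 0
      · simp [h]
      · rw [← mul_pow]
        have := (hu j h).ne'
        congr 1
        simp only [hd']
        field_simp
        ring
    have h2 : ∏ j, (1 + t * d j) ^ α j ≤ 1 := by
      have := hmax t h0 h1
      rw [e] at this
      exact (mul_le_iff_le_one_right hU).1 this
    have h3 : ∑ j, (α j : ℝ) * Real.log (1 + t * d j) ≤ 0 := by
      have h4 := Real.log_nonpos (Finset.prod_nonneg fun j _ => pow_nonneg (hp j).le (α j)) h2
      rw [Real.log_prod (fun j _ => (pow_pos (hp j) _).ne')] at h4
      simpa [Real.log_pow] using h4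
    have h5 : ∑ j, (α j : ℝ) * (t * (d j / (1 + t * d j)))
        ≤ ∑ j, (α j : ℝ) * Real.log (1 + t * d j) := by
      refine Finset.sum_le_sum fun j _ => mul_le_mul_of_nonneg_left ?_ (Nat.cast_nonneg _)
      have h6 := Real.one_sub_inv_le_log_of_pos (hp j)
      have h7 : t * (d j / (1 + t * d j)) = 1 - (1 + t * d j)⁻¹ := by
        have := (hp j).ne'
        field_simp
        ring
      rw [h7]
      exact h6
    have h8 : t * ∑ j, (α j : ℝ) * (d j / (1 + t * d j)) ≤ 0 := by
      rw [Finset.mul_sum]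
      refine le_trans (le_of_eq ?_) (h5.trans h3)
      exact Finset.sum_congr rfl fun j _ => by ring
    by_contra hc
    push Not at hc
    exact absurd h8 (not_le.2 (mul_pos h0 hc))
  have hlim : Tendsto (fun t : ℝ => ∑ j, (α j : ℝ) * (d j / (1 + t * d j))) (𝓝[>] 0)
      (𝓝 (∑ j, (α j : ℝ) * d j)) := by
    have hc : ContinuousAt (fun t : ℝ => ∑ j, (α j : ℝ) * (d j / (1 + t * d j))) 0 := by
      refine tendsto_finsetSum _ fun j _ => ?_
      have : ContinuousAt (fun t : ℝ => (α j : ℝ) * (d j / (1 + t * d j))) 0 := by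
        refine continuousAt_const.mul (continuousAt_const.div (by fun_prop) (by simp))
      exact this
    have := hc.tendsto
    simp only [zero_mul, add_zero, div_one] at this
    exact this.mono_left nhdsWithin_le_nhds
  have h9 : ∑ j, (α j : ℝ) * d j ≤ 0 := by
    refine le_of_tendsto hlim ?_
    filter_upwards [Ioo_mem_nhdsGT (zero_lt_one (α := ℝ))] with t ht
    exact key t ht.1 ht.2
  have h10 : ∑ j, (α j : ℝ) * d j
      = ∑ j, (α j : ℝ) * (x j / u j) - ∑ j, (α j : ℝ) := by
    rw [← Finset.sum_sub_distrib]
    exact Finset.sum_congr rfl fun j _ => by simp only [hd']; ring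
  linarith

/-- The weighted AM-GM step, with weights `α_j / m = u_j v_j`. -/
lemma prod_pow_le_of_sum_mul_le {n m : ℕ} (hm : 1 ≤ m) (α : Fin n → ℕ) (hα : ∑ j, α j = m)
    (u v z : Fin n → ℝ) (hv : ∀ j, 0 ≤ v j) (hu : ∀ j, 0 ≤ u j) (hz : ∀ j, 0 ≤ z j)
    (huv : ∀ j, u j * v j = (α j : ℝ) / m) (h : ∑ j, z j * u j ≤ 1) :
    ∏ j, z j ^ α j ≤ ∏ j, v j ^ α j := by
  have hm0 : (0 : ℝ) < m := by exact_mod_cast hm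
  have hvne : ∀ j, α j ≠ 0 → v j ≠ 0 := fun j hj h0 => by
    have := huv j
    rw [h0, mul_zero, eq_comm, div_eq_zero_iff] at this
    rcases this with h | h
    · exact hj (by exact_mod_cast h)
    · exact hm0.ne' h
  have hαR : ∑ j, (α j : ℝ) = m := by exact_mod_cast hα
  have hr : ∀ j, 0 ≤ z j / v j := fun j => div_nonneg (hz j) (hv j)
  have amgm := Real.geom_mean_le_arith_mean Finset.univ (fun j => (α j : ℝ)) (fun j => z j / v j)
    (fun j _ => Nat.cast_nonneg _) (by rw [hαR]; exact hm0) (fun j _ => hr j)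
  simp only [Real.rpow_natCast, hαR] at amgm
  have hle : (∑ j, (α j : ℝ) * (z j / v j)) / m ≤ 1 := by
    refine le_trans ?_ h
    rw [Finset.sum_div]
    refine Finset.sum_le_sum fun j _ => ?_
    have e : (α j : ℝ) * (z j / v j) / m = u j * v j * (z j / v j) := by rw [huv j]; ring
    rw [e]
    by_cases h0 : v j = 0
    · simpa [h0] using mul_nonneg (hz j) (hu j)
    · exact le_of_eq (by field_simp)
  have hP0 : 0 ≤ ∏ j, (z j / v j) ^ α j := Finset.prod_nonneg fun j _ => pow_nonneg (hr j) _
  have hP : ∏ j, (z j / v j) ^ α j ≤ 1 := by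
    by_contra hc
    push Not at hc
    exact absurd (amgm.trans hle) (not_le.2 (Real.one_lt_rpow hc (inv_pos.2 hm0)))
  have e : ∏ j, z j ^ α j = (∏ j, v j ^ α j) * ∏ j, (z j / v j) ^ α j := by
    rw [← Finset.prod_mul_distrib]
    refine Finset.prod_congr rfl fun j _ => ?_
    by_cases h0 : α j = 0
    · simp [h0]
    · rw [← mul_pow, mul_div_cancel₀ _ (hvne j h0)]
  rw [e]
  exact mul_le_of_le_one_right (Finset.prod_nonneg fun j _ => pow_nonneg (hv j) _) hP

/-- The unit ball of a lattice norm is bounded in each coordinate, since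
`|z_j| ν(e_j) ≤ ν(z)`. -/
lemma exists_coord_bound {n : ℕ} (ν : (Fin n → ℂ) → ℝ)
    (hdef : ∀ z, ν z = 0 → z = 0)
    (hsmul : ∀ (a : ℂ) (z : Fin n → ℂ), ν (a • z) = ‖a‖ * ν z)
    (hmono : ∀ z w : Fin n → ℂ, (∀ j, ‖z j‖ ≤ ‖w j‖) → ν z ≤ ν w) :
    ∃ C : Fin n → ℝ, ∀ z, ν z ≤ 1 → ∀ j, ‖z j‖ ≤ C j := by
  have h0 : ν 0 = 0 := by simpa using hsmul 0 0
  refine ⟨fun j => (ν (Pi.single j 1))⁻¹, fun z hz j => ?_⟩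
  have hpos : 0 < ν (Pi.single j 1) := by
    refine lt_of_le_of_ne ?_ fun h => ?_
    · rw [← h0]
      exact hmono _ _ fun i => by simp
    · have := congrFun (hdef _ h.symm) j
      simp at this
  have h1 : ‖z j‖ * ν (Pi.single j 1) ≤ ν z := by
    rw [← hsmul]
    refine hmono _ _ fun i => ?_
    by_cases hi : i = j
    · subst hi; simp
    · simp [hi]
  change ‖z j‖ ≤ (ν (Pi.single j 1))⁻¹
  rw [← one_div, le_div_iff₀ hpos]
  exact h1.trans hz

/-- The extremal vector: a nonnegative maximizer of `x^α` on the ball, which is positive on the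
support of `α` because the maximum is positive. -/
lemma exists_maximizer {n m : ℕ} (hm : 1 ≤ m) (ν : (Fin n → ℂ) → ℝ)
    (hdef : ∀ z, ν z = 0 → z = 0)
    (hsmul : ∀ (a : ℂ) (z : Fin n → ℂ), ν (a • z) = ‖a‖ * ν z)
    (htri : ∀ z w : Fin n → ℂ, ν (z + w) ≤ ν z + ν w)
    (hmono : ∀ z w : Fin n → ℂ, (∀ j, ‖z j‖ ≤ ‖w j‖) → ν z ≤ ν w)
    (α : Fin n → ℕ) (hα : ∑ j, α j = m) :
    ∃ u : Fin n → ℝ, (∀ j, 0 ≤ u j) ∧ (∀ j, α j ≠ 0 → 0 < u j) ∧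
      ν (fun j => (u j : ℂ)) ≤ 1 ∧
      ∀ x : Fin n → ℝ, (∀ j, 0 ≤ x j) → ν (fun j => (x j : ℂ)) ≤ 1 →
        ∏ j, x j ^ α j ≤ ∏ j, u j ^ α j := by
  have h0 : ν 0 = 0 := by simpa using hsmul 0 0
  have hnn : ∀ z, 0 ≤ ν z := fun z => by
    rw [← h0]
    exact hmono _ _ fun i => by simp
  obtain ⟨C, hC⟩ := exists_coord_bound ν hdef hsmul hmono
  have hconv : ConvexOn ℝ Set.univ (fun x : Fin n → ℝ => ν (fun j => (x j : ℂ))) := by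
    refine ⟨convex_univ, fun x _ y _ a b ha hb _ => ?_⟩
    have e : (fun j => (((a • x + b • y) j : ℝ) : ℂ))
        = (a : ℂ) • (fun j => (x j : ℂ)) + (b : ℂ) • (fun j => (y j : ℂ)) := by
      ext j; simp
    simp only [e]
    refine (htri _ _).trans (le_of_eq ?_)
    rw [hsmul, hsmul]
    simp [abs_of_nonneg ha, abs_of_nonneg hb]
  have hcont := hconv.locallyLipschitz.continuous
  let K : Set (Fin n → ℝ) := {x | (∀ j, 0 ≤ x j) ∧ ν (fun j => (x j : ℂ)) ≤ 1}
  have hKc : IsClosed K := by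
    have h1 : IsClosed {x : Fin n → ℝ | ∀ j, 0 ≤ x j} := by
      simp only [Set.ofPred_forall]
      exact isClosed_iInter fun j => isClosed_le continuous_const (continuous_apply j)
    exact h1.inter (isClosed_le hcont continuous_const)
  have hK : IsCompact K := by
    refine (isCompact_Icc (a := (0 : Fin n → ℝ)) (b := C)).of_isClosed_subset hKc ?_
    rintro x ⟨hx, hx1⟩
    refine ⟨fun j => hx j, fun j => ?_⟩
    have := hC _ hx1 j
    simpa [abs_of_nonneg (hx j)] using this
  -- A strictly positive vector in the ball shows that the maximum is positive.
  obtain ⟨w, hwpos, hw1⟩ : ∃ w : Fin n → ℝ, (∀ j, 0 < w j) ∧ ν (fun j => (w j : ℂ)) ≤ 1 := by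
    have hn : Nonempty (Fin n) := by
      by_contra hne
      rw [not_nonempty_iff] at hne
      simp at hα
      omega
    have hone : 0 < ν (fun _ => 1) := by
      refine lt_of_le_of_ne (hnn _) fun h => ?_
      have := congrFun (hdef _ h.symm) hn.some
      simp at this
    refine ⟨fun _ => (ν (fun _ => 1))⁻¹, fun _ => inv_pos.2 hone, ?_⟩
    have e : (fun _ : Fin n => (((ν (fun _ => 1))⁻¹ : ℝ) : ℂ))
        = (((ν (fun _ => 1))⁻¹ : ℝ) : ℂ) • (fun _ : Fin n => (1 : ℂ)) := by
      ext j; simp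
    rw [e, hsmul, Complex.norm_real, Real.norm_eq_abs, abs_of_pos (inv_pos.2 hone),
      inv_mul_cancel₀ hone.ne']
  obtain ⟨y, ⟨hy0, hy1⟩, hymax⟩ := hK.exists_isMaxOn ⟨w, fun j => (hwpos j).le, hw1⟩
    (f := fun x : Fin n → ℝ => ∏ j, x j ^ α j) (by fun_prop)
  have hyP : 0 < ∏ j, y j ^ α j :=
    lt_of_lt_of_le (Finset.prod_pos fun j _ => pow_pos (hwpos j) _)
      (hymax (show w ∈ K from ⟨fun j => (hwpos j).le, hw1⟩))
  refine ⟨y, hy0, fun j hj => ?_, hy1, fun x hx hx1 => hymax (show x ∈ K from ⟨hx, hx1⟩)⟩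
  refine lt_of_le_of_ne (hy0 j) fun h => ?_
  refine hyP.ne' (Finset.prod_eq_zero (Finset.mem_univ j) ?_)
  rw [← h, zero_pow hj]

/-- **Duality of characteristics via Lozanovskii factorization:
`c_{X_n}(α) · c_{X_n'}(α) = m^m / α^α`, realized by a factorization `u_j v_j = α_j/m`.** -/
theorem stmt_14 (n m : ℕ) (hm : 1 ≤ m) (ν : (Fin n → ℂ) → ℝ)
    (hdef : ∀ z, ν z = 0 → z = 0)
    (hsmul : ∀ (a : ℂ) (z : Fin n → ℂ), ν (a • z) = ‖a‖ * ν z)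
    (htri : ∀ z w : Fin n → ℂ, ν (z + w) ≤ ν z + ν w)
    (hmono : ∀ z w : Fin n → ℂ, (∀ j, ‖z j‖ ≤ ‖w j‖) → ν z ≤ ν w)
    (α : Fin n → ℕ) (hα : ∑ j, α j = m) :
    (monoSup n ν α)⁻¹ * (monoSup n (kotheDual n ν) α)⁻¹
        = (m : ℝ) ^ m / ∏ j, (α j : ℝ) ^ (α j) ∧
      ∃ u v : Fin n → ℝ,
        (∀ j, 0 ≤ u j) ∧ (∀ j, 0 ≤ v j) ∧
        ν (fun j => (u j : ℂ)) = 1 ∧ kotheDual n ν (fun j => (v j : ℂ)) = 1 ∧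
        (∀ j, u j * v j = (α j : ℝ) / m) ∧
        (monoSup n ν α)⁻¹ = (∏ j, u j ^ α j)⁻¹ ∧
        (monoSup n (kotheDual n ν) α)⁻¹ = (∏ j, v j ^ α j)⁻¹ := by
  have hm0 : (0 : ℝ) < m := by exact_mod_cast hm
  have hαR : ∑ j, (α j : ℝ) = m := by exact_mod_cast hα
  obtain ⟨u, hu0, hupos, hu1, humax⟩ := exists_maximizer hm ν hdef hsmul htri hmono α hα
  obtain ⟨C, hC⟩ := exists_coord_bound ν hdef hsmul hmono
  have habs : ∀ z : Fin n → ℂ, ν z ≤ 1 → ν (fun j => ((‖z j‖ : ℝ) : ℂ)) ≤ 1 := fun z hz =>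
    (hmono _ _ fun j => by simp).trans hz
  set v : Fin n → ℝ := fun j => (α j : ℝ) / (m * u j) with hv
  have hv0 : ∀ j, 0 ≤ v j := fun j => div_nonneg (Nat.cast_nonneg _) (mul_nonneg hm0.le (hu0 j))
  have huv : ∀ j, u j * v j = (α j : ℝ) / m := fun j => by
    by_cases h : α j = 0
    · simp [hv, h]
    · have := (hupos j h).ne'
      simp only [hv]
      field_simp
  have huv1 : ∑ j, u j * v j = 1 := by
    simp only [huv]
    rw [← Finset.sum_div, hαR, div_self hm0.ne']
  -- `v` lies in the unit ball of the dual norm.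
  have hpair : ∀ x : Fin n → ℝ, (∀ j, 0 ≤ x j) → ν (fun j => (x j : ℂ)) ≤ 1 →
      ∑ j, v j * x j ≤ 1 := by
    intro x hx hx1
    have h := sum_div_le_of_isMax α u x hupos hu0 hx fun t h0 h1 => by
      refine humax (fun j => (1 - t) * u j + t * x j)
        (fun j => add_nonneg (mul_nonneg (by linarith) (hu0 j)) (mul_nonneg h0.le (hx j))) ?_
      have e : (fun j => (((1 - t) * u j + t * x j : ℝ) : ℂ))
          = ((1 - t : ℝ) : ℂ) • (fun j => (u j : ℂ)) + (t : ℂ) • (fun j => (x j : ℂ)) := by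
        ext j; simp
      rw [e]
      refine (htri _ _).trans ?_
      rw [hsmul, hsmul, Complex.norm_real, Complex.norm_real, Real.norm_eq_abs, Real.norm_eq_abs,
        abs_of_pos h0, abs_of_pos (by linarith : 0 < 1 - t)]
      nlinarith
    rw [hαR] at h
    have e : ∑ j, v j * x j = (∑ j, (α j : ℝ) * (x j / u j)) / m := by
      rw [Finset.sum_div]
      refine Finset.sum_congr rfl fun j _ => ?_
      simp only [hv, div_eq_mul_inv, mul_inv]
      ring
    rw [e]
    exact (div_le_one hm0).2 h
  have hdualv : kotheDual n ν (fun j => (v j : ℂ)) = 1 := by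
    refine IsGreatest.csSup_eq ⟨⟨fun j => (u j : ℂ), hu1, ?_⟩, ?_⟩
    · rw [← huv1]
      refine Finset.sum_congr rfl fun j _ => ?_
      rw [norm_mul, Complex.norm_real, Complex.norm_real, Real.norm_of_nonneg (hv0 j),
        Real.norm_of_nonneg (hu0 j), mul_comm]
    · rintro t ⟨x, hx, rfl⟩
      refine le_trans (le_of_eq ?_) (hpair (fun j => ‖x j‖) (fun j => norm_nonneg _) (habs x hx))
      refine Finset.sum_congr rfl fun j _ => ?_
      rw [norm_mul, Complex.norm_real, Real.norm_of_nonneg (hv0 j)]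
  have hνu : ν (fun j => (u j : ℂ)) = 1 := by
    refine le_antisymm hu1 ?_
    set s := ν (fun j => (u j : ℂ)) with hs
    have hs0 : 0 ≤ s := by
      have h0 : ν 0 = 0 := by simpa using hsmul 0 0
      rw [hs, ← h0]
      exact hmono _ _ fun i => by simp
    have hspos : 0 < s := by
      refine lt_of_le_of_ne hs0 fun h => ?_
      have hz := hdef _ (hs.symm.trans h.symm)
      have hu00 : ∀ j, u j = 0 := fun j => by simpa using congrFun hz j
      simp [hu00] at huv1
    have h := hpair (fun j => s⁻¹ * u j) (fun j => mul_nonneg (inv_nonneg.2 hs0) (hu0 j)) (by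
      have e : (fun j => ((s⁻¹ * u j : ℝ) : ℂ)) = ((s⁻¹ : ℝ) : ℂ) • (fun j => (u j : ℂ)) := by
        ext j; simp
      rw [e, hsmul, ← hs, Complex.norm_real, Real.norm_of_nonneg (inv_nonneg.2 hs0),
        inv_mul_cancel₀ hspos.ne'])
    have e : ∑ j, v j * (s⁻¹ * u j) = s⁻¹ := by
      have e1 : ∑ j, v j * (s⁻¹ * u j) = s⁻¹ * ∑ j, u j * v j := by
        rw [Finset.mul_sum]
        exact Finset.sum_congr rfl fun j _ => by ring
      rw [e1, huv1, mul_one]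
    rw [e] at h
    exact (inv_le_one₀ hspos).1 h
  have hnormprod : ∀ z : Fin n → ℂ, ‖∏ j, z j ^ α j‖ = ∏ j, ‖z j‖ ^ α j := fun z => by
    simp [norm_prod]
  have hcast : ∀ x : Fin n → ℝ, (∀ j, 0 ≤ x j) →
      ‖∏ j, (x j : ℂ) ^ α j‖ = ∏ j, x j ^ α j := fun x hx => by
    rw [hnormprod]
    exact Finset.prod_congr rfl fun j _ => by rw [Complex.norm_real, Real.norm_of_nonneg (hx j)]
  have hU : monoSup n ν α = ∏ j, u j ^ α j := by
    refine IsGreatest.csSup_eq ⟨⟨fun j => (u j : ℂ), hu1, (hcast u hu0).symm⟩, ?_⟩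
    rintro t ⟨z, hz, rfl⟩
    rw [hnormprod]
    exact humax _ (fun j => norm_nonneg _) (habs z hz)
  have hV : monoSup n (kotheDual n ν) α = ∏ j, v j ^ α j := by
    refine IsGreatest.csSup_eq ⟨⟨fun j => (v j : ℂ), hdualv.le, (hcast v hv0).symm⟩, ?_⟩
    rintro t ⟨z, hz, rfl⟩
    rw [hnormprod]
    refine prod_pow_le_of_sum_mul_le hm α hα u v _ hv0 hu0 (fun j => norm_nonneg _) huv ?_
    refine le_trans ?_ hz
    -- Boundedness of the ball makes the supremum defining the dual norm a genuine one.
    refine le_csSup ⟨∑ j, ‖z j‖ * C j, ?_⟩ ⟨fun j => (u j : ℂ), hu1, ?_⟩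
    · rintro t ⟨x, hx, rfl⟩
      refine Finset.sum_le_sum fun j _ => ?_
      rw [norm_mul]
      exact mul_le_mul_of_nonneg_left (hC x hx j) (norm_nonneg _)
    · refine Finset.sum_congr rfl fun j _ => ?_
      rw [norm_mul, Complex.norm_real, Real.norm_of_nonneg (hu0 j)]
  refine ⟨?_, u, v, hu0, hv0, hνu, hdualv, huv, by rw [hU], by rw [hV]⟩
  rw [hU, hV, ← mul_inv, ← Finset.prod_mul_distrib]
  have e : ∏ j, u j ^ α j * v j ^ α j = (∏ j, (α j : ℝ) ^ α j) / (m : ℝ) ^ m := by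
    conv_rhs => rw [← hα, ← Finset.prod_pow_eq_pow_sum, hα]
    rw [← Finset.prod_div_distrib]
    exact Finset.prod_congr rfl fun j _ => by rw [← mul_pow, huv j, div_pow]
  rw [e, inv_div]
end

section
/- Let X_n = (ℂⁿ,‖·‖) be a symmetric Banach lattice, i.e. ‖z‖ depends only on the moduli of the coordinates and is invariant under permutations of the coordinates. Let 1 ≤ m ≤ n and let α ∈ ℕ₀ⁿ be a tetrahedral multi-index of order m, i.e. α_j ∈ {0,1} for all j and α₁ + ⋯ + α_n = m. Then sup_{‖z‖≤1} |z^α| = φ_{X_n}(m)^{-m}, equivalently c_{X_n}(α) = φ_{X_n}(m)^m, where φ_{X_n}(m) = ‖e₁ + ⋯ + e_m‖ is the fundamental function of X_n and e₁, …, e_n the standard unit vectors of ℂⁿ. -/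
/-!
Write `S` for the support of `α`, a set of `m` coordinates, so that `|z^α| = ∏_{j ∈ S} |z_j|`, and
`φ = ‖1_S‖`, which by permutation invariance is the value of the fundamental function at `m`
(`norm_indicator_eq`).

The point `φ⁻¹ • 1_S` of the unit sphere gives the value `φ⁻ᵐ`. For the upper bound, let `‖z‖ ≤ 1`
and average `|z| 1_S` over the powers of a permutation `c` acting on `S` as a single cycle:
`∑_{k < m} (|z| 1_S) ∘ c^k = (∑_{j ∈ S} |z_j|) 1_S`. Every summand has norm at most `1`, hence
`(∑_{j ∈ S} |z_j|) φ ≤ m` (`sum_mul_norm_indicator_le`), and the inequality between the geometric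
and the arithmetic mean gives `∏_{j ∈ S} |z_j| ≤ φ⁻ᵐ`.
-/

/-- A permutation-invariant function takes the same value at the indicators of sets with equal
cardinality. -/
lemma norm_indicator_eq {n m : ℕ} (hmn : m ≤ n) (ν : (Fin n → ℂ) → ℝ)
    (hperm : ∀ (σ : Equiv.Perm (Fin n)) (z : Fin n → ℂ), ν (z ∘ σ) = ν z)
    (S : Finset (Fin n)) (hS : S.card = m) :
    (ν fun j => if (j : ℕ) < m then (1 : ℂ) else 0) = ν fun j => if j ∈ S then (1 : ℂ) else 0 := by
  have hcard : Fintype.card {j : Fin n // j ∈ S} = Fintype.card {j : Fin n // (j : ℕ) < m} := by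
    rw [Fintype.card_coe, hS, Fintype.card_subtype, Fin.card_filter_val_lt, min_eq_right hmn]
  let e := Fintype.equivOfCardEq hcard
  rw [← hperm e.extendSubtype]
  congr 1
  funext j
  by_cases hj : j ∈ S
  · have := e.extendSubtype_mem j hj
    simp [hj, this]
  · have := e.extendSubtype_not_mem j hj
    simp only [Function.comp_apply, hj, this, if_false]

/-- Averaging over a cyclic permutation of `S` does not increase the norm: the constant vector on
`S` whose entries are the mean of the `|z_j|`, `j ∈ S`, has norm at most `1` if `z` does. -/
lemma sum_mul_norm_indicator_le {n : ℕ} (ν : (Fin n → ℂ) → ℝ)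
    (hsmul : ∀ (a : ℂ) (z : Fin n → ℂ), ν (a • z) = ‖a‖ * ν z)
    (htri : ∀ z w : Fin n → ℂ, ν (z + w) ≤ ν z + ν w)
    (hmono : ∀ z w : Fin n → ℂ, (∀ j, ‖z j‖ ≤ ‖w j‖) → ν z ≤ ν w)
    (hperm : ∀ (σ : Equiv.Perm (Fin n)) (z : Fin n → ℂ), ν (z ∘ σ) = ν z)
    (S : Finset (Fin n)) (z : Fin n → ℂ) (hz : ν z ≤ 1) :
    (∑ j ∈ S, ‖z j‖) * (ν fun j => if j ∈ S then (1 : ℂ) else 0) ≤ S.card := by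
  have hzero : ν 0 = 0 := by simpa using hsmul 0 0
  obtain ⟨c, hc, hsupp⟩ := S.exists_cycleOn
  set w : Fin n → ℂ := fun j => if j ∈ S then (‖z j‖ : ℂ) else 0 with hw
  have hw1 : ν w ≤ 1 := by
    refine (hmono w z fun j => ?_).trans hz
    by_cases hj : j ∈ S <;> simp [hw, hj]
  have key : ∑ k ∈ Finset.range S.card, w ∘ ⇑(c ^ k) =
      ((∑ j ∈ S, ‖z j‖ : ℝ) : ℂ) • fun j => if j ∈ S then (1 : ℂ) else 0 := by
    funext j
    simp only [Finset.sum_apply, Function.comp_apply, Pi.smul_apply, smul_eq_mul]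
    by_cases hj : j ∈ S
    · -- Testing the double-sum identity for cycles against the point mass at `j`.
      have h := Finset.sum_mul_sum_eq_sum_perm hc (Pi.single j (1 : ℂ)) w
      simp only [Pi.single_apply, ite_mul, one_mul, zero_mul, Finset.sum_ite_eq', hj, if_true] at h
      rw [← h]
      simp only [hj, if_true, mul_one, Complex.ofReal_sum]
      exact Finset.sum_congr rfl fun i hi => by simp [hw, hi]
    · have hfix : c j = j := by
        by_contra h
        exact hj (hsupp (Equiv.Perm.mem_support.2 h))
      simp [Equiv.Perm.pow_apply_eq_self_of_apply_eq_self hfix, hw, hj]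
  have hsum := Finset.le_sum_of_subadditive ν hzero.le htri (Finset.range S.card)
    fun k => w ∘ ⇑(c ^ k)
  rw [key, hsmul, Complex.norm_real,
    Real.norm_of_nonneg (Finset.sum_nonneg fun _ _ => norm_nonneg _)] at hsum
  refine hsum.trans ?_
  simp only [hperm, Finset.sum_const, Finset.card_range, nsmul_eq_mul]
  exact mul_le_of_le_one_right (Nat.cast_nonneg _) hw1

lemma prod_le_mean_pow {ι : Type*} (S : Finset ι) (hS : 0 < S.card) (x : ι → ℝ)
    (hx : ∀ i ∈ S, 0 ≤ x i) : ∏ i ∈ S, x i ≤ ((∑ i ∈ S, x i) / S.card) ^ S.card := by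
  have h := Real.geom_mean_le_arith_mean S (fun _ => 1) x (by simp) (by simpa using hS) hx
  simp only [Real.rpow_one, one_mul, Finset.sum_const, nsmul_eq_mul, mul_one] at h
  have hp : 0 ≤ ∏ i ∈ S, x i := Finset.prod_nonneg hx
  calc ∏ i ∈ S, x i = ((∏ i ∈ S, x i) ^ (S.card : ℝ)⁻¹) ^ S.card :=
        (Real.rpow_inv_natCast_pow hp hS.ne').symm
    _ ≤ _ := pow_le_pow_left₀ (Real.rpow_nonneg hp _) h _

/-- **For a symmetric Banach lattice norm on `ℂⁿ` and a tetrahedral multi-index `α` of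
order `m`, the norm of the monomial `z^α` is `φ_{X_n}(m)^{-m}`, where `φ_{X_n}` is the
fundamental function; equivalently, the characteristic is `c_{X_n}(α) = φ_{X_n}(m)^m`.** -/
theorem stmt_15 (n m : ℕ) (hm : 1 ≤ m) (hmn : m ≤ n) (ν : (Fin n → ℂ) → ℝ)
    (hdef : ∀ z, ν z = 0 → z = 0)
    (hsmul : ∀ (a : ℂ) (z : Fin n → ℂ), ν (a • z) = ‖a‖ * ν z)
    (htri : ∀ z w : Fin n → ℂ, ν (z + w) ≤ ν z + ν w)
    (hmono : ∀ z w : Fin n → ℂ, (∀ j, ‖z j‖ ≤ ‖w j‖) → ν z ≤ ν w)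
    (hmod : ∀ z w : Fin n → ℂ, (∀ j, ‖z j‖ = ‖w j‖) → ν z = ν w)
    (hperm : ∀ (σ : Equiv.Perm (Fin n)) (z : Fin n → ℂ), ν (z ∘ σ) = ν z)
    (α : Fin n → ℕ) (htet : ∀ j, α j ≤ 1) (hord : ∑ j, α j = m) :
    sSup {t : ℝ | ∃ z : Fin n → ℂ, ν z ≤ 1 ∧ t = ‖∏ j, z j ^ α j‖}
        = ((ν fun j => if (j : ℕ) < m then (1 : ℂ) else 0) ^ m)⁻¹ ∧
      (sSup {t : ℝ | ∃ z : Fin n → ℂ, ν z ≤ 1 ∧ t = ‖∏ j, z j ^ α j‖})⁻¹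
        = (ν fun j => if (j : ℕ) < m then (1 : ℂ) else 0) ^ m := by
  classical
  set S : Finset (Fin n) := Finset.univ.filter fun j => α j = 1 with hSdef
  have hα : ∀ j, α j = if j ∈ S then 1 else 0 := fun j => by
    have := htet j
    by_cases h : α j = 1
    · simp [hSdef, h]
    · simp [hSdef, h]; omega
  have hcard : S.card = m := by
    rw [← hord, Finset.sum_congr rfl fun j _ => hα j]; simp
  have hmon : ∀ z : Fin n → ℂ, ‖∏ j, z j ^ α j‖ = ∏ j ∈ S, ‖z j‖ := fun z => by
    rw [norm_prod, Finset.prod_congr rfl fun j _ => by rw [hα j]]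
    simp only [pow_ite, pow_one, pow_zero, apply_ite norm, norm_one]
    simp
  rw [norm_indicator_eq hmn ν hperm S hcard]
  set φ := ν fun j => if j ∈ S then (1 : ℂ) else 0 with hφ
  have hzero : ν 0 = 0 := by simpa using hsmul 0 0
  have hφ0 : 0 < φ := by
    refine lt_of_le_of_ne (hzero ▸ hmono 0 _ fun j => by simp) fun h => ?_
    obtain ⟨j, hj⟩ := Finset.card_pos.1 (hcard ▸ hm : 0 < S.card)
    have := congrFun (hdef _ h.symm) j
    simp [hj] at this
  have hsup : sSup {t : ℝ | ∃ z : Fin n → ℂ, ν z ≤ 1 ∧ t = ‖∏ j, z j ^ α j‖} = (φ ^ m)⁻¹ := by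
    refine IsGreatest.csSup_eq ⟨⟨((φ⁻¹ : ℝ) : ℂ) • fun j => if j ∈ S then (1 : ℂ) else 0, ?_, ?_⟩, ?_⟩
    · rw [hsmul, ← hφ, Complex.norm_real, Real.norm_of_nonneg (inv_nonneg.2 hφ0.le),
        inv_mul_cancel₀ hφ0.ne']
    · rw [hmon, Finset.prod_congr rfl (g := fun _ => φ⁻¹) fun j hj => ?_, Finset.prod_const,
        hcard, inv_pow]
      rw [Pi.smul_apply, if_pos hj, smul_eq_mul, mul_one, Complex.norm_real,
        Real.norm_of_nonneg (inv_nonneg.2 hφ0.le)]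
    · rintro t ⟨z, hz, rfl⟩
      have hS : 0 < S.card := hcard ▸ hm
      have havg := sum_mul_norm_indicator_le ν hsmul htri hmono hperm S z hz
      rw [hmon, ← inv_pow, ← hcard]
      refine (prod_le_mean_pow S hS _ fun _ _ => norm_nonneg _).trans
        (pow_le_pow_left₀ (div_nonneg (Finset.sum_nonneg fun _ _ => norm_nonneg _)
          (Nat.cast_nonneg _)) ?_ _)
      rw [div_le_iff₀ (by exact_mod_cast hS), inv_mul_eq_div, le_div_iff₀ hφ0]
      exact havg
  exact ⟨hsup, by rw [hsup, inv_inv]⟩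
end

section
/- Let (λ_n)_{n∈ℕ} be a strictly increasing sequence of nonnegative real numbers (a frequency) and let J ⊂ ℕ be a finite nonempty set. Then the limit lim_{T→∞} (1/(2T)) ∫_{−T}^{T} |Σ_{n∈J} e^{−i λ_n t}| dt exists and equals inf{‖Q‖ : Q a bounded linear projection of ℓ∞(ℝ) onto the linear span of the functions t ↦ e^{−i λ_n t}, n ∈ J}, where ℓ∞(ℝ) is the Banach space of all bounded functions ℝ → ℂ with the supremum norm. -/
/-!
Let `D(s) = ∑_{k ∈ J} e^{-iλ_k s}`.

*The mean exists.* By Weierstrass, `|D|` is a uniform limit of trigonometric polynomials of the form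
`|D|² p(|D|²)` (`exists_approx`). Every averaging procedure that kills the nontrivial characters
therefore assigns the same mean `M` to `|D|` (`exists_mean`). Besides the averages over `[-T, T]`,
averages over finer and longer finite grids are used, since elements of `ℓ∞(ℝ)` need not be
measurable.

*Lower bound.* Let `Q` be a projection. For a trigonometric polynomial `f`, the mean over `s` of
`(Q f(· + s))(-s)`, which is at most `‖Q‖ ‖f‖`, equals the mean of `f · conj D`
(`translation_average`). Taking for `f` an approximation `D p(|D|²)` of `D / |D|` gives `M ≤ ‖Q‖`
(`mean_le_norm`).

*Upper bound.* The convolution `(Q f)(t) = lim_N (grid average over s of f(s) D(t - s))`, with the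
limit taken along a nonprincipal ultrafilter, is a projection onto the span by the orthogonality of
the characters, and `|(Q f)(t)| ≤ ‖f‖ M` (`exists_projection`). Hence the infimum is attained and
equals `M`.
-/

open MeasureTheory Filter Topology
open scoped ENNReal

/-- The span, inside `ℓ∞(ℝ)`, of the functions `t ↦ e^{-i λ_n t}`, `n ∈ J`; an isometric
copy of the space `ℋ∞^J(λ)` of `λ`-Dirichlet polynomials supported on `J`. -/
def freqSpan (lam : ℕ → ℝ) (J : Finset ℕ) : Set (lp (fun _ : ℝ => ℂ) ∞) :=
  {f | ∃ a : ℕ → ℂ, ∀ t : ℝ,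
      f t = ∑ k ∈ J, a k * Complex.exp (-(Complex.I * (lam k : ℂ) * (t : ℂ)))}

noncomputable section

namespace DirichletProj

/-! ### Characters and their averages -/

/-- The character `s ↦ e^{-iμs}` of `ℝ`. -/
def ee (μ s : ℝ) : ℂ := Complex.exp (-(Complex.I * (μ : ℂ) * (s : ℂ)))

lemma ee_mul (μ ν s : ℝ) : ee μ s * ee ν s = ee (μ + ν) s := by
  simp only [ee, ← Complex.exp_add]; congr 1; push_cast; ring

lemma ee_add (μ s t : ℝ) : ee μ (s + t) = ee μ s * ee μ t := by
  simp only [ee, ← Complex.exp_add]; congr 1; push_cast; ring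

lemma ee_neg (μ s : ℝ) : ee μ (-s) = ee (-μ) s := by
  simp [ee]

lemma ee_zero (s : ℝ) : ee 0 s = 1 := by simp [ee]

lemma norm_ee (μ s : ℝ) : ‖ee μ s‖ = 1 := by
  rw [ee, Complex.norm_exp]; simp

lemma star_ee (μ s : ℝ) : (starRingEnd ℂ) (ee μ s) = ee (-μ) s := by
  rw [ee, ← Complex.exp_conj]; simp [ee]

lemma continuous_ee (μ : ℝ) : Continuous (ee μ) := by
  unfold ee; fun_prop

lemma ee_natMul (μ s : ℝ) (n : ℕ) : ee μ (n * s) = ee μ s ^ n := by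
  rw [ee, ee, ← Complex.exp_nat_mul]; congr 1; push_cast; ring

/-- The average of `g` over the first `(N+1)²` points of the grid of mesh `1/(N+1)`.
Both the mesh and the covered interval improve with `N`, so these averages kill every nontrivial
character in the limit, while making sense for arbitrary bounded functions. -/
def grid (N : ℕ) (g : ℝ → ℂ) : ℂ :=
  (((N : ℂ) + 1) ^ 2)⁻¹ * ∑ n ∈ Finset.range ((N + 1) ^ 2), g (n * ((N : ℝ) + 1)⁻¹)

/-- The average of `g` over `[-T, T]`. -/
def itg (T : ℝ) (g : ℝ → ℂ) : ℂ := (1 / (2 * T) : ℝ) * ∫ t in (-T)..T, g t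

lemma grid_add (N : ℕ) (f g : ℝ → ℂ) : grid N (f + g) = grid N f + grid N g := by
  simp [grid, Finset.sum_add_distrib, mul_add]

lemma grid_smul (N : ℕ) (c : ℂ) (f : ℝ → ℂ) : grid N (c • f) = c * grid N f := by
  simp [grid, ← Finset.mul_sum]; ring

lemma grid_sum {ι : Type*} (J : Finset ι) (N : ℕ) (f : ι → ℝ → ℂ) :
    grid N (∑ k ∈ J, f k) = ∑ k ∈ J, grid N (f k) := by
  simp only [grid, Finset.sum_apply]
  rw [Finset.sum_comm, Finset.mul_sum]

lemma grid_le (N : ℕ) (f : ℝ → ℂ) (h : ℝ → ℝ) (H : ∀ s, ‖f s‖ ≤ h s) :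
    ‖grid N f‖ ≤ (grid N (fun s => (h s : ℂ))).re := by
  have e : grid N (fun s => (h s : ℂ)) =
      (((((N : ℝ) + 1) ^ 2)⁻¹ * ∑ n ∈ Finset.range ((N + 1) ^ 2),
        h (n * ((N : ℝ) + 1)⁻¹) : ℝ) : ℂ) := by
    simp [grid]
  rw [e, Complex.ofReal_re, grid, norm_mul]
  have e2 : ‖(((N : ℂ) + 1) ^ 2)⁻¹‖ = (((N : ℝ) + 1) ^ 2)⁻¹ := by
    rw [norm_inv, norm_pow]
    norm_cast
  rw [e2]
  gcongr
  exact norm_sum_le_of_le _ fun i _ => H _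

lemma grid_const (N : ℕ) (c : ℂ) : grid N (fun _ => c) = c := by
  have : (N : ℂ) + 1 ≠ 0 := by exact_mod_cast N.succ_ne_zero
  simp [grid]
  field_simp

lemma grid_bound (N : ℕ) (f : ℝ → ℂ) (C : ℝ) (H : ∀ s, ‖f s‖ ≤ C) : ‖grid N f‖ ≤ C := by
  simpa [grid_const] using grid_le N f (fun _ => C) H

lemma tendsto_grid_ee (μ : ℝ) (hμ : μ ≠ 0) :
    Tendsto (fun N : ℕ => grid N (ee μ)) atTop (𝓝 0) := by
  -- the rescaled increments `(N+1)(e^{-iμ/(N+1)} - 1)` converge to the derivative `-iμ` at `0`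
  have hd : HasDerivAt (ee μ) (-(Complex.I * μ)) 0 := by
    have h1 : HasDerivAt (fun s : ℝ => -(Complex.I * (μ : ℂ) * (s : ℂ))) (-(Complex.I * μ * 1)) 0 :=
      ((Complex.ofRealCLM.hasDerivAt (x := (0 : ℝ))).const_mul (Complex.I * (μ : ℂ))).neg
    have := h1.cexp
    simp only [Complex.ofReal_zero, mul_zero, neg_zero, Complex.exp_zero, mul_one, one_mul] at this
    exact this
  have hx : Tendsto (fun N : ℕ => ((N : ℝ) + 1)⁻¹) atTop (𝓝[≠] 0) := by
    refine tendsto_nhdsWithin_iff.2 ⟨?_, Eventually.of_forall fun N => ?_⟩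
    · simpa using tendsto_one_div_add_atTop_nhds_zero_nat (𝕜 := ℝ)
    · simp only [Set.mem_compl_iff, Set.mem_singleton_iff]; positivity
  have hs := (hasDerivAt_iff_tendsto_slope_zero.1 hd).comp hx
  have hs' : Tendsto (fun N : ℕ => ((N : ℂ) + 1) * (ee μ ((N : ℝ) + 1)⁻¹ - 1)) atTop
      (𝓝 (-(Complex.I * μ))) := by
    refine hs.congr fun N => ?_
    simp only [Function.comp, inv_inv, zero_add]
    rw [Complex.real_smul]
    simp [ee]
  have hne : -(Complex.I * (μ : ℂ)) ≠ 0 := by simp [hμ]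
  have hsi := hs'.inv₀ hne
  have hz : Tendsto (fun N : ℕ => ((N : ℂ) + 1)⁻¹) atTop (𝓝 0) := by
    simpa using tendsto_one_div_add_atTop_nhds_zero_nat (𝕜 := ℂ)
  have hzn := ((hz.mul hsi).norm).mul_const 2
  simp only [zero_mul, norm_zero] at hzn
  refine squeeze_zero_norm' ?_ hzn
  filter_upwards [hs'.eventually_ne hne] with N hN
  have hz1 : ee μ ((N : ℝ) + 1)⁻¹ - 1 ≠ 0 := right_ne_zero_of_mul hN
  have hN1 : (N : ℂ) + 1 ≠ 0 := left_ne_zero_of_mul hN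
  have e : grid N (ee μ) = ((N : ℂ) + 1)⁻¹ * (((N : ℂ) + 1) * (ee μ ((N : ℝ) + 1)⁻¹ - 1))⁻¹ *
      (ee μ ((N : ℝ) + 1)⁻¹ ^ ((N + 1) ^ 2) - 1) := by
    simp only [grid, ee_natMul]
    generalize ee μ ((N : ℝ) + 1)⁻¹ = z at hz1
    rw [← mul_geom_sum]
    field_simp
  rw [e, norm_mul]
  gcongr
  refine (norm_sub_le _ _).trans ?_
  rw [norm_pow, norm_ee]; norm_num

lemma tendsto_itg_ee (μ : ℝ) (hμ : μ ≠ 0) :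
    Tendsto (fun T : ℝ => itg T (ee μ)) atTop (𝓝 0) := by
  have h0 : Tendsto (fun T : ℝ => (1 / (2 * T)) * (2 / |μ|)) atTop (𝓝 0) := by
    have : Tendsto (fun T : ℝ => 1 / (2 * T)) atTop (𝓝 0) := by
      simp only [one_div]
      exact tendsto_inv_atTop_zero.comp (tendsto_id.const_mul_atTop (by norm_num))
    simpa using this.mul_const (2 / |μ|)
  refine squeeze_zero_norm' ?_ h0
  filter_upwards [eventually_gt_atTop 0] with T hT
  have hne : -(Complex.I * (μ : ℂ)) ≠ 0 := by simp [hμ]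
  have e : ∫ t in (-T)..T, ee μ t = (ee μ T - ee μ (-T)) / (-(Complex.I * μ)) := by
    have := integral_exp_mul_complex (a := -T) (b := T) hne
    simpa [ee, neg_mul] using this
  rw [itg, e, norm_mul, norm_div, Complex.norm_real, Real.norm_of_nonneg (by positivity)]
  have : ‖-(Complex.I * (μ : ℂ))‖ = |μ| := by simp
  rw [this]
  gcongr
  refine (norm_sub_le _ _).trans ?_
  rw [norm_ee, norm_ee]; norm_num

/-! ### Trigonometric polynomials and the kernel -/

/-- The space of trigonometric polynomials on `ℝ` with arbitrary real frequencies. -/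
def trigPoly : Submodule ℂ (ℝ → ℂ) := Submodule.span ℂ (Set.range ee)

lemma ee_mem (μ : ℝ) : ee μ ∈ trigPoly := Submodule.subset_span ⟨μ, rfl⟩

lemma trigPoly_mul {f g : ℝ → ℂ} (hf : f ∈ trigPoly) (hg : g ∈ trigPoly) : f * g ∈ trigPoly := by
  have hle : trigPoly * trigPoly ≤ trigPoly := by
    rw [trigPoly, Submodule.span_mul_span, Submodule.span_le]
    rintro _ ⟨_, ⟨μ, rfl⟩, _, ⟨ν, rfl⟩, rfl⟩
    have : ee μ * ee ν = ee (μ + ν) := funext fun s => ee_mul μ ν s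
    simp only [this]
    exact ee_mem (μ + ν)
  exact hle (Submodule.mul_mem_mul hf hg)

lemma trigPoly_pow {f : ℝ → ℂ} (hf : f ∈ trigPoly) (n : ℕ) : f ^ n ∈ trigPoly := by
  induction n with
  | zero =>
    have : (f ^ 0 : ℝ → ℂ) = ee 0 := by ext s; simp [ee_zero]
    rw [this]; exact ee_mem 0
  | succ n ih => rw [pow_succ]; exact trigPoly_mul ih hf

/-- The Dirichlet polynomial `∑_{k ∈ J} e^{-iλ_k s}`, which acts as a Dirichlet kernel. -/
def dd (lam : ℕ → ℝ) (J : Finset ℕ) (s : ℝ) : ℂ := ∑ k ∈ J, ee (lam k) s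

variable (lam : ℕ → ℝ) (J : Finset ℕ)

lemma dd_mem : dd lam J ∈ trigPoly := by
  have : dd lam J = ∑ k ∈ J, ee (lam k) := by ext s; simp [dd]
  rw [this]
  exact Submodule.sum_mem _ fun k _ => ee_mem _

lemma dd_neg_mem : (fun s => dd lam J (-s)) ∈ trigPoly := by
  have : (fun s => dd lam J (-s)) = ∑ k ∈ J, ee (-lam k) := by ext s; simp [dd, ee_neg]
  rw [this]
  exact Submodule.sum_mem _ fun k _ => ee_mem _

lemma dd_neg (s : ℝ) : dd lam J (-s) = (starRingEnd ℂ) (dd lam J s) := by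
  simp [dd, map_sum, star_ee, ee_neg]

lemma norm_dd_neg (s : ℝ) : ‖dd lam J (-s)‖ = ‖dd lam J s‖ := by
  rw [dd_neg]; exact RCLike.norm_conj _

lemma dd_mul_neg (s : ℝ) : dd lam J s * dd lam J (-s) = ((‖dd lam J s‖ ^ 2 : ℝ) : ℂ) := by
  rw [dd_neg, Complex.mul_conj, Complex.normSq_eq_norm_sq]

lemma norm_dd_le (s : ℝ) : ‖dd lam J s‖ ≤ J.card := by
  refine (norm_sum_le _ _).trans ?_
  simp [norm_ee]

lemma continuous_dd : Continuous (dd lam J) := by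
  unfold dd
  exact continuous_finsetSum _ fun k _ => continuous_ee _

/-- A trigonometric polynomial `R` approximating the unimodular factor `D/|D|` of the kernel `D`:
it has the form `R = D · p(|D|²)` with `p` a Weierstrass approximation of `y ↦ 1/(√y + ε/2)`. -/
lemma exists_approx (ε : ℝ) (hε : 0 < ε) : ∃ R ∈ trigPoly, (∀ s, ‖R s‖ ≤ 1 + ε) ∧
    ∀ s, ‖((‖dd lam J s‖ : ℝ) : ℂ) - R s * dd lam J (-s)‖ ≤ ε := by
  set C : ℝ := J.card + 1 with hC
  have hC1 : 1 ≤ C := by simp [hC]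
  set η : ℝ := ε / (2 * C ^ 2) with hη
  have hη0 : 0 < η := by positivity
  have hcont : Continuous fun y : ℝ => 1 / (√y + ε / 2) := by
    refine continuous_const.div (by fun_prop) fun y => ?_
    have := Real.sqrt_nonneg y
    positivity
  obtain ⟨p, hp⟩ := exists_polynomial_near_of_continuousOn 0 (C ^ 2) _ hcont.continuousOn η hη0
  have hpmem : (fun s => ((p.eval (‖dd lam J s‖ ^ 2) : ℝ) : ℂ)) ∈ trigPoly := by
    have : (fun s => ((p.eval (‖dd lam J s‖ ^ 2) : ℝ) : ℂ)) =
        ∑ i ∈ Finset.range (p.natDegree + 1),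
          (p.coeff i : ℂ) • (dd lam J * fun s => dd lam J (-s)) ^ i := by
      ext s
      rw [Polynomial.eval_eq_sum_range]
      simp [dd_mul_neg]
    rw [this]
    exact Submodule.sum_mem _ fun i _ => Submodule.smul_mem _ _
      (trigPoly_pow (trigPoly_mul (dd_mem _ _) (dd_neg_mem _ _)) i)
  refine ⟨_, trigPoly_mul (dd_mem lam J) hpmem, fun s => ?_, fun s => ?_⟩
  all_goals
    have hx0 : 0 ≤ ‖dd lam J s‖ := norm_nonneg _
    have hxC : ‖dd lam J s‖ ≤ C := (norm_dd_le lam J s).trans (by simp [hC])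
    have hx := hp (‖dd lam J s‖ ^ 2) ⟨by positivity, by gcongr⟩
    rw [Real.sqrt_sq hx0, abs_lt] at hx
    have hCη : C ^ 2 * η = ε / 2 := by rw [hη]; field_simp
  · rw [Pi.mul_apply, norm_mul, Complex.norm_real, Real.norm_eq_abs]
    generalize ‖dd lam J s‖ = x at *
    generalize Polynomial.eval (x ^ 2) p = y at *
    have h1 : |y| ≤ 1 / (x + ε / 2) + η := by
      have : 0 ≤ 1 / (x + ε / 2) := by positivity
      rw [abs_le]; constructor <;> linarith
    have h2 : x * (1 / (x + ε / 2)) ≤ 1 := by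
      rw [mul_one_div, div_le_one (by positivity)]; linarith
    have h3 : x * η ≤ ε / 2 := by
      rw [← hCη]
      have : x ≤ C ^ 2 := by nlinarith
      gcongr
    have h4 := mul_le_mul_of_nonneg_left h1 hx0
    linarith
  · have e : (dd lam J * fun s => ((p.eval (‖dd lam J s‖ ^ 2) : ℝ) : ℂ)) s * dd lam J (-s) =
        ((‖dd lam J s‖ ^ 2 * p.eval (‖dd lam J s‖ ^ 2) : ℝ) : ℂ) := by
      rw [Pi.mul_apply, mul_right_comm, dd_mul_neg]; push_cast; ring
    rw [e, ← Complex.ofReal_sub, Complex.norm_real, Real.norm_eq_abs]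
    generalize ‖dd lam J s‖ = x at *
    generalize Polynomial.eval (x ^ 2) p = y at *
    have h1 : x - x ^ 2 * (1 / (x + ε / 2)) = x * (ε / 2) / (x + ε / 2) := by
      field_simp; ring
    have h2 : x * (ε / 2) / (x + ε / 2) ≤ ε / 2 := by
      rw [div_le_iff₀ (by positivity)]; nlinarith
    have h2' : 0 ≤ x * (ε / 2) / (x + ε / 2) := by positivity
    have h3 : |x ^ 2 * (y - 1 / (x + ε / 2))| ≤ ε / 2 := by
      rw [abs_mul, abs_of_nonneg (by positivity : 0 ≤ x ^ 2)]
      have : |y - 1 / (x + ε / 2)| ≤ η := abs_le.2 ⟨hx.1.le, hx.2.le⟩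
      refine le_trans ?_ hCη.le
      gcongr
    rw [abs_le] at h3 ⊢
    constructor <;> nlinarith

/-! ### Existence of the mean of the modulus of the kernel -/

/-- The filter on averaging functionals generated by the tails of `itg T` as `T → ∞` and, for each
`t`, by the tails of the reflected and shifted grid averages. A limit along it is a common limit of
all these averages. -/
def avgFilter : Filter ((ℝ → ℂ) → ℂ) :=
  map itg atTop ⊔ ⨆ t : ℝ, map (fun (N : ℕ) (g : ℝ → ℂ) => grid N (fun s => g (t - s))) atTop

/-- An averaging functional that is homogeneous, bounded by the supremum of its argument, and additive
on continuous functions. -/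
structure Good (A : (ℝ → ℂ) → ℂ) : Prop where
  add : ∀ f g, Continuous f → Continuous g → A (f + g) = A f + A g
  smul : ∀ (c : ℂ) f, A (c • f) = c * A f
  bound : ∀ f C, (∀ s, ‖f s‖ ≤ C) → ‖A f‖ ≤ C

lemma eventually_good : ∀ᶠ A in avgFilter, Good A := by
  simp only [avgFilter, eventually_sup, eventually_iSup, eventually_map]
  refine ⟨?_, fun t => Eventually.of_forall fun N => ⟨fun f g _ _ => ?_, fun c f => ?_, ?_⟩⟩
  · filter_upwards [eventually_gt_atTop 0] with T hT
    refine ⟨fun f g hf hg => ?_, fun c f => ?_, fun f C H => ?_⟩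
    · simp only [itg, Pi.add_apply]
      rw [intervalIntegral.integral_add (hf.intervalIntegrable _ _) (hg.intervalIntegrable _ _),
        mul_add]
    · simp only [itg, Pi.smul_apply, smul_eq_mul, intervalIntegral.integral_const_mul]
      ring
    · rw [itg, norm_mul, Complex.norm_real, Real.norm_of_nonneg (by positivity)]
      have := intervalIntegral.norm_integral_le_of_norm_le_const (a := -T) (b := T) (f := f)
        (C := C) fun s _ => H s
      rw [sub_neg_eq_add, abs_of_pos (by positivity)] at this
      calc 1 / (2 * T) * ‖∫ t in (-T)..T, f t‖ ≤ 1 / (2 * T) * (C * (T + T)) := by gcongr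
        _ = C := by field_simp; ring
  · exact grid_add N _ _
  · exact grid_smul N c _
  · exact fun f C H => grid_bound N _ C fun s => H _

lemma Good.sub {A : (ℝ → ℂ) → ℂ} (hA : Good A) (f g : ℝ → ℂ) (hf : Continuous f)
    (hg : Continuous g) (C : ℝ) (H : ∀ s, ‖f s - g s‖ ≤ C) : ‖A f - A g‖ ≤ C := by
  have := hA.add g (f - g) hg (hf.sub hg)
  rw [add_sub_cancel] at this
  rw [this, add_sub_cancel_left]
  exact hA.bound _ _ H

instance : avgFilter.NeBot := by
  unfold avgFilter; infer_instance

lemma trigPoly_mean {f : ℝ → ℂ} (hf : f ∈ trigPoly) :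
    Continuous f ∧ ∃ m, Tendsto (fun A : (ℝ → ℂ) → ℂ => A f) avgFilter (𝓝 m) := by
  induction hf using Submodule.span_induction with
  | mem f hf =>
    obtain ⟨μ, rfl⟩ := hf
    refine ⟨continuous_ee μ, ?_⟩
    rcases eq_or_ne μ 0 with rfl | hμ
    · refine ⟨1, ?_⟩
      have h1 : ee 0 = fun _ => 1 := funext ee_zero
      rw [h1]
      refine tendsto_const_nhds.congr' ?_
      simp only [avgFilter, EventuallyEq, eventually_sup, eventually_iSup, eventually_map,
        grid_const, eventually_true, implies_true, and_true]
      filter_upwards [eventually_gt_atTop 0] with T hT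
      have hT' : (T : ℂ) ≠ 0 := by exact_mod_cast hT.ne'
      simp only [itg, intervalIntegral.integral_const, Complex.real_smul]
      push_cast
      field_simp
      ring
    · refine ⟨0, ?_⟩
      simp only [avgFilter, tendsto_sup, tendsto_iSup, tendsto_map'_iff]
      refine ⟨tendsto_itg_ee μ hμ, fun t => ?_⟩
      have := (tendsto_grid_ee (-μ) (neg_ne_zero.2 hμ)).const_mul (ee μ t)
      rw [mul_zero] at this
      refine this.congr fun N => ?_
      simp only [Function.comp]
      rw [← grid_smul]
      congr 1
      ext s
      simp [sub_eq_add_neg, ee_add, ee_neg]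
  | zero =>
    refine ⟨continuous_zero, 0, ?_⟩
    refine tendsto_const_nhds.congr' ?_
    filter_upwards [eventually_good] with A hA
    simpa using (hA.smul 0 0).symm
  | add f g _ _ hf hg =>
    obtain ⟨cf, m, hm⟩ := hf
    obtain ⟨cg, n, hn⟩ := hg
    refine ⟨cf.add cg, m + n, (hm.add hn).congr' ?_⟩
    filter_upwards [eventually_good] with A hA
    exact (hA.add f g cf cg).symm
  | smul c f _ hf =>
    obtain ⟨cf, m, hm⟩ := hf
    refine ⟨cf.const_smul c, c * m, (hm.const_mul c).congr' ?_⟩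
    filter_upwards [eventually_good] with A hA
    exact (hA.smul c f).symm

/-- The modulus of the kernel is a uniform limit of trigonometric polynomials, so its averages form
a Cauchy filter. -/
lemma exists_mean :
    ∃ c, Tendsto (fun A : (ℝ → ℂ) → ℂ => A (fun s => ((‖dd lam J s‖ : ℝ) : ℂ)))
      avgFilter (𝓝 c) := by
  rw [← cauchy_map_iff_exists_tendsto, Metric.cauchy_iff]
  refine ⟨inferInstance, fun ε hε => ?_⟩
  obtain ⟨R, hR, -, hRD⟩ := exists_approx lam J (ε / 4) (by positivity)
  obtain ⟨hc, m, hm⟩ := trigPoly_mean (trigPoly_mul hR (dd_neg_mem lam J))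
  refine ⟨Metric.ball m (ε / 2), ?_, fun x hx y hy => ?_⟩
  · rw [mem_map]
    filter_upwards [eventually_good, Metric.tendsto_nhds.1 hm (ε / 4) (by positivity)]
      with A hA hAm
    have hcD : Continuous fun s => ((‖dd lam J s‖ : ℝ) : ℂ) :=
      Complex.continuous_ofReal.comp (continuous_dd lam J).norm
    have h2 := hA.sub _ _ hcD hc (ε / 4) hRD
    rw [← dist_eq_norm] at h2
    rw [Set.mem_preimage, Metric.mem_ball]
    refine (dist_triangle _ (A (R * fun s => dd lam J (-s))) _).trans_lt (by linarith)
  · have := dist_triangle_right x y m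
    rw [Metric.mem_ball] at hx hy
    linarith

lemma exists_real_mean : ∃ M : ℝ,
    Tendsto (fun T : ℝ => (1 / (2 * T)) * ∫ t in (-T)..T, ‖dd lam J t‖) atTop (𝓝 M) ∧
    ∀ t, Tendsto (fun N : ℕ => (grid N (fun s => ((‖dd lam J (t - s)‖ : ℝ) : ℂ))).re)
      atTop (𝓝 M) := by
  obtain ⟨c, hc⟩ := exists_mean lam J
  simp only [avgFilter, tendsto_sup, tendsto_iSup, tendsto_map'_iff] at hc
  refine ⟨c.re, ?_, fun t => (Complex.continuous_re.tendsto _).comp (hc.2 t)⟩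
  refine ((Complex.continuous_re.tendsto _).comp hc.1).congr fun T => ?_
  simp only [Function.comp, itg]
  rw [intervalIntegral.integral_ofReal, ← Complex.ofReal_mul, Complex.ofReal_re]

/-! ### Lower bound for the norm of a projection -/

/-- The character `ee μ` as an element of `ℓ∞(ℝ)`. -/
def chr (μ : ℝ) : lp (fun _ : ℝ => ℂ) ∞ :=
  ⟨ee μ, memℓp_infty ⟨1, by rintro _ ⟨s, rfl⟩; exact (norm_ee μ s).le⟩⟩

@[simp] lemma chr_apply (μ s : ℝ) : (chr μ : ℝ → ℂ) s = ee μ s := rfl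

variable {lam J}

lemma mem_freqSpan {f : lp (fun _ : ℝ => ℂ) ∞} :
    f ∈ freqSpan lam J ↔ ∃ a : ℕ → ℂ, ∀ t : ℝ, f t = ∑ k ∈ J, a k * ee (lam k) t := Iff.rfl

lemma exists_coeff (hmono : StrictMono lam)
    (Q : lp (fun _ : ℝ => ℂ) ∞ →L[ℂ] lp (fun _ : ℝ => ℂ) ∞)
    (h1 : ∀ f, Q f ∈ freqSpan lam J) (h2 : ∀ f ∈ freqSpan lam J, Q f = f) (μ : ℝ) :
    ∃ a : ℕ → ℂ, (∀ t, Q (chr μ) t = ∑ k ∈ J, a k * ee (lam k) t) ∧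
      ∀ k ∈ J, lam k = μ → a k = 1 := by
  by_cases h : ∃ j ∈ J, lam j = μ
  · obtain ⟨j, hj, rfl⟩ := h
    have e : ∀ t, chr (lam j) t = ∑ k ∈ J, (if k = j then (1 : ℂ) else 0) * ee (lam k) t := by
      intro t; simp [hj]
    refine ⟨fun k => if k = j then 1 else 0, fun t => ?_, fun k _ hkj => ?_⟩
    · rw [h2 _ (mem_freqSpan.2 ⟨_, e⟩), e]
    · simp [hmono.injective hkj]
  · obtain ⟨a, ha⟩ := mem_freqSpan.1 (h1 (chr μ))
    exact ⟨a, ha, fun k hk hkμ => (h ⟨k, hk, hkμ⟩).elim⟩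

/-- Averaging a projection `Q` over translations: for a trigonometric polynomial `f` with translates
`F s = f(· + s)`, the functions `s ↦ (Q (F s))(-s)` and `s ↦ f(s) D(-s)` have the same mean. On a
character `ee μ`, both are combinations of the `ee (μ - λ_k)`, with equal constant terms. -/
lemma translation_average (hmono : StrictMono lam)
    (Q : lp (fun _ : ℝ => ℂ) ∞ →L[ℂ] lp (fun _ : ℝ => ℂ) ∞)
    (h1 : ∀ f, Q f ∈ freqSpan lam J) (h2 : ∀ f ∈ freqSpan lam J, Q f = f)
    {f : ℝ → ℂ} (hf : f ∈ trigPoly) :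
    ∃ F : ℝ → lp (fun _ : ℝ => ℂ) ∞, (∀ s t, F s t = f (t + s)) ∧
      Tendsto (fun N : ℕ => grid N (fun s => Q (F s) (-s) - f s * dd lam J (-s)))
        atTop (𝓝 0) := by
  induction hf using Submodule.span_induction with
  | mem f hf =>
    obtain ⟨μ, rfl⟩ := hf
    obtain ⟨a, ha, ha1⟩ := exists_coeff hmono Q h1 h2 μ
    refine ⟨fun s => ee μ s • chr μ, fun s t => ?_, ?_⟩
    · simp [ee_add, mul_comm]
    have e : (fun s => Q (ee μ s • chr μ) (-s) - ee μ s * dd lam J (-s)) =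
        ∑ k ∈ J, (a k - 1) • ee (μ - lam k) := by
      ext s
      rw [map_smul, lp.coeFn_smul, Pi.smul_apply, ha, smul_eq_mul, ← mul_sub, dd,
        ← Finset.sum_sub_distrib, Finset.mul_sum, Finset.sum_apply]
      refine Finset.sum_congr rfl fun k _ => ?_
      rw [Pi.smul_apply, sub_eq_add_neg μ, ← ee_mul, ee_neg, smul_eq_mul]
      ring
    simp only [e, grid_sum, grid_smul]
    rw [show (0 : ℂ) = ∑ k ∈ J, (0 : ℂ) by simp]
    refine tendsto_finsetSum _ fun k hk => ?_
    by_cases hkμ : lam k = μ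
    · simp [ha1 k hk hkμ]
    · simpa using (tendsto_grid_ee (μ - lam k)
        (sub_ne_zero.2 (Ne.symm hkμ))).const_mul (a k - 1)
  | zero =>
    refine ⟨fun _ => 0, fun s t => by simp, ?_⟩
    simp [grid_const]
  | add f g _ _ hf hg =>
    obtain ⟨F, hF, hF0⟩ := hf
    obtain ⟨G, hG, hG0⟩ := hg
    refine ⟨fun s => F s + G s, fun s t => by simp [hF, hG], ?_⟩
    have := hF0.add hG0
    rw [add_zero] at this
    refine this.congr fun N => ?_
    rw [← grid_add]
    congr 1
    ext s
    simp; ring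
  | smul c f _ hf =>
    obtain ⟨F, hF, hF0⟩ := hf
    refine ⟨fun s => c • F s, fun s t => by simp [hF], ?_⟩
    have := hF0.const_mul c
    rw [mul_zero] at this
    refine this.congr fun N => ?_
    rw [← grid_smul]
    congr 1
    ext s
    simp; ring

lemma mean_le_norm (hmono : StrictMono lam)
    (Q : lp (fun _ : ℝ => ℂ) ∞ →L[ℂ] lp (fun _ : ℝ => ℂ) ∞)
    (h1 : ∀ f, Q f ∈ freqSpan lam J) (h2 : ∀ f ∈ freqSpan lam J, Q f = f) (M : ℝ)
    (hM : Tendsto (fun N : ℕ => (grid N (fun s => ((‖dd lam J s‖ : ℝ) : ℂ))).re)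
      atTop (𝓝 M)) : M ≤ ‖Q‖ := by
  have key : ∀ ε : ℝ, 0 < ε → M ≤ ε + ‖Q‖ * (1 + ε) := by
    intro ε hε
    obtain ⟨R, hR, hR1, hRD⟩ := exists_approx lam J ε hε
    obtain ⟨F, hF, hF0⟩ := translation_average hmono Q h1 h2 hR
    have hlim := (hF0.norm).const_add (ε + ‖Q‖ * (1 + ε))
    rw [norm_zero, add_zero] at hlim
    refine le_of_tendsto_of_tendsto' hM hlim fun N => ?_
    have hF1 : ∀ s, ‖Q (F s) (-s)‖ ≤ ‖Q‖ * (1 + ε) := fun s =>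
      (lp.norm_apply_le_norm (by simp) _ _).trans <| (Q.le_opNorm _).trans <| by
        gcongr
        exact lp.norm_le_of_forall_le (by positivity) fun t => by rw [hF]; exact hR1 _
    have e : (fun s => ((‖dd lam J s‖ : ℝ) : ℂ)) =
        (fun s => ((‖dd lam J s‖ : ℝ) : ℂ) - R s * dd lam J (-s)) + (fun s => Q (F s) (-s)) +
          (-1 : ℂ) • (fun s => Q (F s) (-s) - R s * dd lam J (-s)) := by
      ext s; simp
    rw [e, grid_add, grid_add, grid_smul]
    refine (Complex.re_le_norm _).trans <| (norm_add_le _ _).trans ?_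
    rw [norm_mul, norm_neg, norm_one, one_mul]
    gcongr
    exact (norm_add_le _ _).trans <| add_le_add (grid_bound _ _ _ hRD) (grid_bound _ _ _ hF1)
  refine ge_of_tendsto (f := fun ε : ℝ => ε + ‖Q‖ * (1 + ε)) (x := 𝓝[>] 0) ?_ ?_
  · have : Continuous fun ε : ℝ => ε + ‖Q‖ * (1 + ε) := by fun_prop
    simpa using (this.tendsto 0).mono_left nhdsWithin_le_nhds
  · filter_upwards [self_mem_nhdsWithin] with ε hε using key ε hε

/-! ### A projection of minimal norm -/

/-- The limit of the grid averages of `g` along a fixed nonprincipal ultrafilter (a junk value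
unless it exists, as it does for bounded `g`). -/
def ulim (g : ℝ → ℂ) : ℂ := limUnder (hyperfilter ℕ : Filter ℕ) fun N => grid N g

lemma tendsto_ulim {g : ℝ → ℂ} (C : ℝ) (hg : ∀ s, ‖g s‖ ≤ C) :
    Tendsto (fun N => grid N g) (hyperfilter ℕ : Filter ℕ) (𝓝 (ulim g)) := by
  refine tendsto_nhds_limUnder ?_
  obtain ⟨x, -, hx⟩ := (isCompact_closedBall (0 : ℂ) C).ultrafilter_le_nhds
    ((hyperfilter ℕ).map fun N => grid N g) (by
      rw [le_principal_iff]
      refine mem_map.2 (univ_mem' fun N => ?_)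
      simpa using grid_bound N g C hg)
  exact ⟨x, hx⟩

lemma norm_mul_dd_le (f : lp (fun _ : ℝ => ℂ) ∞) (t s : ℝ) :
    ‖f s * dd lam J (t - s)‖ ≤ ‖f‖ * ‖dd lam J (t - s)‖ := by
  rw [norm_mul]
  gcongr
  exact lp.norm_apply_le_norm (by simp) _ _

lemma tendsto_ulim_dd (f : lp (fun _ : ℝ => ℂ) ∞) (t : ℝ) :
    Tendsto (fun N => grid N fun s => f s * dd lam J (t - s)) (hyperfilter ℕ : Filter ℕ)
      (𝓝 (ulim fun s => f s * dd lam J (t - s))) :=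
  tendsto_ulim (‖f‖ * J.card) fun s => (norm_mul_dd_le f t s).trans (by
    gcongr; exact norm_dd_le _ _ _)

lemma grid_conv_eq (f : ℝ → ℂ) (t : ℝ) (N : ℕ) :
    grid N (fun s => f s * dd lam J (t - s)) =
      ∑ k ∈ J, grid N (fun s => f s * ee (-lam k) s) * ee (lam k) t := by
  have e : (fun s => f s * dd lam J (t - s)) =
      ∑ k ∈ J, ee (lam k) t • fun s => f s * ee (-lam k) s := by
    ext s
    simp only [dd, Finset.sum_apply, Pi.smul_apply, Finset.mul_sum, sub_eq_add_neg, ee_add, ee_neg,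
      smul_eq_mul]
    exact Finset.sum_congr rfl fun k _ => by ring
  rw [e, grid_sum]
  exact Finset.sum_congr rfl fun k _ => by rw [grid_smul, mul_comm]

/-- Convolution with the kernel `D`, with respect to the generalized mean `ulim`, is a projection
whose norm is at most the mean of `|D|`. -/
lemma exists_projection (hmono : StrictMono lam) (M : ℝ)
    (hM : ∀ t, Tendsto (fun N : ℕ => (grid N (fun s => ((‖dd lam J (t - s)‖ : ℝ) : ℂ))).re)
      atTop (𝓝 M)) :
    ∃ Q : lp (fun _ : ℝ => ℂ) ∞ →L[ℂ] lp (fun _ : ℝ => ℂ) ∞,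
      (∀ f, Q f ∈ freqSpan lam J) ∧ (∀ f ∈ freqSpan lam J, Q f = f) ∧ ‖Q‖ ≤ M := by
  have hU : (hyperfilter ℕ : Filter ℕ) ≤ atTop := Nat.hyperfilter_le_atTop
  have hM0 : 0 ≤ M := ge_of_tendsto' (hM 0) fun N =>
    (norm_nonneg _).trans (grid_le N (fun s => dd lam J (0 - s)) _ fun s => le_rfl)
  have hb : ∀ (f : lp (fun _ : ℝ => ℂ) ∞) (t : ℝ),
      ‖ulim fun s => f s * dd lam J (t - s)‖ ≤ M * ‖f‖ := by
    intro f t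
    rw [mul_comm]
    refine le_of_tendsto_of_tendsto' (tendsto_ulim_dd f t).norm
      (((hM t).mono_left hU).const_mul ‖f‖) fun N => ?_
    refine (grid_le N _ _ (norm_mul_dd_le f t)).trans ?_
    have : (fun s => ((‖f‖ * ‖dd lam J (t - s)‖ : ℝ) : ℂ)) =
        (‖f‖ : ℂ) • fun s => ((‖dd lam J (t - s)‖ : ℝ) : ℂ) := by
      ext s; simp
    rw [this, grid_smul, Complex.re_ofReal_mul]
  let Q₀ : lp (fun _ : ℝ => ℂ) ∞ →ₗ[ℂ] lp (fun _ : ℝ => ℂ) ∞ :=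
    { toFun := fun f => ⟨fun t => ulim fun s => f s * dd lam J (t - s),
        memℓp_infty ⟨M * ‖f‖, by rintro _ ⟨t, rfl⟩; exact hb f t⟩⟩
      map_add' := fun f g => by
        ext t
        refine tendsto_nhds_unique (tendsto_ulim_dd (f + g) t)
          (((tendsto_ulim_dd f t).add (tendsto_ulim_dd g t)).congr fun N => ?_)
        rw [← grid_add]
        congr 1
        ext s
        simp [add_mul]
      map_smul' := fun c f => by
        ext t
        refine tendsto_nhds_unique (tendsto_ulim_dd (c • f) t)
          (((tendsto_ulim_dd f t).const_mul c).congr fun N => ?_)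
        rw [← grid_smul]
        congr 1
        ext s
        simp [mul_assoc] }
  have hQ₀ : ∀ f t, Q₀ f t = ulim fun s => f s * dd lam J (t - s) := fun _ _ => rfl
  refine ⟨Q₀.mkContinuous M fun f => ?_, fun f => ?_, fun f hf => ?_,
    LinearMap.mkContinuous_norm_le _ hM0 _⟩
  · exact lp.norm_le_of_forall_le (by positivity) fun t => hb f t
  · refine mem_freqSpan.2 ⟨fun k => ulim fun s => f s * ee (-lam k) s, fun t => ?_⟩
    rw [LinearMap.mkContinuous_apply, hQ₀]
    refine tendsto_nhds_unique (tendsto_ulim_dd f t) ?_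
    simp only [grid_conv_eq]
    refine tendsto_finsetSum _ fun k _ => Tendsto.mul_const _ (tendsto_ulim ‖f‖ fun s => ?_)
    rw [norm_mul, norm_ee, mul_one]
    exact lp.norm_apply_le_norm (by simp) _ _
  · obtain ⟨a, ha⟩ := mem_freqSpan.1 hf
    ext t
    rw [LinearMap.mkContinuous_apply, hQ₀, ha t]
    refine tendsto_nhds_unique (tendsto_ulim_dd f t) (Tendsto.mono_left ?_ hU)
    simp only [grid_conv_eq]
    refine tendsto_finsetSum _ fun k hk => Tendsto.mul_const _ ?_
    -- the orthogonality relations pick out the coefficient `a k`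
    have e : (fun s => f s * ee (-lam k) s) = ∑ j ∈ J, a j • ee (lam j - lam k) := by
      ext s
      rw [ha, Finset.sum_mul, Finset.sum_apply]
      refine Finset.sum_congr rfl fun j _ => ?_
      rw [Pi.smul_apply, sub_eq_add_neg, ← ee_mul, smul_eq_mul, mul_assoc]
    simp only [e, grid_sum, grid_smul]
    have : a k = ∑ j ∈ J, if j = k then a j else 0 := by simp [hk]
    rw [this]
    refine tendsto_finsetSum _ fun j _ => ?_
    split_ifs with hjk
    · subst hjk
      have h1 : ee 0 = fun _ => 1 := funext ee_zero
      simp [h1, grid_const]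
    · simpa using (tendsto_grid_ee (lam j - lam k)
        (sub_ne_zero.2 fun h => hjk (hmono.injective h))).const_mul (a j)

end DirichletProj

end

/-- **Integral formula for the projection constant of a space of `λ`-Dirichlet
polynomials.** -/
theorem stmt_18 (lam : ℕ → ℝ) (hmono : StrictMono lam) (hpos : ∀ k, 0 ≤ lam k)
    (J : Finset ℕ) (hJ : J.Nonempty) :
    Tendsto (fun T : ℝ => (1 / (2 * T)) *
        ∫ t in (-T)..T, ‖∑ k ∈ J, Complex.exp (-(Complex.I * (lam k : ℂ) * (t : ℂ)))‖)
      atTop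
      (𝓝 (sInf {r : ℝ | ∃ Q : lp (fun _ : ℝ => ℂ) ∞ →L[ℂ] lp (fun _ : ℝ => ℂ) ∞,
        (∀ f, Q f ∈ freqSpan lam J) ∧ (∀ f ∈ freqSpan lam J, Q f = f) ∧ ‖Q‖ = r})) := by
  obtain ⟨M, hint, hgrid⟩ := DirichletProj.exists_real_mean lam J
  have hgrid0 : Tendsto (fun N : ℕ => (DirichletProj.grid N
      (fun s => ((‖DirichletProj.dd lam J s‖ : ℝ) : ℂ))).re) atTop (𝓝 M) := by
    simpa only [zero_sub, DirichletProj.norm_dd_neg] using hgrid 0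
  have hleast : IsLeast {r : ℝ | ∃ Q : lp (fun _ : ℝ => ℂ) ∞ →L[ℂ] lp (fun _ : ℝ => ℂ) ∞,
      (∀ f, Q f ∈ freqSpan lam J) ∧ (∀ f ∈ freqSpan lam J, Q f = f) ∧ ‖Q‖ = r} M := by
    constructor
    · obtain ⟨Q, h1, h2, h3⟩ := DirichletProj.exists_projection hmono M hgrid
      exact ⟨Q, h1, h2, le_antisymm h3 (DirichletProj.mean_le_norm hmono Q h1 h2 M hgrid0)⟩
    · rintro r ⟨Q, h1, h2, rfl⟩
      exact DirichletProj.mean_le_norm hmono Q h1 h2 M hgrid0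
  rw [hleast.csInf_eq]
  exact hint
end
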